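/- arXiv:2208.09445 — 7 statements merged into one kernel-verified Lean document; each statement's English description precedes it below -/
import Mathlib

section
/- Let γ > 1 and let r satisfy 1 < r < r*(γ) and 3 < k(r) < 4. Then P^fl(t) > 0 for every t ∈ (0, 1); moreover D_W(b^fl(t)) > 0 and D_Z(b^fl(t)) > 0 for every t ∈ (0, 1]. -/
/-!
Put `v = 2 w / (γ - 1)` and choose `v, w > 0` with `r - 1 = 2 w / ((1 + v) (1 + w))`; this
parametrises the sonic point rationally and makes `ℛ₁` rational (`exists_vw`). In the coordinates
`W = -v ξ + (v / w) η`, `Z = -v ξ - (v / w) η` and with `x = 1 - v ξ`, one has `D_W = x + η`,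
`D_Z = x - η`, and up to a positive factor `P^fl` is `-(ξ' η F + η' G)` for a quadratic `F` and a
cubic `G` in `(ξ, η)` (`field_eq`). The remaining square root `ℛ₂` becomes rational after adjoining
the smaller root `ℓ` of `ℓ² - T ℓ + K = 0`, `T = 2 + v + w + 2 v w`, `K = (1 - 3 w²) (1 - v w)`;
the hypothesis `3 < k(r) < 4` says exactly that `4 ℓ < T < 5 ℓ` (`exists_l`). The square root in
`Θ` is rationalised by the slope parameter `q` at `P_⦿` (`direction_eq`).

The barrier is a quadratic Bézier curve that leaves `P_s` and reaches `P_⦿` along invariant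
directions of the vector field, so that, with `u = 1 - t`, `F` and `G` both carry a factor `u t`
and the extreme coefficients of the quotient cancel: `-(ξ' η F + η' G)` equals `2 u² t²` times a
cubic in Bernstein form (`Conf.Valid.bernstein`). Its four coefficients are products of positive
numbers with `c1`, `c2`, `c3`, `c4`, and these are positive. `D_W` and `D_Z` are handled by the
Bernstein coefficients of `x ± η` in the same way.

The relation `ℓ² - T ℓ + K = 0` is linear in `v`, so everything is a function of `(w, ℓ, q)` with
`0 < w < 51/200`, `2/5 < ℓ < 29/50`, `31/50 ≤ q ≤ 7/10`. The positivity of all the quantities on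
this box (wherever `v > 0` and `3 ℓ² < K < 4 ℓ²`) is established by branch and bound with affine
arithmetic in fixed-point integers. The evaluation is proved sound once (`Aff.leaf_sound`,
`Aff.bb_sound`) and its outcome is computed by the kernel (`Aff.bb_true`). The range of `q` is
itself one of the outputs: the quadratic equation for `q` changes sign between `31/50` and `7/10`
(`Region.exists_q`).
-/

noncomputable section

open Real Filter Set Topology

namespace SelfSimilarImplosion

/-- `α = (γ−1)/2`. -/
def alphaF (γ : ℝ) : ℝ := (γ - 1) / 2

/-- `D_W(W,Z) = 1 + (1/2)(W + Z + α(W − Z))`. -/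
def DW (γ W Z : ℝ) : ℝ := 1 + (1 / 2) * (W + Z + alphaF γ * (W - Z))

/-- `D_Z(W,Z) = 1 + (1/2)(W + Z − α(W − Z))`. -/
def DZ (γ W Z : ℝ) : ℝ := 1 + (1 / 2) * (W + Z - alphaF γ * (W - Z))

/-- `N_W(W,Z) = −(r + (1/2)((1+2α)W + (1−α)Z))·W + (α/2)Z²`. -/
def NW (γ r W Z : ℝ) : ℝ :=
  -(r + (1 / 2) * ((1 + 2 * alphaF γ) * W + (1 - alphaF γ) * Z)) * W + (alphaF γ / 2) * Z ^ 2

/-- `N_Z(W,Z) = −(r + (1/2)((1−α)W + (1+2α)Z))·Z + (α/2)W²`. -/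
def NZ (γ r W Z : ℝ) : ℝ :=
  -(r + (1 / 2) * ((1 - alphaF γ) * W + (1 + 2 * alphaF γ) * Z)) * Z + (alphaF γ / 2) * W ^ 2

/-- The critical self-similar exponent `r*(γ)`. -/
def rStar (γ : ℝ) : ℝ :=
  if γ < 5 / 3 then 1 + 2 / (Real.sqrt (2 / (γ - 1)) + 1) ^ 2
  else (3 * γ - 1) / (2 + Real.sqrt 3 * (γ - 1))

/-- `ℛ₁`. -/
def R1 (γ r : ℝ) : ℝ :=
  Real.sqrt (γ ^ 2 * (r - 3) ^ 2 - 2 * γ * (3 * r ^ 2 - 6 * r + 7) + 9 * r ^ 2 - 14 * r + 9)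

/-- First coordinate `W₀` of the sonic point `P_s`. -/
def W₀ (γ r : ℝ) : ℝ :=
  (γ ^ 2 * r + (γ + 1) * R1 γ r - 3 * γ ^ 2 - 2 * γ * r + 10 * γ - 3 * r - 3) / (4 * (γ - 1) ^ 2)

/-- Second coordinate `Z₀` of the sonic point `P_s`. -/
def Z₀ (γ r : ℝ) : ℝ :=
  (γ ^ 2 * r + (γ - 3) * R1 γ r - 3 * γ ^ 2 - 6 * γ * r + 6 * γ + 9 * r - 7) / (4 * (γ - 1) ^ 2)

/-- `ℛ₂`. -/
def R2 (γ r : ℝ) : ℝ :=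
  (1 / (γ - 1)) *
    Real.sqrt (γ * ((76 - 27 * γ) * γ - 71) - (3 * γ - 5) * ((γ - 5) * γ + 2) * r ^ 2
      + (γ * (γ * (18 * γ - 52) + 50) - 8) * r
      + R1 γ r * (9 * (γ - 2) * γ + ((2 - 3 * γ) * γ + 5) * r + 5) + 18)

/-- The first Taylor coefficient `W₁`. -/
def W₁ (γ r : ℝ) : ℝ :=
  (γ * (-3 * (R1 γ r + 6) - 3 * γ * (r - 3) + 2 * r) + R1 γ r + 5 * r + 5) / (4 * (γ - 1) ^ 2)

/-- The first Taylor coefficient `Z₁`. -/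
def Z₁ (γ r : ℝ) : ℝ :=
  (-(3 * γ ^ 3 - 7 * γ ^ 2 + γ + 11) * r
      + γ * (γ * (9 * γ - 3 * R1 γ r - 25) + 10 * R1 γ r - 4 * (γ - 1) * R2 γ r + 27)
      - 3 * R1 γ r + 4 * (γ - 1) * R2 γ r - 3)
    / (4 * (γ - 1) ^ 2 * (γ + 1))

/-- The eigenvalue-ratio function `k(r)`. -/
def kFun (γ r : ℝ) : ℝ :=
  (-4 + (1 + γ) * (r - 1) / (γ - 1) - R2 γ r) / (-4 + (1 + γ) * (r - 1) / (γ - 1) + R2 γ r)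


/-- First coordinate `X₀` of the point `P_⦿`. -/
def X₀ (γ r : ℝ) : ℝ := 2 * (Real.sqrt 3 - 1) * r / (3 * γ - 1)

/-- Second coordinate `Y₀` of the point `P_⦿`. -/
def Y₀ (γ r : ℝ) : ℝ := -(2 * (1 + Real.sqrt 3) * r) / (3 * γ - 1)

/-- The quantity `Θ`. -/
def Theta (γ r : ℝ) : ℝ :=
  -Real.sqrt (2 * (53 - 3 * γ * (45 * γ ^ 3 - 110 * γ + 88)) * r + (27 * γ ^ 2 - 30 * γ + 7) ^ 2
        + (3 * γ * (γ * (3 * γ * (γ + 20) - 94) + 28) + 25) * r ^ 2)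
    + 3 * Real.sqrt 3 * γ ^ 2 * (r - 5) + 2 * Real.sqrt 3 * γ * (r + 7) - Real.sqrt 3 * (r + 3)

/-- The quantity `X₁`. -/
def X₁ (γ r : ℝ) : ℝ :=
  -2 * (3 * γ + 4 * Real.sqrt 3 - 9)
    * (3 * γ ^ 2 * (r ^ 2 - 3) - 6 * γ * (r - 2) * r + 6 * γ - r * (r + 4) - 1)

/-- The quantity `Y₁`. -/
def Y₁ (γ r : ℝ) : ℝ :=
  Theta γ r *
    (3 * (Real.sqrt 3 - 1) * γ * r - (Real.sqrt 3 - 3) * (3 * γ - 1) - (3 + Real.sqrt 3) * r)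

/-- The coefficient `B₁` of the far-left barrier. -/
def B1 (γ r : ℝ) : ℝ :=
  2 * ((Y₀ γ r - Z₀ γ r) * X₁ γ r - (X₀ γ r - W₀ γ r) * Y₁ γ r)
    / (X₁ γ r * Z₁ γ r - W₁ γ r * Y₁ γ r)

/-- The coefficient `B₂` of the far-left barrier. -/
def B2 (γ r : ℝ) : ℝ := 2 * (X₀ γ r - W₀ γ r - B1 γ r * W₁ γ r)

/-- The coefficient `B₃` of the far-left barrier. -/
def B3 (γ r : ℝ) : ℝ := 2 * (Y₀ γ r - Z₀ γ r - B1 γ r * Z₁ γ r)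

/-- `W`-component of the far-left barrier `b^fl(t)`. -/
def bflW (γ r t : ℝ) : ℝ := W₀ γ r + B1 γ r * W₁ γ r * t + (1 / 2) * B2 γ r * t ^ 2

/-- `Z`-component of the far-left barrier `b^fl(t)`. -/
def bflZ (γ r t : ℝ) : ℝ := Z₀ γ r + B1 γ r * Z₁ γ r * t + (1 / 2) * B3 γ r * t ^ 2

/-- The barrier polynomial `P^fl(t)`. -/
def Pfl (γ r t : ℝ) : ℝ :=
  deriv (bflZ γ r) t * NW γ r (bflW γ r t) (bflZ γ r t) * DZ γ (bflW γ r t) (bflZ γ r t)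
    - deriv (bflW γ r) t * NZ γ r (bflW γ r t) (bflZ γ r t) * DW γ (bflW γ r t) (bflZ γ r t)

/-! ### The barrier in rational coordinates -/

/-- The independent quantities describing the barrier in the coordinates `(ξ, η)` with
`W = -v ξ + (v / w) η` and `Z = -v ξ - (v / w) η`. The barrier is the quadratic Bézier curve with
control points `(h, h)`, `(X1, y1)`, `(X2, y2)`; the names `x1`, `x2` stand for `1 - v X1` and
`1 - v X2`, while `1 - v h = h`. The relations between the fields are those of `Conf.Valid`. -/
structure Conf where
  /-- `w = v (γ - 1) / 2`. -/
  w : ℝ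
  /-- The smaller eigenvalue at the sonic point, suitably normalised. -/
  l : ℝ
  /-- The slope `dη/dξ` at `P_⦿` is `w √3 q`. -/
  q : ℝ
  /-- The parameter `v` of the sonic point. -/
  v : ℝ
  /-- Both coordinates `ξ = η` of the sonic point. -/
  h : ℝ
  /-- `(r - 1) / w`. -/
  sg : ℝ
  /-- The slope `dη/dξ` at the sonic point is `-vm`. -/
  vm : ℝ
  /-- The ratio `(1 - v ξ) / (w ξ)` at `P_⦿`. -/
  g : ℝ
  /-- The coordinate `ξ` of the middle control point. -/
  X1 : ℝ
  /-- The coordinate `ξ` of `P_⦿`. -/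
  X2 : ℝ

/-- `r - 1`. -/
def Conf.s (C : Conf) : ℝ := C.w * C.sg

/-- `√3 q`. -/
def Conf.sq (C : Conf) : ℝ := √3 * C.q

/-- The slope `dη/dξ` at `P_⦿`. -/
def Conf.wsq (C : Conf) : ℝ := C.w * C.sq

/-- First increment of `ξ` along the control polygon. -/
def Conf.d0 (C : Conf) : ℝ := C.X1 - C.h

/-- Second increment of `ξ` along the control polygon. -/
def Conf.d1 (C : Conf) : ℝ := C.X2 - C.X1

/-- `y2 / w`. -/
def Conf.z2 (C : Conf) : ℝ := √3 * C.X2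

/-- The coordinate `η` of `P_⦿`. -/
def Conf.y2 (C : Conf) : ℝ := C.w * C.z2

/-- `y1 / w`. -/
def Conf.z1 (C : Conf) : ℝ := C.z2 - C.sq * C.d1

/-- The coordinate `η` of the middle control point. -/
def Conf.y1 (C : Conf) : ℝ := C.w * C.z1

/-- `1 - v ξ` at the middle control point. -/
def Conf.x1 (C : Conf) : ℝ := 1 - C.v * C.X1

/-- `w g`. -/
def Conf.wg (C : Conf) : ℝ := C.w * C.g

/-- `1 - v ξ` at `P_⦿`, see `Conf.Valid.x2_eq`. -/
def Conf.x2 (C : Conf) : ℝ := C.wg * C.X2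

/-- The first coefficient of `G / (u t)` along the barrier is `-2 d0 lam`. -/
def Conf.lam (C : Conf) : ℝ := C.sg * C.h * C.l

/-- `lam vm`. -/
def Conf.lm (C : Conf) : ℝ := C.lam * C.vm

/-- `lam vm / h`. -/
def Conf.lv (C : Conf) : ℝ := C.lm * (1 + C.v)

/-- The factor `mu` in the last coefficient `2 w d1 X2² mu` of `G / (u t)` along the barrier. -/
def Conf.mu (C : Conf) : ℝ := C.v * C.g - 3 * C.wg + 3 * (C.v + 3 * C.w) + 6 * (C.wg * C.q)

/-- `X2 mu`. -/
def Conf.X2mu (C : Conf) : ℝ := C.X2 * C.mu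

/-- `w X2 mu d1`. -/
def Conf.wx (C : Conf) : ℝ := C.w * C.X2mu * C.d1

/-! The coefficients of the quadratic form `F` along the barrier, obtained by polarisation:
`Fuk` is the coefficient of `u ^ (2 - k) * t ^ k` in `F / (u t)`, and `Fij` is the polar form of
`F` at the control points `i` and `j`. Likewise `Guk` and `Gijk` for the cubic form `G`. -/

/-- First coefficient of `F / (u t)`. -/
def Conf.Fu0 (C : Conf) : ℝ := -(2 * (C.d0 * C.lv))

/-- Last coefficient of `F / (u t)`. -/
def Conf.Fu2 (C : Conf) : ℝ := -(2 * (C.wx * C.q))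

/-- Polar form of `F` at the first and last control points. -/
def Conf.F02 (C : Conf) : ℝ :=
  2 * (C.h * (C.y2 - C.x2)) - C.s * (C.h + C.x2) + 2 * (C.w * C.h * (C.x2 + C.X2))
    - C.s * C.w * (C.h + C.X2)

/-- `F` at the middle control point. -/
def Conf.F11 (C : Conf) : ℝ :=
  C.y1 * C.y1 - C.x1 * (C.x1 + C.s) + 2 * (C.w * C.X1 * C.x1) - C.s * C.w * C.X1

/-- Middle coefficient of `F / (u t)`. -/
def Conf.Fu1 (C : Conf) : ℝ := C.F02 + 4 * C.F11

/-- `h²`. -/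
def Conf.hh (C : Conf) : ℝ := C.h * C.h

/-- Polar form of `G` at control points `0, 0, 2`. -/
def Conf.G002 (C : Conf) : ℝ :=
  C.hh * (2 * C.x2 + C.s + C.sg - 2 * C.X2) + C.h * (C.s * (C.x2 + C.X2) + 2 * (C.sg * C.y2))
    - 6 * (C.hh * C.y2)

/-- Polar form of `G` at control points `0, 1, 1`. -/
def Conf.G011 (C : Conf) : ℝ :=
  C.h * (C.x1 * (C.x1 + 2 * C.X1)) + C.s * (C.X1 * C.x1 + C.h * (C.x1 + C.X1))
    + C.sg * (C.y1 * C.y1 + 2 * (C.h * C.y1)) - 3 * (C.h * (C.y1 * C.y1))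
    - 6 * (C.h * C.X1 * C.y1)

/-- Coefficient of `u³ t` in `G / (u t)`. -/
def Conf.Gu1 (C : Conf) : ℝ := C.G002 + 4 * C.G011

/-- `x1 x2`. -/
def Conf.xp (C : Conf) : ℝ := C.x1 * C.x2

/-- `y1 y2`. -/
def Conf.yp (C : Conf) : ℝ := C.y1 * C.y2

/-- `X1 x2 + X2 x1`. -/
def Conf.cr (C : Conf) : ℝ := C.X1 * C.x2 + C.X2 * C.x1

/-- Polar form of `G` at control points `0, 1, 2`. -/
def Conf.G012 (C : Conf) : ℝ :=
  2 * (C.h * (C.xp + C.cr)) + C.s * (C.cr + C.h * (C.x1 + C.X1 + C.x2 + C.X2))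
    + 2 * (C.sg * (C.yp + C.h * (C.y1 + C.y2)))
    - 6 * (C.h * C.yp + C.h * (C.X1 * C.y2 + C.X2 * C.y1))

/-- `G` at the middle control point. -/
def Conf.G111 (C : Conf) : ℝ := C.X1 * C.x1 * (C.x1 + C.s) + C.y1 * C.y1 * (C.sg - 3 * C.X1)

/-- Coefficient of `u² t²` in `G / (u t)`. -/
def Conf.Gu2 (C : Conf) : ℝ := 2 * C.G012 + 8 * C.G111

/-- Polar form of `G` at control points `0, 2, 2`. -/
def Conf.G022 (C : Conf) : ℝ :=
  C.h * (C.x2 * (C.x2 + 2 * C.X2)) + C.s * (C.X2 * C.x2 + C.h * (C.x2 + C.X2))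
    + C.sg * (C.y2 * C.y2 + 2 * (C.h * C.y2)) - 3 * (C.h * (C.y2 * C.y2))
    - 6 * (C.h * C.X2 * C.y2)

/-- Polar form of `G` at control points `1, 1, 2`. -/
def Conf.G112 (C : Conf) : ℝ :=
  C.x1 * (C.X2 * C.x1 + 2 * (C.X1 * C.x2)) + C.s * (C.X1 * C.x1 + C.cr)
    + C.sg * (C.y1 * C.y1 + 2 * C.yp) - 3 * (C.X2 * (C.y1 * C.y1) + 2 * (C.X1 * C.yp))

/-- Coefficient of `u t³` in `G / (u t)`. -/
def Conf.Gu3 (C : Conf) : ℝ := C.G022 + 4 * C.G112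

/-- The first Bernstein coefficient of the barrier polynomial is `d0 * c1`,
see `Conf.Valid.bernstein`. -/
def Conf.c1 (C : Conf) : ℝ :=
  C.vm * C.Gu1 - C.h * C.Fu1 + 4 * (C.y1 * C.d0 * C.lv) + 2 * (C.d1 * C.lm)
    + 2 * (C.wsq * C.d1 * C.lam)

/-- The second Bernstein coefficient of the barrier polynomial. -/
def Conf.c2 (C : Conf) : ℝ :=
  C.d0 * (C.vm * C.Gu2 - C.h * C.Fu2 - 2 * (C.y1 * C.Fu1) - C.y2 * C.Fu0)
    - C.d1 * (C.h * C.Fu1 + 2 * (C.y1 * C.Fu0) + C.wsq * C.Gu1)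

/-- The third Bernstein coefficient of the barrier polynomial. -/
def Conf.c3 (C : Conf) : ℝ :=
  C.d0 * (C.vm * C.Gu3 - 2 * (C.y1 * C.Fu2) - C.y2 * C.Fu1)
    - C.d1 * (C.h * C.Fu2 + 2 * (C.y1 * C.Fu1) + C.y2 * C.Fu0 + C.wsq * C.Gu2)

/-- The last Bernstein coefficient of the barrier polynomial is `w * d1 * c4`. -/
def Conf.c4 (C : Conf) : ℝ :=
  2 * (C.d0 * C.X2 * C.X2mu * (C.wsq + C.vm)) + 4 * (C.z1 * C.q * C.wx) - C.z2 * C.Fu1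
    - C.sq * C.Gu3

/-- Linear coefficient of the equation `6 wg q² + qb q = qc` for `q`. -/
def Conf.qb (C : Conf) : ℝ := C.v * C.g - 3 * C.wg + 3 * (C.v + C.w)

/-- Constant term of the equation `6 wg q² + qb q = qc` for `q`. -/
def Conf.qc (C : Conf) : ℝ := (C.v + 3 * C.w) * C.g + C.v - 3 * C.w

/-- Positive iff `6 wg q² + qb q < qc` at `q = 31/50`. -/
def Conf.qlo (C : Conf) : ℝ := 2500 * C.qc - 5766 * C.wg - 1550 * C.qb

/-- Positive iff `qc < 6 wg q² + qb q` at `q = 7/10`. -/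
def Conf.qhi (C : Conf) : ℝ := 294 * C.wg + 70 * C.qb - 100 * C.qc

/-- `D_Z` at the middle control point. -/
def Conf.e1 (C : Conf) : ℝ := C.x1 - C.y1

/-- The relations which determine all quantities from `w`, `l` and `q`, and the inequalities
for `w`, `v`, `l` coming from `3 < k(r) < 4`. -/
structure Conf.Valid (C : Conf) : Prop where
  w_pos : 0 < C.w
  v_pos : 0 < C.v
  l_pos : 0 < C.l
  w_lt : 0 < 1 - 3 * (C.w * C.w)
  K_lower : 0 < (1 - 3 * (C.w * C.w)) * (1 - C.v * C.w) - 3 * (C.l * C.l)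
  K_upper : 0 < 4 * (C.l * C.l) - (1 - 3 * (C.w * C.w)) * (1 - C.v * C.w)
  v_eq : C.v * (C.l * (1 + 2 * C.w) + C.w * (1 - 3 * (C.w * C.w)))
    = C.l * C.l - (2 + C.w) * C.l + 1 - 3 * (C.w * C.w)
  h_eq : C.h * (1 + C.v) = 1
  sg_eq : C.sg * (1 + C.w) = 2 * C.h
  vm_eq : C.vm * (1 + C.w - C.l) = C.v + C.w + C.v * (C.w - C.w * C.w)
  g_eq : C.g * (1 + C.v + 3 * C.w + C.v * C.w) = 3 + C.v + 3 * C.w + 3 * (C.v * C.w)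
  X2_eq : C.X2 * (C.v + 3 * C.w) = 1 + C.s
  X1_eq : C.X1 * (C.vm + C.wsq) = C.h * (1 + C.vm) - C.w * (√3 - C.sq) * C.X2

/-! ### Affine arithmetic in fixed-point integers -/

/-- An affine form `c + a ε₁ + b ε₂ + d ε₃ ± r` in fixed-point arithmetic with unit `2⁻³⁰`:
the `εᵢ` are shared noise symbols ranging over `[-1, 1]` and `r` bounds the remaining error. -/
structure Aff where
  c : Int
  a : Int
  b : Int
  d : Int
  r : Nat

namespace Aff

/-- `forceN n k` is `k n`; the case distinction makes a call-by-name evaluator reduce `n` to a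
numeral before it is substituted. -/
def forceN {β : Type} (n : Nat) (k : Nat → β) : β :=
  match n with
  | 0 => k 0
  | n + 1 => k (n + 1)

/-- `forceI z k` is `k z`, evaluated strictly. -/
def forceI {β : Type} (z : Int) (k : Int → β) : β :=
  match z with
  | Int.ofNat n => forceN n fun n => k (Int.ofNat n)
  | Int.negSucc n => forceN n fun n => k (Int.negSucc n)

theorem forceN_eq {β : Type} (n : Nat) (k : Nat → β) : forceN n k = k n := by
  cases n <;> rfl

theorem forceI_eq {β : Type} (z : Int) (k : Int → β) : forceI z k = k z := by
  cases z <;> simp only [forceI, forceN_eq]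

/-- Strict constructor. -/
def mk' (c a b d : Int) (r : Nat) : Aff :=
  forceI c fun c => forceI a fun a => forceI b fun b => forceI d fun d => forceN r fun r =>
    ⟨c, a, b, d, r⟩

theorem mk'_eq (c a b d : Int) (r : Nat) : mk' c a b d r = ⟨c, a, b, d, r⟩ := by
  simp only [mk', forceI_eq, forceN_eq]

/-- The fixed-point unit `2³⁰`. -/
def S : Nat := 1073741824

/-- Floor division by the unit. -/
def shr : Int → Int
  | Int.ofNat m => Int.ofNat (Nat.div m 1073741824)
  | Int.negSucc m => Int.negSucc (Nat.div m 1073741824)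

theorem shr_spec (z : Int) : 1073741824 * shr z ≤ z ∧ z < 1073741824 * shr z + 1073741824 := by
  cases z with
  | ofNat m =>
    have : shr (Int.ofNat m) = ((m / 1073741824 : Nat) : Int) := rfl
    rw [this]; simp only [Int.ofNat_eq_natCast]; omega
  | negSucc m =>
    have : shr (Int.negSucc m) = Int.negSucc (m / 1073741824 : Nat) := rfl
    rw [this]; simp only [Int.negSucc_eq]; omega

/-- Bound for the deviation of an affine form from its centre. -/
def rad : Aff → Nat
  | ⟨_, a, b, d, r⟩ =>
    Nat.add (Nat.add a.natAbs b.natAbs) (Nat.add d.natAbs r)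

/-- Addition of affine forms. -/
def add : Aff → Aff → Aff
  | ⟨c, a, b, d, r⟩, ⟨c', a', b', d', r'⟩ =>
    mk' (Int.add c c') (Int.add a a') (Int.add b b') (Int.add d d') (Nat.add r r')

/-- Negation of affine forms. -/
def neg : Aff → Aff
  | ⟨c, a, b, d, r⟩ => mk' (Int.neg c) (Int.neg a) (Int.neg b) (Int.neg d) r

/-- Subtraction of affine forms. -/
def sub : Aff → Aff → Aff
  | ⟨c, a, b, d, r⟩, ⟨c', a', b', d', r'⟩ =>
    mk' (Int.sub c c') (Int.sub a a') (Int.sub b b') (Int.sub d d') (Nat.add r r')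

/-- Multiplication of affine forms: the linear parts are multiplied out, the product of the
deviations goes into the error term, and `5` absorbs the rounding errors. -/
def mul : Aff → Aff → Aff
  | ⟨c, a, b, d, r⟩, ⟨c', a', b', d', r'⟩ =>
    mk' (shr (Int.mul c c')) (shr (Int.add (Int.mul c a') (Int.mul c' a)))
      (shr (Int.add (Int.mul c b') (Int.mul c' b))) (shr (Int.add (Int.mul c d') (Int.mul c' d)))
      (Nat.add (Nat.div (Nat.add (Nat.add (Nat.mul c.natAbs r') (Nat.mul c'.natAbs r))
        (Nat.mul (rad ⟨c, a, b, d, r⟩) (rad ⟨c', a', b', d', r'⟩))) 1073741824) 5)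

/-- Multiplication by a natural number. -/
def smul (n : Nat) : Aff → Aff
  | ⟨c, a, b, d, r⟩ =>
    mk' (Int.mul (Int.ofNat n) c) (Int.mul (Int.ofNat n) a) (Int.mul (Int.ofNat n) b)
      (Int.mul (Int.ofNat n) d) (Nat.mul n r)

instance : Add Aff := ⟨add⟩
instance : Sub Aff := ⟨sub⟩
instance : Neg Aff := ⟨neg⟩
instance : Mul Aff := ⟨mul⟩

/-- The constant `1`. -/
def one : Aff := ⟨1073741824, 0, 0, 0, 0⟩

/-- `pos A` certifies that the represented number is positive. -/
def pos : Aff → Bool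
  | ⟨Int.ofNat n, a, b, d, r⟩ => Nat.blt (rad ⟨0, a, b, d, r⟩) n
  | _ => false

/-- Strict evaluation of `k A`. -/
def letA (A : Aff) (k : Aff → Bool) : Bool :=
  match A with
  | ⟨c, a, b, d, r⟩ => k ⟨c, a, b, d, r⟩

/-- First-order approximate reciprocal, without an error term. -/
def preInv : Aff → Aff
  | ⟨c, a, b, d, _⟩ =>
    forceI (Int.ediv 1152921504606846976 c) fun y =>
      mk' y (Int.neg (shr (shr (Int.mul a (Int.mul y y)))))
        (Int.neg (shr (shr (Int.mul b (Int.mul y y)))))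
        (Int.neg (shr (shr (Int.mul d (Int.mul y y))))) 0

/-- An upper bound for the absolute value, in fixed-point units. -/
def mag : Aff → Nat
  | ⟨c, a, b, d, r⟩ => Nat.add c.natAbs (rad ⟨c, a, b, d, r⟩)

/-- The approximate reciprocal `Y` of `A`, with error term bounded by `|1 - A Y| / (inf A)`. -/
def inv (A : Aff) : Aff :=
  letI Y := preInv A
  match A, Y with
  | ⟨c, a, b, d, r⟩, ⟨c', a', b', d', _⟩ =>
    mk' c' a' b' d' (Nat.add (Nat.div (Nat.mul 1073741824
      (mag (sub one (mul ⟨c, a, b, d, r⟩ ⟨c', a', b', d', 0⟩))))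
        (c.natAbs - rad ⟨c, a, b, d, r⟩)) 1)

/-- Strict evaluation of `k A⁻¹`, for `A` certified positive. -/
def letInv (A : Aff) (k : Aff → Bool) : Bool :=
  match A with
  | ⟨c, a, b, d, r⟩ =>
    match pos ⟨c, a, b, d, r⟩ with
    | true => letA (inv ⟨c, a, b, d, r⟩) k
    | false => false

/-- The affine form `A` represents the real number `x` for the values `e` of the noise symbols. -/
def Enc (e : ℝ × ℝ × ℝ) (A : Aff) (x : ℝ) : Prop :=
  |1073741824 * x - (A.c + A.a * e.1 + A.b * e.2.1 + A.d * e.2.2)| ≤ A.r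

/-- The range of the noise symbols. -/
def Noise (e : ℝ × ℝ × ℝ) : Prop := |e.1| ≤ 1 ∧ |e.2.1| ≤ 1 ∧ |e.2.2| ≤ 1

theorem Enc.add {e : ℝ × ℝ × ℝ} {A B : Aff} {x y : ℝ} (hA : Enc e A x) (hB : Enc e B y) :
    Enc e (A + B) (x + y) := by
  obtain ⟨c, a, b, d, r⟩ := A
  obtain ⟨c', a', b', d', r'⟩ := B
  change Enc e (Aff.add _ _) _
  simp only [Enc, Aff.add, mk'_eq, Int.add_def, Nat.add_eq] at *
  push_cast
  rw [abs_le] at *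
  constructor <;> linarith [hA.1, hA.2, hB.1, hB.2]

theorem Enc.sub {e : ℝ × ℝ × ℝ} {A B : Aff} {x y : ℝ} (hA : Enc e A x) (hB : Enc e B y) :
    Enc e (A - B) (x - y) := by
  obtain ⟨c, a, b, d, r⟩ := A
  obtain ⟨c', a', b', d', r'⟩ := B
  change Enc e (Aff.sub _ _) _
  have h (m n : Int) : Int.sub m n = m - n := rfl
  simp only [Enc, Aff.sub, mk'_eq, h, Nat.add_eq] at *
  push_cast
  rw [abs_le] at *
  constructor <;> linarith [hA.1, hA.2, hB.1, hB.2]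

theorem Enc.neg {e : ℝ × ℝ × ℝ} {A : Aff} {x : ℝ} (hA : Enc e A x) : Enc e (-A) (-x) := by
  obtain ⟨c, a, b, d, r⟩ := A
  change Enc e (Aff.neg _) _
  have h (m : Int) : Int.neg m = - m := rfl
  simp only [Enc, Aff.neg, mk'_eq, h] at *
  push_cast
  rw [abs_le] at *
  constructor <;> linarith [hA.1, hA.2]

theorem Enc.smul {e : ℝ × ℝ × ℝ} {A : Aff} {x : ℝ} (n : ℕ) [n.AtLeastTwo] (hA : Enc e A x) :
    Enc e (smul n A) (OfNat.ofNat n * x) := by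
  obtain ⟨c, a, b, d, r⟩ := A
  have h (m n : Int) : Int.mul m n = m * n := rfl
  have hn : (OfNat.ofNat n : ℝ) = (n : ℝ) := rfl
  rw [hn]
  simp only [Enc, Aff.smul, mk'_eq, h, Nat.mul_eq, Int.ofNat_eq_natCast] at *
  push_cast
  have : 1073741824 * ((n : ℝ) * x) - ((n : ℝ) * c + n * a * e.1 + n * b * e.2.1 + n * d * e.2.2)
    = n * (1073741824 * x - (c + a * e.1 + b * e.2.1 + d * e.2.2)) := by ring
  rw [this, abs_mul, Nat.abs_cast]
  gcongr

theorem Enc.one {e : ℝ × ℝ × ℝ} : Enc e one 1 := by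
  simp [Enc, Aff.one]

/-- The constant `n`. -/
def con (n : Nat) : Aff := ⟨Int.mul 1073741824 (Int.ofNat n), 0, 0, 0, 0⟩

theorem Enc.con {e : ℝ × ℝ × ℝ} (n : ℕ) [n.AtLeastTwo] : Enc e (con n) (OfNat.ofNat n) := by
  have hn : (OfNat.ofNat n : ℝ) = (n : ℝ) := rfl
  simp [Enc, Aff.con, hn]

/-- A fixed-point enclosure of `√3`. -/
def sqrt3 : Aff := ⟨1859775393, 0, 0, 0, 1⟩

theorem Enc.sqrt3 {e : ℝ × ℝ × ℝ} : Enc e sqrt3 (√3) := by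
  have h1 : 1859775392 / 1073741824 ≤ √3 := Real.le_sqrt_of_sq_le (by norm_num)
  have h2 : √3 ≤ 1859775394 / 1073741824 := by
    rw [Real.sqrt_le_left (by norm_num)]; norm_num
  simp only [Enc, Aff.sqrt3, abs_le]
  push_cast
  constructor <;> linarith

theorem abs_lin_le {e : ℝ × ℝ × ℝ} (he : Noise e) (a b d : Int) :
    |a * e.1 + b * e.2.1 + d * e.2.2| ≤ (a.natAbs + b.natAbs + d.natAbs : ℝ) := by
  have key (a : Int) {t : ℝ} (ht : |t| ≤ 1) : |(a : ℝ) * t| ≤ (a.natAbs : ℝ) := by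
    rw [abs_mul, Nat.cast_natAbs, Int.cast_abs]
    exact mul_le_of_le_one_right (abs_nonneg _) ht
  exact (abs_add_three _ _ _).trans
    (add_le_add_three (key a he.1) (key b he.2.1) (key d he.2.2))

theorem rad_cast (c a b d : Int) (r : Nat) :
    ((rad ⟨c, a, b, d, r⟩ : Nat) : ℝ) = a.natAbs + b.natAbs + d.natAbs + r := by
  simp only [rad, Nat.add_eq]; push_cast; ring

theorem Enc.abs_le_rad {e : ℝ × ℝ × ℝ} (he : Noise e) {A : Aff} {x : ℝ} (hA : Enc e A x) :
    |1073741824 * x - A.c| ≤ rad A := by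
  obtain ⟨c, a, b, d, r⟩ := A
  rw [rad_cast]
  have h := abs_lin_le he a b d
  simp only [Enc] at hA ⊢
  rw [abs_le] at *
  constructor <;> linarith [h.1, h.2, hA.1, hA.2]

theorem shr_real (z : Int) :
    (1073741824 * (shr z : ℝ) ≤ z) ∧ ((z : ℝ) ≤ 1073741824 * (shr z : ℝ) + 1073741824) := by
  have h := shr_spec z
  exact ⟨by exact_mod_cast h.1, by exact_mod_cast h.2.le⟩

theorem Enc.mul {e : ℝ × ℝ × ℝ} (he : Noise e) {A B : Aff} {x y : ℝ} (hA : Enc e A x)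
    (hB : Enc e B y) : Enc e (A * B) (x * y) := by
  have hA' := hA.abs_le_rad he
  have hB' := hB.abs_le_rad he
  obtain ⟨c, a, b, d, r⟩ := A
  obtain ⟨c', a', b', d', r'⟩ := B
  change Enc e (Aff.mul _ _) _
  have h1 (m n : Int) : Int.mul m n = m * n := rfl
  have h2 (m n : Nat) : Nat.div m n = m / n := rfl
  simp only [Enc, Aff.mul, mk'_eq, h1, h2, Int.add_def, Nat.add_eq, Nat.mul_eq] at *
  generalize rad ⟨c, a, b, d, r⟩ = R at *
  generalize rad ⟨c', a', b', d', r'⟩ = R' at *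
  set N := c.natAbs * r' + c'.natAbs * r + R * R' with hN
  have hNd : (N : ℝ) ≤ 1073741824 * ((N / 1073741824 : Nat) : ℝ) + 1073741824 := by
    have : N ≤ 1073741824 * (N / 1073741824) + 1073741824 := by omega
    exact_mod_cast this
  have s0 := shr_real (c * c')
  have s1 := shr_real (c * a' + c' * a)
  have s2 := shr_real (c * b' + c' * b)
  have s3 := shr_real (c * d' + c' * d)
  generalize shr (c * c') = k0 at *
  generalize shr (c * a' + c' * a) = k1 at *
  generalize shr (c * b' + c' * b) = k2 at *
  generalize shr (c * d' + c' * d) = k3 at *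
  push_cast at *
  -- the rounding error of one linear coefficient
  have rnd (z k t : ℝ) (h : 1073741824 * k ≤ z ∧ z ≤ 1073741824 * k + 1073741824)
      (ht : |t| ≤ 1) : |z * t - 1073741824 * k * t| ≤ 1073741824 := by
    rw [← sub_mul, abs_mul]
    have : |z - 1073741824 * k| ≤ 1073741824 := by rw [abs_le]; constructor <;> linarith [h.1, h.2]
    calc |z - 1073741824 * k| * |t| ≤ 1073741824 * 1 := by gcongr
      _ = 1073741824 := by norm_num
  have t1 := rnd _ _ _ s1 he.1
  have t2 := rnd _ _ _ s2 he.2.1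
  have t3 := rnd _ _ _ s3 he.2.2
  -- the nonlinear part of the product of the two deviations
  have hAB : |(1073741824 * x - c) * (1073741824 * y - c')| ≤ R * R' := by
    rw [abs_mul]; gcongr
  have hcB : |(c : ℝ) * (1073741824 * y - (c' + a' * e.1 + b' * e.2.1 + d' * e.2.2))|
      ≤ |(c : ℝ)| * r' := by
    rw [abs_mul]; gcongr
  have hcA : |(c' : ℝ) * (1073741824 * x - (c + a * e.1 + b * e.2.1 + d * e.2.2))|
      ≤ |(c' : ℝ)| * r := by
    rw [abs_mul]; gcongr
  have hNc : (N : ℝ) = |(c : ℝ)| * r' + |(c' : ℝ)| * r + R * R' := by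
    rw [hN]; push_cast [Nat.cast_natAbs]; ring
  generalize ((N / 1073741824 : Nat) : ℝ) = Q at *
  generalize |(c : ℝ)| = mc at *
  generalize |(c' : ℝ)| = mc' at *
  have hS : (0 : ℝ) < 1073741824 := by norm_num
  rw [abs_le] at *
  obtain ⟨u1, u1'⟩ := t1
  obtain ⟨u2, u2'⟩ := t2
  obtain ⟨u3, u3'⟩ := t3
  obtain ⟨u4, u4'⟩ := hAB
  obtain ⟨u5, u5'⟩ := hcB
  obtain ⟨u6, u6'⟩ := hcA
  obtain ⟨u7, u7'⟩ := s0
  clear hA hB hA' hB' s1 s2 s3 rnd he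
  constructor <;> refine le_of_mul_le_mul_left ?_ hS <;> linarith

theorem pos_sound {e : ℝ × ℝ × ℝ} (he : Noise e) {A : Aff} {x : ℝ} (hA : Enc e A x)
    (h : pos A = true) : 0 < x := by
  have hA' := hA.abs_le_rad he
  obtain ⟨c, a, b, d, r⟩ := A
  cases c with
  | negSucc n => simp [pos] at h
  | ofNat n =>
    have h' : rad ⟨Int.ofNat n, a, b, d, r⟩ < n := by
      simpa only [pos, Nat.blt_eq, rad] using h
    have h'' : ((rad ⟨Int.ofNat n, a, b, d, r⟩ : Nat) : ℝ) < n := by exact_mod_cast h'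
    rw [abs_le] at hA'
    have := hA'.1
    simp only [Int.ofNat_eq_natCast, Int.cast_natCast] at this h''
    linarith

theorem letA_elim {e : ℝ × ℝ × ℝ} {A : Aff} {k : Aff → Bool} {x : ℝ} (h : letA A k = true)
    (hA : Enc e A x) : ∃ B, Enc e B x ∧ k B = true :=
  ⟨A, hA, h⟩

theorem mag_sound {e : ℝ × ℝ × ℝ} (he : Noise e) {A : Aff} {x : ℝ} (hA : Enc e A x) :
    1073741824 * |x| ≤ mag A := by
  have hA' := hA.abs_le_rad he
  obtain ⟨c, a, b, d, r⟩ := A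
  simp only [mag, Nat.add_eq] at *
  push_cast
  have : (1073741824 : ℝ) * |x| = |(1073741824 * x - c) + c| := by
    rw [sub_add_cancel, abs_mul]; norm_num
  rw [this, Nat.cast_natAbs, Int.cast_abs]
  linarith [abs_add_le (1073741824 * x - c) (c : ℝ)]

theorem letInv_elim {e : ℝ × ℝ × ℝ} (he : Noise e) {A : Aff} {k : Aff → Bool} {x : ℝ}
    (h : letInv A k = true) (hA : Enc e A x) :
    0 < x ∧ ∃ B, Enc e B x⁻¹ ∧ k B = true := by
  rcases hp : pos A with _ | _
  · obtain ⟨c, a, b, d, r⟩ := A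
    simp [letInv, hp] at h
  have hx := pos_sound he hA hp
  have hA' := hA.abs_le_rad he
  have hxy : x⁻¹ * x = 1 := inv_mul_cancel₀ hx.ne'
  generalize x⁻¹ = y at hxy
  refine ⟨hx, inv A, ?_, ?_⟩
  · obtain ⟨c, a, b, d, r⟩ := A
    rcases hY : preInv ⟨c, a, b, d, r⟩ with ⟨c', a', b', d', r'⟩
    have hs : ∃ n : ℕ, c = Int.ofNat n ∧ rad ⟨c, a, b, d, r⟩ < n := by
      cases c with
      | negSucc n => simp [pos] at hp
      | ofNat n => exact ⟨n, rfl, by simpa only [pos, Nat.blt_eq, rad] using hp⟩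
    obtain ⟨n, hn, hlt⟩ := hs
    simp only [inv, hY, mk'_eq]
    have h2 (m n : Nat) : Nat.div m n = m / n := rfl
    simp only [h2, Nat.add_eq, Nat.mul_eq]
    -- the real number represented exactly by the approximate reciprocal
    set z : ℝ := (c' + a' * e.1 + b' * e.2.1 + d' * e.2.2) / 1073741824 with hz
    have hzE : Enc e ⟨c', a', b', d', 0⟩ z := by
      simp only [Enc, hz]
      rw [show (1073741824 : ℝ) * ((c' + a' * e.1 + b' * e.2.1 + d' * e.2.2) / 1073741824)
        - (c' + a' * e.1 + b' * e.2.1 + d' * e.2.2) = 0 by ring]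
      simp
    have hm := mag_sound he (Enc.one.sub (hA.mul he hzE))
    change _ ≤ ((mag (Aff.sub Aff.one (Aff.mul _ _)) : ℕ) : ℝ) at hm
    set M := mag (Aff.sub Aff.one (Aff.mul ⟨c, a, b, d, r⟩ ⟨c', a', b', d', 0⟩))
    set R := rad ⟨c, a, b, d, r⟩
    have hnat : c.natAbs = n := by rw [hn]; rfl
    have hlo : ((n - R : ℕ) : ℝ) ≤ 1073741824 * x := by
      rw [Nat.cast_sub hlt.le]
      rw [abs_le] at hA'
      have := hA'.1
      simp only [hn, Int.ofNat_eq_natCast, Int.cast_natCast] at this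
      linarith
    rw [hnat]
    set D := n - R
    have hD : 0 < D := Nat.sub_pos_of_lt hlt
    have hdiv : (1073741824 * (M : ℝ)) ≤ D * ((1073741824 * M / D + 1 : ℕ) : ℝ) := by
      have : 1073741824 * M ≤ D * (1073741824 * M / D + 1) :=
        (Nat.lt_mul_div_succ _ hD).le
      exact_mod_cast this
    set Q := 1073741824 * M / D + 1
    have hE : |1073741824 * (y - z)| ≤ Q := by
      have e1 : (y - z) * x = 1 - x * z := by linear_combination hxy
      have e2 : |y - z| * x = |1 - x * z| := by rw [← e1, abs_mul, abs_of_pos hx]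
      have hDr : (0 : ℝ) < D := by exact_mod_cast hD
      rw [abs_mul, abs_of_pos (by norm_num : (0 : ℝ) < 1073741824)]
      have e3 : (D : ℝ) * (1073741824 * |y - z|) ≤ D * Q := by
        calc (D : ℝ) * (1073741824 * |y - z|)
            ≤ 1073741824 * x * (1073741824 * |y - z|) := by gcongr
          _ = 1073741824 * (1073741824 * |1 - x * z|) := by rw [← e2]; ring
          _ ≤ 1073741824 * M := by gcongr
          _ ≤ _ := hdiv
      exact le_of_mul_le_mul_left e3 hDr
    have : (1073741824 : ℝ) * y - (c' + a' * e.1 + b' * e.2.1 + d' * e.2.2)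
        = 1073741824 * (y - z) := by rw [hz]; ring
    simpa only [Enc, this] using hE
  · obtain ⟨c, a, b, d, r⟩ := A
    have h' : letA (inv ⟨c, a, b, d, r⟩) k = true := by simpa only [letInv, hp] using h
    exact h'

/-- The second component of a successful positivity test. -/
theorem and_pos {e : ℝ × ℝ × ℝ} (he : Noise e) {A : Aff} {k : Bool} {x : ℝ}
    (h : (pos A && k) = true) (hA : Enc e A x) : 0 < x ∧ k = true := by
  rw [Bool.and_eq_true] at h
  exact ⟨pos_sound he hA h.1, h.2⟩

/-- An interval with centre `c` and radius `d` as an affine form in one noise symbol. -/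
theorem exists_noise {c : Int} {d : Nat} {x : ℝ} (h : |1073741824 * x - c| ≤ d) :
    ∃ t : ℝ, |t| ≤ 1 ∧ 1073741824 * x = c + d * t := by
  rcases Nat.eq_zero_or_pos d with rfl | hd
  · refine ⟨0, by simp, ?_⟩
    have := abs_nonpos_iff.1 (by simpa using h : |1073741824 * x - c| ≤ 0)
    push_cast; linarith
  · have hd' : (0 : ℝ) < d := by exact_mod_cast hd
    refine ⟨(1073741824 * x - c) / d, ?_, ?_⟩
    · rw [abs_div, abs_of_pos hd']; exact (div_le_one hd').2 h
    · field_simp; ring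

/-! ### Branch and bound -/

/-- The positivity test on one box of values of `(w, l, q)`. It evaluates the quantities of `Conf`
in dependency order, solving the relations of `Conf.Valid` by division, and checks the signs of
those listed in `leaf_sound`. A box succeeds vacuously if it certifies `v ≤ 0`, `K ≤ 3 l²` or
`K ≥ 4 l²` for `K = (1 - 3 w²) (1 - v w)`. -/
def leaf (w l q : Aff) : Bool :=
  (pos (-(l * l - (con 2 + w) * l + one - smul 3 (w * w))) ||
  letInv (l * (one + smul 2 w) + w * (one - smul 3 (w * w))) fun i_v =>
  letA ((l * l - (con 2 + w) * l + one - smul 3 (w * w)) * i_v) fun v =>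
  letA ((one - smul 3 (w * w)) * (one - v * w)) fun K =>
  (pos (smul 3 (l * l) - K) ||
  (pos (K - smul 4 (l * l)) ||
  letInv (one + v) fun i_h =>
  letA (one * i_h) fun h =>
  letInv (one + w) fun i_sg =>
  letA ((smul 2 h) * i_sg) fun sg =>
  letA (w * sg) fun s =>
  letInv (one + w - l) fun i_vm =>
  letA ((v + w + v * (w - w * w)) * i_vm) fun vm =>
  letInv (one + v + smul 3 w + v * w) fun i_g =>
  letA ((con 3 + v + smul 3 w + smul 3 (v * w)) * i_g) fun g =>
  letA (w * g) fun wg =>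
  letA (v * g - smul 3 wg + smul 3 (v + w)) fun qb =>
  letA ((v + smul 3 w) * g + v - smul 3 w) fun qc =>
  letA (smul 2500 qc - smul 5766 wg - smul 1550 qb) fun qlo =>
  pos qlo &&
  letA (smul 294 wg + smul 70 qb - smul 100 qc) fun qhi =>
  pos qhi &&
  letInv (v + smul 3 w) fun i_X2 =>
  letA ((one + s) * i_X2) fun X2 =>
  letA (sqrt3 * q) fun sq =>
  letA (w * sq) fun wsq =>
  letInv (vm + wsq) fun i_X1 =>
  letA ((h * (one + vm) - w * (sqrt3 - sq) * X2) * i_X1) fun X1 =>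
  letA (X1 - h) fun d0 =>
  pos d0 &&
  letA (X2 - X1) fun d1 =>
  pos d1 &&
  letA (sqrt3 * X2) fun z2 =>
  letA (w * z2) fun y2 =>
  letA (z2 - sq * d1) fun z1 =>
  letA (w * z1) fun y1 =>
  letA (one - v * X1) fun x1 =>
  letA (x1 - y1) fun e1 =>
  pos e1 &&
  letA (wg * X2) fun x2 =>
  letA (sg * h * l) fun lam =>
  letA (lam * vm) fun lm =>
  letA (lm * (one + v)) fun lv =>
  letA (v * g - smul 3 wg + smul 3 (v + smul 3 w) + smul 6 (wg * q)) fun mu =>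
  letA (X2 * mu) fun X2mu =>
  letA (w * X2mu * d1) fun wx =>
  letA (-(smul 2 (d0 * lv))) fun Fu0 =>
  letA (-(smul 2 (wx * q))) fun Fu2 =>
  letA (smul 2 (h * (y2 - x2)) - s * (h + x2) + smul 2 (w * h * (x2 + X2)) - s * w * (h + X2))
      fun F02 =>
  letA (y1 * y1 - x1 * (x1 + s) + smul 2 (w * X1 * x1) - s * w * X1) fun F11 =>
  letA (F02 + smul 4 F11) fun Fu1 =>
  letA (h * h) fun hh =>
  letA (hh * (smul 2 x2 + s + sg - smul 2 X2) + h * (s * (x2 + X2) + smul 2 (sg * y2)) - smul 6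
      (hh * y2)) fun G002 =>
  letA (h * (x1 * (x1 + smul 2 X1)) + s * (X1 * x1 + h * (x1 + X1)) + sg * (y1 * y1 + smul 2 (h *
      y1)) - smul 3 (h * (y1 * y1)) - smul 6 (h * X1 * y1)) fun G011 =>
  letA (G002 + smul 4 G011) fun Gu1 =>
  letA (x1 * x2) fun xp =>
  letA (y1 * y2) fun yp =>
  letA (X1 * x2 + X2 * x1) fun cr =>
  letA (smul 2 (h * (xp + cr)) + s * (cr + h * (x1 + X1 + x2 + X2)) + smul 2 (sg * (yp + h * (y1
      + y2))) - smul 6 (h * yp + h * (X1 * y2 + X2 * y1))) fun G012 =>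
  letA (X1 * x1 * (x1 + s) + y1 * y1 * (sg - smul 3 X1)) fun G111 =>
  letA (smul 2 G012 + smul 8 G111) fun Gu2 =>
  letA (h * (x2 * (x2 + smul 2 X2)) + s * (X2 * x2 + h * (x2 + X2)) + sg * (y2 * y2 + smul 2 (h *
      y2)) - smul 3 (h * (y2 * y2)) - smul 6 (h * X2 * y2)) fun G022 =>
  letA (x1 * (X2 * x1 + smul 2 (X1 * x2)) + s * (X1 * x1 + cr) + sg * (y1 * y1 + smul 2 yp) -
      smul 3 (X2 * (y1 * y1) + smul 2 (X1 * yp))) fun G112 =>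
  letA (G022 + smul 4 G112) fun Gu3 =>
  letA (vm * Gu1 - h * Fu1 + smul 4 (y1 * d0 * lv) + smul 2 (d1 * lm) + smul 2 (wsq * d1 * lam))
      fun c1 =>
  pos c1 &&
  letA (d0 * (vm * Gu2 - h * Fu2 - smul 2 (y1 * Fu1) - y2 * Fu0) - d1 * (h * Fu1 + smul 2 (y1 *
      Fu0) + wsq * Gu1)) fun c2 =>
  pos c2 &&
  letA (d0 * (vm * Gu3 - smul 2 (y1 * Fu2) - y2 * Fu1) - d1 * (h * Fu2 + smul 2 (y1 * Fu1) + y2 *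
      Fu0 + wsq * Gu2)) fun c3 =>
  pos c3 &&
  letA (smul 2 (d0 * X2 * X2mu * (wsq + vm)) + smul 4 (z1 * q * wx) - z2 * Fu1 - sq * Gu3) fun c4
      =>
  pos c4 && true)))

theorem letA_elim' {e : ℝ × ℝ × ℝ} {A : Aff} {k : Aff → Bool} {x y : ℝ} (h : letA A k = true)
    (hA : Enc e A x) (hxy : y = x) : ∃ B, Enc e B y ∧ k B = true :=
  ⟨A, hxy ▸ hA, h⟩

theorem or_pos {e : ℝ × ℝ × ℝ} (he : Noise e) {A : Aff} {k : Bool} {x : ℝ}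
    (h : (pos A || k) = true) (hA : Enc e A x) (hx : x ≤ 0) : k = true := by
  rw [Bool.or_eq_true] at h
  exact h.resolve_left fun hp => absurd (pos_sound he hA hp) hx.not_gt

theorem eq_mul_inv_of {x y z : ℝ} (h : x * y = z) (hy : 0 < y) : x = z * y⁻¹ :=
  (eq_mul_inv_iff_mul_eq₀ hy.ne').2 h

theorem leaf_sound {e : ℝ × ℝ × ℝ} (he : Noise e) {w l q : Aff} {C : Conf} (hC : C.Valid)
    (h_w : Enc e w C.w) (h_l : Enc e l C.l) (h_q : Enc e q C.q) (H : leaf w l q = true) :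
    0 < C.qlo ∧ 0 < C.qhi ∧ 0 < C.d0 ∧ 0 < C.d1 ∧ 0 < C.e1 ∧
      0 < C.c1 ∧ 0 < C.c2 ∧ 0 < C.c3 ∧ 0 < C.c4 := by
  unfold leaf at H
  replace H := or_pos he H (x := -(C.l * C.l - (2 + C.w) * C.l + 1 - 3 * (C.w * C.w)))
      (((((h_l.mul he h_l).sub (((Enc.con 2).add h_w).mul he h_l)).add Enc.one).sub ((h_w.mul he
      h_w).smul 3)).neg) (by
        rw [← hC.v_eq]
        have := hC.v_pos; have := hC.w_pos; have := hC.l_pos; have := hC.w_lt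
        rw [neg_nonpos]; positivity)
  obtain ⟨p_v, i_v, hi_v, H⟩ := letInv_elim he (x := C.l * (1 + 2 * C.w) + C.w * (1 - 3 * (C.w *
      C.w))) H ((h_l.mul he (Enc.one.add ((h_w).smul 2))).add (h_w.mul he (Enc.one.sub ((h_w.mul
      he h_w).smul 3))))
  obtain ⟨v, h_v, H⟩ := letA_elim' H (((((h_l.mul he h_l).sub (((Enc.con 2).add h_w).mul he
      h_l)).add Enc.one).sub ((h_w.mul he h_w).smul 3)).mul he hi_v) (eq_mul_inv_of hC.v_eq p_v)
  obtain ⟨K, h_K, H⟩ := letA_elim H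
      (show Enc e _ ((1 - 3 * (C.w * C.w)) * (1 - C.v * C.w)) from
        (Enc.one.sub ((h_w.mul he h_w).smul 3)).mul he (Enc.one.sub (h_v.mul he h_w)))
  replace H := or_pos he H (x := 3 * (C.l * C.l) - (1 - 3 * (C.w * C.w)) * (1 - C.v * C.w))
      (((h_l.mul he h_l).smul 3).sub h_K) (by linarith [hC.K_lower])
  replace H := or_pos he H (x := (1 - 3 * (C.w * C.w)) * (1 - C.v * C.w) - 4 * (C.l * C.l))
      (h_K.sub ((h_l.mul he h_l).smul 4)) (by linarith [hC.K_upper])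
  obtain ⟨p_h, i_h, hi_h, H⟩ := letInv_elim he (x := 1 + C.v) H (Enc.one.add h_v)
  obtain ⟨h, h_h, H⟩ := letA_elim' H (Enc.one.mul he hi_h) (eq_mul_inv_of hC.h_eq p_h)
  obtain ⟨p_sg, i_sg, hi_sg, H⟩ := letInv_elim he (x := 1 + C.w) H (Enc.one.add h_w)
  obtain ⟨sg, h_sg, H⟩ := letA_elim' H (((h_h).smul 2).mul he hi_sg) (eq_mul_inv_of hC.sg_eq p_sg)
  obtain ⟨s, h_s, H⟩ := letA_elim (x := C.s) H (h_w.mul he h_sg)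
  obtain ⟨p_vm, i_vm, hi_vm, H⟩ := letInv_elim he (x := 1 + C.w - C.l) H ((Enc.one.add h_w).sub
      h_l)
  obtain ⟨vm, h_vm, H⟩ := letA_elim' H (((h_v.add h_w).add (h_v.mul he (h_w.sub (h_w.mul he
      h_w)))).mul he hi_vm) (eq_mul_inv_of hC.vm_eq p_vm)
  obtain ⟨p_g, i_g, hi_g, H⟩ := letInv_elim he (x := 1 + C.v + 3 * C.w + C.v * C.w) H
      (((Enc.one.add h_v).add ((h_w).smul 3)).add (h_v.mul he h_w))
  obtain ⟨g, h_g, H⟩ := letA_elim' H (((((Enc.con 3).add h_v).add ((h_w).smul 3)).add ((h_v.mul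
      he h_w).smul 3)).mul he hi_g) (eq_mul_inv_of hC.g_eq p_g)
  obtain ⟨wg, h_wg, H⟩ := letA_elim (x := C.wg) H (h_w.mul he h_g)
  obtain ⟨qb, h_qb, H⟩ := letA_elim (x := C.qb) H (((h_v.mul he h_g).sub ((h_wg).smul 3)).add
      ((h_v.add h_w).smul 3))
  obtain ⟨qc, h_qc, H⟩ := letA_elim (x := C.qc) H ((((h_v.add ((h_w).smul 3)).mul he h_g).add
      h_v).sub ((h_w).smul 3))
  obtain ⟨qlo, h_qlo, H⟩ := letA_elim (x := C.qlo) H ((((h_qc).smul 2500).sub ((h_wg).smul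
      5766)).sub ((h_qb).smul 1550))
  obtain ⟨q_qlo, H⟩ := and_pos he H h_qlo
  obtain ⟨qhi, h_qhi, H⟩ := letA_elim (x := C.qhi) H ((((h_wg).smul 294).add ((h_qb).smul
      70)).sub ((h_qc).smul 100))
  obtain ⟨q_qhi, H⟩ := and_pos he H h_qhi
  obtain ⟨p_X2, i_X2, hi_X2, H⟩ := letInv_elim he (x := C.v + 3 * C.w) H (h_v.add ((h_w).smul 3))
  obtain ⟨X2, h_X2, H⟩ := letA_elim' H ((Enc.one.add h_s).mul he hi_X2) (eq_mul_inv_of hC.X2_eq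
      p_X2)
  obtain ⟨sq, h_sq, H⟩ := letA_elim (x := C.sq) H (Enc.sqrt3.mul he h_q)
  obtain ⟨wsq, h_wsq, H⟩ := letA_elim (x := C.wsq) H (h_w.mul he h_sq)
  obtain ⟨p_X1, i_X1, hi_X1, H⟩ := letInv_elim he (x := C.vm + C.wsq) H (h_vm.add h_wsq)
  obtain ⟨X1, h_X1, H⟩ := letA_elim' H (((h_h.mul he (Enc.one.add h_vm)).sub ((h_w.mul he
      (Enc.sqrt3.sub h_sq)).mul he h_X2)).mul he hi_X1) (eq_mul_inv_of hC.X1_eq p_X1)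
  obtain ⟨d0, h_d0, H⟩ := letA_elim (x := C.d0) H (h_X1.sub h_h)
  obtain ⟨q_d0, H⟩ := and_pos he H h_d0
  obtain ⟨d1, h_d1, H⟩ := letA_elim (x := C.d1) H (h_X2.sub h_X1)
  obtain ⟨q_d1, H⟩ := and_pos he H h_d1
  obtain ⟨z2, h_z2, H⟩ := letA_elim (x := C.z2) H (Enc.sqrt3.mul he h_X2)
  obtain ⟨y2, h_y2, H⟩ := letA_elim (x := C.y2) H (h_w.mul he h_z2)
  obtain ⟨z1, h_z1, H⟩ := letA_elim (x := C.z1) H (h_z2.sub (h_sq.mul he h_d1))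
  obtain ⟨y1, h_y1, H⟩ := letA_elim (x := C.y1) H (h_w.mul he h_z1)
  obtain ⟨x1, h_x1, H⟩ := letA_elim (x := C.x1) H (Enc.one.sub (h_v.mul he h_X1))
  obtain ⟨e1, h_e1, H⟩ := letA_elim (x := C.e1) H (h_x1.sub h_y1)
  obtain ⟨q_e1, H⟩ := and_pos he H h_e1
  obtain ⟨x2, h_x2, H⟩ := letA_elim (x := C.x2) H (h_wg.mul he h_X2)
  obtain ⟨lam, h_lam, H⟩ := letA_elim (x := C.lam) H ((h_sg.mul he h_h).mul he h_l)
  obtain ⟨lm, h_lm, H⟩ := letA_elim (x := C.lm) H (h_lam.mul he h_vm)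
  obtain ⟨lv, h_lv, H⟩ := letA_elim (x := C.lv) H (h_lm.mul he (Enc.one.add h_v))
  obtain ⟨mu, h_mu, H⟩ := letA_elim (x := C.mu) H ((((h_v.mul he h_g).sub ((h_wg).smul 3)).add
      ((h_v.add ((h_w).smul 3)).smul 3)).add ((h_wg.mul he h_q).smul 6))
  obtain ⟨X2mu, h_X2mu, H⟩ := letA_elim (x := C.X2mu) H (h_X2.mul he h_mu)
  obtain ⟨wx, h_wx, H⟩ := letA_elim (x := C.wx) H ((h_w.mul he h_X2mu).mul he h_d1)
  obtain ⟨Fu0, h_Fu0, H⟩ := letA_elim (x := C.Fu0) H (((h_d0.mul he h_lv).smul 2).neg)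
  obtain ⟨Fu2, h_Fu2, H⟩ := letA_elim (x := C.Fu2) H (((h_wx.mul he h_q).smul 2).neg)
  obtain ⟨F02, h_F02, H⟩ := letA_elim (x := C.F02) H (((((h_h.mul he (h_y2.sub h_x2)).smul 2).sub
      (h_s.mul he (h_h.add h_x2))).add (((h_w.mul he h_h).mul he (h_x2.add h_X2)).smul 2)).sub
      ((h_s.mul he h_w).mul he (h_h.add h_X2)))
  obtain ⟨F11, h_F11, H⟩ := letA_elim (x := C.F11) H ((((h_y1.mul he h_y1).sub (h_x1.mul he
      (h_x1.add h_s))).add (((h_w.mul he h_X1).mul he h_x1).smul 2)).sub ((h_s.mul he h_w).mul he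
      h_X1))
  obtain ⟨Fu1, h_Fu1, H⟩ := letA_elim (x := C.Fu1) H (h_F02.add ((h_F11).smul 4))
  obtain ⟨hh, h_hh, H⟩ := letA_elim (x := C.hh) H (h_h.mul he h_h)
  obtain ⟨G002, h_G002, H⟩ := letA_elim (x := C.G002) H (((h_hh.mul he (((((h_x2).smul 2).add
      h_s).add h_sg).sub ((h_X2).smul 2))).add (h_h.mul he ((h_s.mul he (h_x2.add h_X2)).add
      ((h_sg.mul he h_y2).smul 2)))).sub ((h_hh.mul he h_y2).smul 6))
  obtain ⟨G011, h_G011, H⟩ := letA_elim (x := C.G011) H (((((h_h.mul he (h_x1.mul he (h_x1.add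
      ((h_X1).smul 2)))).add (h_s.mul he ((h_X1.mul he h_x1).add (h_h.mul he (h_x1.add
      h_X1))))).add (h_sg.mul he ((h_y1.mul he h_y1).add ((h_h.mul he h_y1).smul 2)))).sub
      ((h_h.mul he (h_y1.mul he h_y1)).smul 3)).sub (((h_h.mul he h_X1).mul he h_y1).smul 6))
  obtain ⟨Gu1, h_Gu1, H⟩ := letA_elim (x := C.Gu1) H (h_G002.add ((h_G011).smul 4))
  obtain ⟨xp, h_xp, H⟩ := letA_elim (x := C.xp) H (h_x1.mul he h_x2)
  obtain ⟨yp, h_yp, H⟩ := letA_elim (x := C.yp) H (h_y1.mul he h_y2)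
  obtain ⟨cr, h_cr, H⟩ := letA_elim (x := C.cr) H ((h_X1.mul he h_x2).add (h_X2.mul he h_x1))
  obtain ⟨G012, h_G012, H⟩ := letA_elim (x := C.G012) H (((((h_h.mul he (h_xp.add h_cr)).smul
      2).add (h_s.mul he (h_cr.add (h_h.mul he (((h_x1.add h_X1).add h_x2).add h_X2))))).add
      ((h_sg.mul he (h_yp.add (h_h.mul he (h_y1.add h_y2)))).smul 2)).sub (((h_h.mul he h_yp).add
      (h_h.mul he ((h_X1.mul he h_y2).add (h_X2.mul he h_y1)))).smul 6))
  obtain ⟨G111, h_G111, H⟩ := letA_elim (x := C.G111) H (((h_X1.mul he h_x1).mul he (h_x1.add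
      h_s)).add ((h_y1.mul he h_y1).mul he (h_sg.sub ((h_X1).smul 3))))
  obtain ⟨Gu2, h_Gu2, H⟩ := letA_elim (x := C.Gu2) H (((h_G012).smul 2).add ((h_G111).smul 8))
  obtain ⟨G022, h_G022, H⟩ := letA_elim (x := C.G022) H (((((h_h.mul he (h_x2.mul he (h_x2.add
      ((h_X2).smul 2)))).add (h_s.mul he ((h_X2.mul he h_x2).add (h_h.mul he (h_x2.add
      h_X2))))).add (h_sg.mul he ((h_y2.mul he h_y2).add ((h_h.mul he h_y2).smul 2)))).sub
      ((h_h.mul he (h_y2.mul he h_y2)).smul 3)).sub (((h_h.mul he h_X2).mul he h_y2).smul 6))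
  obtain ⟨G112, h_G112, H⟩ := letA_elim (x := C.G112) H ((((h_x1.mul he ((h_X2.mul he h_x1).add
      ((h_X1.mul he h_x2).smul 2))).add (h_s.mul he ((h_X1.mul he h_x1).add h_cr))).add (h_sg.mul
      he ((h_y1.mul he h_y1).add ((h_yp).smul 2)))).sub (((h_X2.mul he (h_y1.mul he h_y1)).add
      ((h_X1.mul he h_yp).smul 2)).smul 3))
  obtain ⟨Gu3, h_Gu3, H⟩ := letA_elim (x := C.Gu3) H (h_G022.add ((h_G112).smul 4))
  obtain ⟨c1, h_c1, H⟩ := letA_elim (x := C.c1) H (((((h_vm.mul he h_Gu1).sub (h_h.mul he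
      h_Fu1)).add (((h_y1.mul he h_d0).mul he h_lv).smul 4)).add ((h_d1.mul he h_lm).smul 2)).add
      (((h_wsq.mul he h_d1).mul he h_lam).smul 2))
  obtain ⟨q_c1, H⟩ := and_pos he H h_c1
  obtain ⟨c2, h_c2, H⟩ := letA_elim (x := C.c2) H ((h_d0.mul he ((((h_vm.mul he h_Gu2).sub
      (h_h.mul he h_Fu2)).sub ((h_y1.mul he h_Fu1).smul 2)).sub (h_y2.mul he h_Fu0))).sub
      (h_d1.mul he (((h_h.mul he h_Fu1).add ((h_y1.mul he h_Fu0).smul 2)).add (h_wsq.mul he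
      h_Gu1))))
  obtain ⟨q_c2, H⟩ := and_pos he H h_c2
  obtain ⟨c3, h_c3, H⟩ := letA_elim (x := C.c3) H ((h_d0.mul he (((h_vm.mul he h_Gu3).sub
      ((h_y1.mul he h_Fu2).smul 2)).sub (h_y2.mul he h_Fu1))).sub (h_d1.mul he ((((h_h.mul he
      h_Fu2).add ((h_y1.mul he h_Fu1).smul 2)).add (h_y2.mul he h_Fu0)).add (h_wsq.mul he
      h_Gu2))))
  obtain ⟨q_c3, H⟩ := and_pos he H h_c3
  obtain ⟨c4, h_c4, H⟩ := letA_elim (x := C.c4) H (((((((h_d0.mul he h_X2).mul he h_X2mu).mul he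
      (h_wsq.add h_vm)).smul 2).add (((h_z1.mul he h_q).mul he h_wx).smul 4)).sub (h_z2.mul he
      h_Fu1)).sub (h_sq.mul he h_Gu3))
  obtain ⟨q_c4, H⟩ := and_pos he H h_c4
  exact ⟨q_qlo, q_qhi, q_d0, q_d1, q_e1, q_c1, q_c2, q_c3, q_c4⟩

/-- Branch and bound over the box `|2³⁰ w - cw| ≤ dw`, `|2³⁰ l - cl| ≤ dl`, `31/50 ≤ q ≤ 7/10`.
The first argument bounds the number of bisections; the test is only run once at most ten of
them are left, since it fails on larger boxes. -/
def bb : Nat → Int → Nat → Int → Nat → Bool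
  | 0, _, _, _, _ => false
  | n + 1, cw, dw, cl, dl =>
    (Nat.ble n 9 && leaf ⟨cw, Int.ofNat dw, 0, 0, 0⟩ ⟨cl, 0, Int.ofNat dl, 0, 0⟩
        ⟨708669604, 0, 0, 42949674, 0⟩) ||
    (match Nat.ble dl dw with
    | true =>
      forceN (Nat.div (Nat.add dw 1) 2) fun d =>
        forceI (Int.sub cw (Int.ofNat d)) (fun c => bb n c d cl dl) &&
        forceI (Int.add cw (Int.ofNat d)) (fun c => bb n c d cl dl)
    | false =>
      forceN (Nat.div (Nat.add dl 1) 2) fun d =>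
        forceI (Int.sub cl (Int.ofNat d)) (fun c => bb n cw dw c d) &&
        forceI (Int.add cl (Int.ofNat d)) (fun c => bb n cw dw c d))

/-- The box is `0 ≤ w ≤ 26/100`, `2/5 ≤ l ≤ 29/50`, up to rounding. -/
theorem bb_true : bb 18 139586437 139586437 526133494 96636765 = true := by decide +kernel

theorem bb_sound {C : Conf} (hC : C.Valid) (hq : 31 / 50 ≤ C.q ∧ C.q ≤ 7 / 10) :
    ∀ (n : Nat) (cw : Int) (dw : Nat) (cl : Int) (dl : Nat),
      |1073741824 * C.w - cw| ≤ dw → |1073741824 * C.l - cl| ≤ dl → bb n cw dw cl dl = true →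
      0 < C.qlo ∧ 0 < C.qhi ∧ 0 < C.d0 ∧ 0 < C.d1 ∧ 0 < C.e1 ∧ 0 < C.c1 ∧ 0 < C.c2 ∧
        0 < C.c3 ∧ 0 < C.c4 := by
  -- a halving step: the two halves cover the interval
  have split (x : ℝ) (c : Int) (d : Nat) (h : |x - c| ≤ d) :
      |x - (Int.sub c (Int.ofNat (Nat.div (Nat.add d 1) 2)) : Int)| ≤
          (Nat.div (Nat.add d 1) 2 : Nat) ∨
        |x - (Int.add c (Int.ofNat (Nat.div (Nat.add d 1) 2)) : Int)| ≤
          (Nat.div (Nat.add d 1) 2 : Nat) := by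
    have e : Nat.div (Nat.add d 1) 2 = (d + 1) / 2 := rfl
    have e1 (m n : Int) : Int.sub m n = m - n := rfl
    have e2 (m n : Int) : Int.add m n = m + n := rfl
    have e3 : (d : ℝ) ≤ 2 * ((d + 1) / 2 : Nat) := by
      have : d ≤ 2 * ((d + 1) / 2) := by omega
      exact_mod_cast this
    rw [e, e1, e2]
    generalize (d + 1) / 2 = k at *
    simp only [Int.ofNat_eq_natCast, Int.cast_sub, Int.cast_add, Int.cast_natCast]
    rw [abs_le] at h
    rcases le_total x c with hx | hx
    · left; rw [abs_le]; constructor <;> linarith [h.1, h.2]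
    · right; rw [abs_le]; constructor <;> linarith [h.1, h.2]
  intro n
  induction n with
  | zero => intro cw dw cl dl _ _ h; simp [bb] at h
  | succ n ih =>
    intro cw dw cl dl hw hl h
    rw [bb, Bool.or_eq_true, Bool.and_eq_true] at h
    rcases h with ⟨_, h⟩ | h
    · obtain ⟨t1, ht1, hw'⟩ := exists_noise hw
      obtain ⟨t2, ht2, hl'⟩ := exists_noise hl
      have hq' : |1073741824 * C.q - (708669604 : Int)| ≤ (42949674 : Nat) := by
        rw [abs_le]; push_cast; constructor <;> linarith [hq.1, hq.2]
      obtain ⟨t3, ht3, hq'⟩ := exists_noise hq'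
      refine leaf_sound (e := (t1, t2, t3)) ⟨ht1, ht2, ht3⟩ hC ?_ ?_ ?_ h
      · simp only [Enc, hw', Int.ofNat_eq_natCast]; simp
      · simp only [Enc, hl', Int.ofNat_eq_natCast]; simp
      · simp only [Enc, hq']; simp
    · split at h
      · rw [forceN_eq, forceI_eq, forceI_eq, Bool.and_eq_true] at h
        rcases split _ _ _ hw with hs | hs
        · exact ih _ _ _ _ hs hl h.1
        · exact ih _ _ _ _ hs hl h.2
      · rw [forceN_eq, forceI_eq, forceI_eq, Bool.and_eq_true] at h
        rcases split _ _ _ hl with hs | hs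
        · exact ih _ _ _ _ hw hs h.1
        · exact ih _ _ _ _ hw hs h.2

end Aff

/-- All the positivity facts used below, read off from the successful branch and bound. -/
theorem Conf.Valid.good {C : Conf} (hC : C.Valid) (hw : C.w < 51 / 200)
    (hl : 2 / 5 < C.l ∧ C.l < 29 / 50) (hq : 31 / 50 ≤ C.q ∧ C.q ≤ 7 / 10) :
    0 < C.qlo ∧ 0 < C.qhi ∧ 0 < C.d0 ∧ 0 < C.d1 ∧ 0 < C.e1 ∧ 0 < C.c1 ∧ 0 < C.c2 ∧
      0 < C.c3 ∧ 0 < C.c4 := by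
  have := hC.w_pos
  refine Aff.bb_sound hC hq _ _ _ _ _ ?_ ?_ Aff.bb_true <;> rw [abs_le] <;> push_cast <;>
    constructor <;> linarith [hl.1, hl.2]

/-! ### Bernstein form of the barrier polynomial -/

namespace Conf.Valid

variable {C : Conf} (hC : C.Valid)

include hC

theorem x2_eq : 1 - C.v * C.X2 = C.x2 := by
  have h1 := hC.h_eq
  have h2 := hC.sg_eq
  have h3 := hC.g_eq
  have h4 := hC.X2_eq
  have := hC.w_pos
  have := hC.v_pos
  have hp : (C.v + 3 * C.w) * ((1 + C.v) * (1 + C.w)) ≠ 0 := by positivity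
  have hsM : C.sg * ((1 + C.v) * (1 + C.w)) = 2 := by
    linear_combination (1 + C.v) * h2 + 2 * h1
  simp only [Conf.x2, Conf.wg, Conf.s] at *
  rw [← sub_eq_zero]
  refine (mul_eq_zero.1 ?_).resolve_left hp
  linear_combination (-(C.v + C.w * C.g) * (1 + C.v) * (1 + C.w)) * h4
    - (C.v + C.w * C.g) * C.w * hsM - C.w * h3

theorem sg_eq' : C.sg = C.X2 * (3 - C.g) := by
  have h1 := hC.x2_eq
  have h2 := hC.X2_eq
  have h3 := hC.w_pos
  simp only [Conf.x2, Conf.wg, Conf.s] at *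
  refine mul_left_cancel₀ h3.ne' ?_
  linear_combination -h2 - h1

/-- The eigenvalue equation at the sonic point, solved for the slope. -/
theorem vm_eq' : C.vm * (1 + 3 * C.w) = 1 + C.v + 2 * C.v * C.w - C.l := by
  have h1 := hC.vm_eq
  have h2 := hC.v_eq
  have h3 := hC.w_lt
  have h4 := hC.K_upper
  have h5 := hC.K_lower
  have hw := hC.w_pos
  have hv := hC.v_pos
  have hl := hC.l_pos
  have hp : 1 + C.w - C.l ≠ 0 := by
    have : C.l ^ 2 < 1 := by nlinarith [mul_pos hv hw, mul_pos h3 (mul_pos hv hw)]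
    have : C.l < 1 := by nlinarith
    linarith
  refine mul_right_cancel₀ hp ?_
  linear_combination (1 + 3 * C.w) * h1 + h2

theorem y1_eq : C.y1 = C.h - C.vm * C.d0 := by
  have := hC.X1_eq
  simp only [Conf.y1, Conf.z1, Conf.z2, Conf.sq, Conf.wsq, Conf.d0, Conf.d1] at *
  linear_combination this

theorem x1_eq : C.x1 = C.h - C.v * C.d0 := by
  have := hC.h_eq
  simp only [Conf.x1, Conf.d0] at *
  linear_combination -this

omit hC in
theorem x1_eq' (hx2 : 1 - C.v * C.X2 = C.x2) : C.x1 = C.x2 + C.v * C.d1 := by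
  rw [← hx2, Conf.x1, Conf.d1]; ring

omit hC in
theorem y1_eq' : C.y1 = C.y2 - C.wsq * C.d1 := by
  simp only [Conf.y1, Conf.z1, Conf.y2, Conf.z2, Conf.wsq]; ring

/-- The quadratic form `F` along the barrier. The coefficients of `u⁴` and `t⁴` vanish because `F`
vanishes at `P_s` and at `P_⦿`. -/
theorem F_expand (hq : 6 * C.wg * C.q ^ 2 + C.qb * C.q = C.qc) (u t ξ x η : ℝ) (hut : u + t = 1)
    (hξ : ξ = u ^ 2 * C.h + 2 * u * t * C.X1 + t ^ 2 * C.X2)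
    (hx : x = u ^ 2 * C.h + 2 * u * t * C.x1 + t ^ 2 * C.x2)
    (hη : η = u ^ 2 * C.h + 2 * u * t * C.y1 + t ^ 2 * C.y2) :
    η ^ 2 - x * (x + C.s) + 2 * C.w * ξ * x - C.s * C.w * ξ
      = u * t * (u ^ 2 * C.Fu0 + u * t * C.Fu1 + t ^ 2 * C.Fu2) := by
  have hh : C.h = C.sg * (1 + C.w) / 2 := by linarith [hC.sg_eq]
  have hlv : C.lv = C.sg * C.l * C.vm := by
    simp only [Conf.lv, Conf.lm, Conf.lam]
    linear_combination (C.sg * C.l * C.vm) * hC.h_eq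
  have hX1 : C.X1 = C.h + C.d0 := by rw [Conf.d0]; ring
  have hX1' : C.X1 = C.X2 - C.d1 := by rw [Conf.d1]; ring
  have m3 : √3 ^ 2 = 3 := Real.sq_sqrt (by norm_num)
  have F00 : C.h ^ 2 - C.h * (C.h + C.s) + 2 * C.w * C.h * C.h - C.s * C.w * C.h = 0 := by
    rw [hh, Conf.s]; ring
  have F01 : 4 * C.h * C.y1 - 4 * C.h * C.x1 - 2 * C.s * (C.h + C.x1)
      + 4 * C.w * C.h * (C.x1 + C.X1) - 2 * C.s * C.w * (C.h + C.X1) = C.Fu0 := by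
    rw [hC.y1_eq, hC.x1_eq, hX1, Conf.Fu0, hlv, hh, Conf.s]
    linear_combination (-2 * C.d0 * C.sg) * hC.vm_eq
  have F12 : 4 * C.y1 * C.y2 - 4 * C.x1 * C.x2 - 2 * C.s * (C.x1 + C.x2)
      + 4 * C.w * (C.X1 * C.x2 + C.X2 * C.x1) - 2 * C.s * C.w * (C.X1 + C.X2) = C.Fu2 := by
    rw [y1_eq', x1_eq' hC.x2_eq, hX1']
    simp only [Conf.Fu2, Conf.wx, Conf.X2mu, Conf.mu, Conf.x2, Conf.y2, Conf.z2, Conf.wsq, Conf.sq,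
      Conf.s, hC.sg_eq', Conf.wg, Conf.qb, Conf.qc] at hq ⊢
    linear_combination (2 * C.w * C.X2 * C.d1) * hq
      + (4 * C.w ^ 2 * C.X2 ^ 2 - 4 * C.w ^ 2 * C.X2 * C.q * C.d1) * m3
  have F22 : C.y2 ^ 2 - C.x2 * (C.x2 + C.s) + 2 * C.w * C.X2 * C.x2 - C.s * C.w * C.X2 = 0 := by
    simp only [Conf.y2, Conf.z2, Conf.x2, Conf.s, hC.sg_eq', Conf.wg]
    linear_combination (C.w * C.X2) ^ 2 * m3
  have e : η ^ 2 - x * (x + C.s * (u + t) ^ 2) + 2 * C.w * ξ * x - C.s * C.w * ξ * (u + t) ^ 2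
      = u ^ 4 * 0 + u ^ 3 * t * C.Fu0 + u ^ 2 * t ^ 2 * C.Fu1 + u * t ^ 3 * C.Fu2 + t ^ 4 * 0 := by
    rw [hξ, hx, hη, ← F01, ← F12, Conf.Fu1, Conf.F02, Conf.F11]
    linear_combination u ^ 4 * F00 + t ^ 4 * F22
  rw [hut] at e
  linear_combination e

/-- The cubic form `G` along the barrier, which also vanishes at `P_s` and at `P_⦿`. -/
theorem G_expand (u t ξ x η : ℝ) (hut : u + t = 1)
    (hξ : ξ = u ^ 2 * C.h + 2 * u * t * C.X1 + t ^ 2 * C.X2)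
    (hx : x = u ^ 2 * C.h + 2 * u * t * C.x1 + t ^ 2 * C.x2)
    (hη : η = u ^ 2 * C.h + 2 * u * t * C.y1 + t ^ 2 * C.y2) :
    ξ * x * (x + C.s) + η ^ 2 * (C.sg - 3 * ξ)
      = u * t * (u ^ 4 * (-2 * C.d0 * C.lam) + u ^ 3 * t * C.Gu1 + u ^ 2 * t ^ 2 * C.Gu2
        + u * t ^ 3 * C.Gu3 + t ^ 4 * (2 * C.d1 * C.w * C.X2 * C.X2mu)) := by
  have hh : C.h = C.sg * (1 + C.w) / 2 := by linarith [hC.sg_eq]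
  have hX1 : C.X1 = C.h + C.d0 := by rw [Conf.d0]; ring
  have hX1' : C.X1 = C.X2 - C.d1 := by rw [Conf.d1]; ring
  have m3 : √3 ^ 2 = 3 := Real.sq_sqrt (by norm_num)
  have G000 : C.h * C.h * (C.h + C.s) + C.h ^ 2 * (C.sg - 3 * C.h) = 0 := by
    rw [hh, Conf.s]; ring
  have G001 : 2 * C.h * (C.h * C.x1 + C.X1 * C.h + C.h * C.x1)
      + C.s * (2 * C.h * C.x1 + 2 * C.X1 * C.h + 2 * C.h * C.h)
      + C.sg * (4 * C.h * C.y1 + 2 * C.h ^ 2)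
      - 3 * (C.h ^ 2 * (2 * C.X1) + 4 * C.h * C.h * C.y1) = -2 * C.d0 * C.lam := by
    rw [hC.y1_eq, hC.x1_eq, hX1, Conf.lam, hh, Conf.s]
    linear_combination (C.d0 * C.sg ^ 2 * (1 + C.w)) * hC.vm_eq'
  have G122 : 2 * C.x2 * (C.X2 * C.x1 + C.X1 * C.x2 + C.X2 * C.x1)
      + C.s * (2 * C.X2 * C.x1 + 2 * C.X1 * C.x2 + 2 * C.X2 * C.x2)
      + C.sg * (4 * C.y2 * C.y1 + 2 * C.y2 ^ 2)
      - 3 * (C.y2 ^ 2 * (2 * C.X1) + 4 * C.X2 * C.y2 * C.y1) = 2 * C.d1 * C.w * C.X2 * C.X2mu := by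
    rw [y1_eq', x1_eq' hC.x2_eq, hX1']
    simp only [Conf.X2mu, Conf.mu, Conf.x2, Conf.y2, Conf.z2, Conf.wsq, Conf.sq,
      Conf.s, hC.sg_eq', Conf.wg]
    linear_combination (4 * C.w ^ 2 * C.g * C.X2 ^ 2 * C.d1 * C.q - 6 * C.w ^ 2 * C.g * C.X2 ^ 3
      + 6 * C.w ^ 2 * C.X2 ^ 2 * C.d1) * m3
  have G222 : C.X2 * C.x2 * (C.x2 + C.s) + C.y2 ^ 2 * (C.sg - 3 * C.X2) = 0 := by
    simp only [Conf.y2, Conf.z2, Conf.x2, Conf.s, hC.sg_eq', Conf.wg]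
    linear_combination (-C.w ^ 2 * C.X2 ^ 3 * C.g) * m3
  have e : ξ * x * (x + C.s * (u + t) ^ 2) + η ^ 2 * (C.sg * (u + t) ^ 2 - 3 * ξ)
      = u ^ 6 * 0 + u ^ 5 * t * (-2 * C.d0 * C.lam) + u ^ 4 * t ^ 2 * C.Gu1
        + u ^ 3 * t ^ 3 * C.Gu2 + u ^ 2 * t ^ 4 * C.Gu3
        + u * t ^ 5 * (2 * C.d1 * C.w * C.X2 * C.X2mu) + t ^ 6 * 0 := by
    rw [hξ, hx, hη, ← G001, ← G122]
    simp only [Conf.Gu1, Conf.Gu2, Conf.Gu3, Conf.G002, Conf.G011, Conf.G012, Conf.G111,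
      Conf.G022, Conf.G112, Conf.hh, Conf.xp, Conf.yp, Conf.cr]
    linear_combination u ^ 6 * G000 + t ^ 6 * G222
  rw [hut] at e
  linear_combination e

/-- The barrier polynomial in Bernstein form: the end coefficients vanish because the barrier
leaves `P_s` and reaches `P_⦿` along the directions of the vector field. -/
theorem bernstein (hq : 6 * C.wg * C.q ^ 2 + C.qb * C.q = C.qc) (u t ξ x η : ℝ) (hut : u + t = 1)
    (hξ : ξ = u ^ 2 * C.h + 2 * u * t * C.X1 + t ^ 2 * C.X2)
    (hx : x = u ^ 2 * C.h + 2 * u * t * C.x1 + t ^ 2 * C.x2)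
    (hη : η = u ^ 2 * C.h + 2 * u * t * C.y1 + t ^ 2 * C.y2) :
    -(2 * (u * C.d0 + t * C.d1) * η * (η ^ 2 - x * (x + C.s) + 2 * C.w * ξ * x - C.s * C.w * ξ)
      + 2 * (t * C.wsq * C.d1 - u * C.vm * C.d0) *
        (ξ * x * (x + C.s) + η ^ 2 * (C.sg - 3 * ξ)))
      = 2 * (u * t) ^ 2 * (u ^ 3 * (C.d0 * C.c1) + u ^ 2 * t * C.c2 + u * t ^ 2 * C.c3
          + t ^ 3 * (C.w * C.d1 * C.c4)) := by
  have hlv : C.h * C.lv = C.lm := by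
    rw [Conf.lv]; linear_combination C.lm * hC.h_eq
  have hc1 : C.d0 * C.c1 = C.d0 * (C.vm * C.Gu1 - 2 * C.y1 * C.Fu0 - C.h * C.Fu1)
      + 2 * C.d0 * C.d1 * C.lm + 2 * C.wsq * C.d1 * C.d0 * C.lam := by
    rw [Conf.c1, Conf.Fu0]; ring
  have hc4 : C.w * C.d1 * C.c4 = -C.d0 * C.y2 * C.Fu2 - C.d1 * (2 * C.y1 * C.Fu2 + C.y2 * C.Fu1)
      + C.vm * C.d0 * (2 * C.d1 * C.w * C.X2 * C.X2mu) - C.wsq * C.d1 * C.Gu3 := by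
    rw [Conf.c4, Conf.Fu2, Conf.wx, Conf.y1, Conf.y2, Conf.wsq, Conf.z2, Conf.sq]; ring
  rw [hC.F_expand hq u t ξ x η hut hξ hx hη, hC.G_expand u t ξ x η hut hξ hx hη, hc1, hc4,
    Conf.c2, Conf.c3, hη]
  have hm : C.lm = C.lam * C.vm := rfl
  have hF0 : C.h * C.Fu0 = -2 * C.d0 * C.lm := by
    rw [Conf.Fu0]; linear_combination (-2 * C.d0) * hlv
  have hF2 : C.y2 * C.Fu2 = -2 * C.wsq * (C.w * C.X2 * C.X2mu * C.d1) := by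
    rw [Conf.Fu2, Conf.wx, Conf.y2, Conf.wsq, Conf.z2, Conf.sq]; ring
  linear_combination (norm := skip) (-2 * (u * t) * u ^ 4 * (u * C.d0 + t * C.d1)) * hF0
    - 2 * (u * t) * t ^ 5 * C.d1 * hF2
  rw [hm]
  ring

end Conf.Valid

/-- The components of the vector field in the coordinates `(ξ, η)`. -/
theorem field_eq {v w s ξ η : ℝ} (hv : v ≠ 0) (hw : w ≠ 0) {γ r W Z : ℝ} (hγ : γ = 1 + 2 * w / v)
    (hr : r = 1 + s) (hW : W = -(v * ξ) + v / w * η) (hZ : Z = -(v * ξ) - v / w * η) (a b : ℝ) :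
    (-(v * a) - v / w * b) * NW γ r W Z * DZ γ W Z - (-(v * a) + v / w * b) * NZ γ r W Z * DW γ W Z
      = 2 * v ^ 2 / w * -(a * η * (η ^ 2 - (1 - v * ξ) * (1 - v * ξ + s)
          + 2 * w * ξ * (1 - v * ξ) - s * w * ξ)
        + b * (ξ * (1 - v * ξ) * (1 - v * ξ + s) + η ^ 2 * (s / w - 3 * ξ))) := by
  subst hγ hr hW hZ
  simp only [NW, NZ, DW, DZ, alphaF]
  field_simp
  ring

/-! ### Rational parametrisation -/

/-- In terms of `a = √α`, the bound `r < r*(γ)` gives `(r - 1)(1 + a)² < 2a²`. -/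
theorem rStar_bound {γ r : ℝ} (hγ : 1 < γ) (hr2 : r < rStar γ) :
    (r - 1) * (1 + √((γ - 1) / 2)) ^ 2 < 2 * ((γ - 1) / 2) := by
  have hα : 0 < (γ - 1) / 2 := by linarith
  obtain ⟨a, ha, rfl⟩ : ∃ a : ℝ, 0 < a ∧ γ = 1 + 2 * a ^ 2 :=
    ⟨√((γ - 1) / 2), Real.sqrt_pos.2 hα, by rw [Real.sq_sqrt hα.le]; ring⟩
  have e : (1 + 2 * a ^ 2 - 1) / 2 = a ^ 2 := by ring
  rw [e, Real.sqrt_sq ha.le]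
  rw [rStar] at hr2
  split_ifs at hr2 with h
  · have e1 : 2 / (1 + 2 * a ^ 2 - 1) = (1 / a) ^ 2 := by field_simp; ring
    rw [e1, Real.sqrt_sq (by positivity)] at hr2
    have e2 : 2 / (1 / a + 1) ^ 2 = 2 * a ^ 2 / (1 + a) ^ 2 := by field_simp
    rw [e2] at hr2
    have h3 : r - 1 < 2 * a ^ 2 / (1 + a) ^ 2 := by linarith
    rwa [lt_div_iff₀ (by positivity)] at h3
  · have h3 : √3 ^ 2 = 3 := Real.sq_sqrt (by norm_num)
    have h1 : 1 < √3 := Real.lt_sqrt_of_sq_lt (by norm_num)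
    have hD : 0 < 2 + √3 * (1 + 2 * a ^ 2 - 1) := by
      have : 2 + √3 * (1 + 2 * a ^ 2 - 1) = 2 + 2 * √3 * a ^ 2 := by ring
      rw [this]; positivity
    rw [lt_div_iff₀ hD] at hr2
    have h4 : (r - 1) * (1 + √3 * a ^ 2) < (3 - √3) * a ^ 2 := by linarith
    -- `2(1 + √3 a²) - (3 - √3)(1 + a)² = (√3 - 1)(1 - √3 a)²`
    have h5 : (3 - √3) * (1 + a) ^ 2 ≤ 2 * (1 + √3 * a ^ 2) := by
      have : 0 ≤ (√3 - 1) * (1 - √3 * a) ^ 2 := by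
        have : 0 ≤ √3 - 1 := by linarith
        positivity
      have e3 : 2 * (1 + √3 * a ^ 2) - (3 - √3) * (1 + a) ^ 2 = (√3 - 1) * (1 - √3 * a) ^ 2 := by
        linear_combination (2 * a - a ^ 2 * (√3 - 1)) * h3
      linarith
    have hp : 0 < 1 + √3 * a ^ 2 := by positivity
    refine lt_of_mul_lt_mul_right ?_ hp.le
    calc (r - 1) * (1 + a) ^ 2 * (1 + √3 * a ^ 2)
        = (r - 1) * (1 + √3 * a ^ 2) * (1 + a) ^ 2 := by ring
      _ < (3 - √3) * a ^ 2 * (1 + a) ^ 2 := by gcongr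
      _ = (3 - √3) * (1 + a) ^ 2 * a ^ 2 := by ring
      _ ≤ 2 * (1 + √3 * a ^ 2) * a ^ 2 := by gcongr
      _ = _ := by ring

/-- Rational parametrisation of the sonic point: the square root `ℛ₁` is rational in `v`, `w`. -/
theorem exists_vw {γ r : ℝ} (hγ : 1 < γ) (hr1 : 1 < r) (hr2 : r < rStar γ) :
    ∃ v w : ℝ, 0 < v ∧ 0 < w ∧ v * w ≤ 1 ∧ γ = 1 + 2 * w / v ∧
      r = 1 + 2 * w / ((1 + v) * (1 + w)) ∧
      R1 γ r = 4 * w * (1 - v * w) / (v * ((1 + v) * (1 + w))) := by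
  have hb := rStar_bound hγ hr2
  have hα : 0 < (γ - 1) / 2 := by linarith
  obtain ⟨a, ha, hγa⟩ : ∃ a : ℝ, 0 < a ∧ γ = 1 + 2 * a ^ 2 :=
    ⟨√((γ - 1) / 2), Real.sqrt_pos.2 hα, by rw [Real.sq_sqrt hα.le]; ring⟩
  obtain ⟨s, hs, rfl⟩ : ∃ s : ℝ, 0 < s ∧ r = 1 + s := ⟨r - 1, by linarith, by ring⟩
  subst hγa
  have e : (1 + 2 * a ^ 2 - 1) / 2 = a ^ 2 := by ring
  rw [e, Real.sqrt_sq ha.le] at hb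
  have hb' : s * (1 + a) ^ 2 < 2 * a ^ 2 := by linarith
  clear hb hr2 hr1 hα hγ e
  set ρ := (2 * a ^ 2 - (1 + a) ^ 2 * s) * (2 * a ^ 2 - (1 - a) ^ 2 * s) with hρ
  have hρ0 : 0 ≤ ρ := by
    have : 0 ≤ 2 * a ^ 2 - (1 + a) ^ 2 * s := by linarith
    have : 0 ≤ 2 * a ^ 2 - (1 - a) ^ 2 * s := by nlinarith [mul_pos ha hs]
    positivity
  set T := √ρ with hT
  have hT0 : 0 ≤ T := Real.sqrt_nonneg _
  have hT2 : T ^ 2 = ρ := Real.sq_sqrt hρ0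
  have hR1 : R1 (1 + 2 * a ^ 2) (1 + s) = 2 * T := by
    rw [R1, hT]
    have : (1 + 2 * a ^ 2) ^ 2 * (1 + s - 3) ^ 2
        - 2 * (1 + 2 * a ^ 2) * (3 * (1 + s) ^ 2 - 6 * (1 + s) + 7) + 9 * (1 + s) ^ 2
        - 14 * (1 + s) + 9 = 2 ^ 2 * ρ := by rw [hρ]; ring
    rw [this, Real.sqrt_mul (by norm_num), Real.sqrt_sq (by norm_num)]
  have has : s < 2 * a ^ 2 := by nlinarith [mul_pos ha hs]
  set h := (T + 2 * a ^ 2 + (a ^ 2 - 1) * s) / (4 * a ^ 2) with hh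
  have hTh : T = 4 * a ^ 2 * h - 2 * a ^ 2 - (a ^ 2 - 1) * s := by rw [hh]; field_simp; ring
  have hh0 : 0 < h := by
    rw [hh]; apply div_pos _ (by positivity)
    nlinarith [mul_pos (pow_pos ha 2) hs]
  have hN : 0 < 2 * a ^ 2 - (a ^ 2 - 1) * s := by nlinarith [mul_pos ha hs, hs, ha]
  have hTN : T < 2 * a ^ 2 - (a ^ 2 - 1) * s := by
    refine lt_of_pow_lt_pow_left₀ 2 hN.le ?_
    rw [hT2, hρ]; nlinarith [mul_pos (pow_pos ha 2) hs]
  have hh1 : h < 1 := by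
    rw [hh, div_lt_one (by positivity)]; nlinarith
  have hquad : s * (h + a ^ 2 * (1 - h)) = 2 * a ^ 2 * ((1 - h) * h) := by
    rw [hTh, hρ] at hT2
    have : a ^ 2 * (s * (h + a ^ 2 * (1 - h)) - 2 * a ^ 2 * ((1 - h) * h)) = 0 := by
      linear_combination hT2 / 8
    have := (mul_eq_zero.1 this).resolve_left (by positivity)
    linarith
  set v := 1 / h - 1 with hv
  have hvh : 1 + v = 1 / h := by rw [hv]; ring
  have hv0 : 0 < v := by rw [hv, sub_pos, lt_div_iff₀ hh0]; linarith
  have hM : 0 < (1 + v) * (1 + a ^ 2 * v) := by positivity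
  have hvh' : v * h = 1 - h := by rw [hv]; field_simp
  have hsM : s * ((1 + v) * (1 + a ^ 2 * v)) = 2 * (a ^ 2 * v) := by
    have : h ^ 2 * (s * ((1 + v) * (1 + a ^ 2 * v)) - 2 * (a ^ 2 * v)) = 0 := by
      linear_combination hquad + (s * (h + a ^ 2 * v * h) + s * a ^ 2 - 2 * a ^ 2 * h) * hvh'
    have := (mul_eq_zero.1 this).resolve_left (by positivity)
    linarith
  have hTM : T * ((1 + v) * (1 + a ^ 2 * v)) = 2 * a ^ 2 * (1 - v * (a ^ 2 * v)) := by
    rw [hTh]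
    linear_combination (-(a ^ 2 - 1)) * hsM + 4 * a ^ 2 * (1 + a ^ 2 * v) * hvh'
  refine ⟨v, a ^ 2 * v, hv0, by positivity, ?_, ?_, ?_, ?_⟩
  · have : 0 ≤ 2 * a ^ 2 * (1 - v * (a ^ 2 * v)) := by rw [← hTM]; positivity
    have := nonneg_of_mul_nonneg_right this (by positivity : 0 < 2 * a ^ 2)
    linarith
  · field_simp
  · rw [← hsM]; field_simp
  · rw [hR1, eq_div_iff (by positivity)]
    linear_combination 2 * v * hTM

section Param

variable {γ r v w : ℝ} (hv : 0 < v) (hw : 0 < w) (hγ : γ = 1 + 2 * w / v)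
  (hr : r = 1 + 2 * w / ((1 + v) * (1 + w)))
  (hR : R1 γ r = 4 * w * (1 - v * w) / (v * ((1 + v) * (1 + w))))

include hv hw hγ hr hR

theorem W₀_eq : W₀ γ r = v * (1 - w) / (w * (1 + v)) := by
  rw [W₀, hR, hγ, hr]; field_simp; ring

theorem Z₀_eq : Z₀ γ r = -(v * (1 + w)) / (w * (1 + v)) := by
  rw [Z₀, hR, hγ, hr]; field_simp; ring

theorem W₁_eq : W₁ γ r = -(v * (1 - 3 * w ^ 2)) / (w * ((1 + v) * (1 + w))) := by
  rw [W₁, hR, hγ, hr]; field_simp; ring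

theorem R2_eq : R2 γ r = 2 / ((1 + v) * (1 + w)) *
    √((2 + v + w + 2 * v * w) ^ 2 - 4 * ((1 - 3 * w ^ 2) * (1 - v * w))) := by
  have e : γ * ((76 - 27 * γ) * γ - 71) - (3 * γ - 5) * ((γ - 5) * γ + 2) * r ^ 2
      + (γ * (γ * (18 * γ - 52) + 50) - 8) * r
      + R1 γ r * (9 * (γ - 2) * γ + ((2 - 3 * γ) * γ + 5) * r + 5) + 18
      = (4 * w / (v * ((1 + v) * (1 + w)))) ^ 2 *
        ((2 + v + w + 2 * v * w) ^ 2 - 4 * ((1 - 3 * w ^ 2) * (1 - v * w))) := by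
    rw [hR, hγ, hr]; field_simp; ring
  rw [R2, e, Real.sqrt_mul (by positivity), Real.sqrt_sq (by positivity), hγ]
  field_simp; ring

/-- The bounds on the eigenvalue ratio: the smaller eigenvalue `ℓ` solves
`ℓ² - T ℓ + K = 0` and lies in `(T / 5, T / 4)`. -/
theorem exists_l (hk1 : 3 < kFun γ r) (hk2 : kFun γ r < 4) :
    ∃ l : ℝ, R2 γ r = 2 * (2 + v + w + 2 * v * w - 2 * l) / ((1 + v) * (1 + w)) ∧
      l ^ 2 - (2 + v + w + 2 * v * w) * l + (1 - 3 * w ^ 2) * (1 - v * w) = 0 ∧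
      4 * l < 2 + v + w + 2 * v * w ∧ 2 + v + w + 2 * v * w < 5 * l := by
  have hR2 := R2_eq hv hw hγ hr hR
  have hE : -4 + (1 + γ) * (r - 1) / (γ - 1)
      = -(2 * (2 + v + w + 2 * v * w)) / ((1 + v) * (1 + w)) := by
    rw [hγ, hr]; field_simp; ring
  have hT : 0 < 2 + v + w + 2 * v * w := by positivity
  rw [kFun, hE, hR2] at hk1 hk2
  set T := 2 + v + w + 2 * v * w
  set Δ := T ^ 2 - 4 * ((1 - 3 * w ^ 2) * (1 - v * w)) with hΔ
  set D := √Δ with hD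
  have hD0 : 0 ≤ D := Real.sqrt_nonneg _
  have hM : 0 < (1 + v) * (1 + w) := by positivity
  have hk : (-(2 * T) / ((1 + v) * (1 + w)) - 2 / ((1 + v) * (1 + w)) * D) /
      (-(2 * T) / ((1 + v) * (1 + w)) + 2 / ((1 + v) * (1 + w)) * D) = (T + D) / (T - D) := by
    have e1 : -(2 * T) / ((1 + v) * (1 + w)) - 2 / ((1 + v) * (1 + w)) * D
      = (-2 / ((1 + v) * (1 + w))) * (T + D) := by ring
    have e2 : -(2 * T) / ((1 + v) * (1 + w)) + 2 / ((1 + v) * (1 + w)) * D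
      = (-2 / ((1 + v) * (1 + w))) * (T - D) := by ring
    rw [e1, e2, mul_div_mul_left _ _ (div_ne_zero (by norm_num) hM.ne')]
  rw [hk] at hk1 hk2
  have hTD : 0 < T - D := by
    by_contra hneg
    have := div_nonpos_of_nonneg_of_nonpos (by positivity : 0 ≤ T + D) (not_lt.1 hneg)
    linarith
  rw [lt_div_iff₀ hTD] at hk1
  rw [div_lt_iff₀ hTD] at hk2
  have hDpos : 0 < D := by linarith
  have hD2 : D ^ 2 = Δ := Real.sq_sqrt (Real.sqrt_pos.1 hDpos).le
  refine ⟨(T - D) / 2, ?_, ?_, by linarith, by linarith⟩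
  · rw [hR2]; field_simp; ring
  · linear_combination hD2 / 4 + hΔ / 4

/-- The slope of the eigendirection at the sonic point. -/
theorem Z₁_eq {l : ℝ}
    (hR2 : R2 γ r = 2 * (2 + v + w + 2 * v * w - 2 * l) / ((1 + v) * (1 + w))) :
    Z₁ γ r = v * ((v - w) * (1 - 3 * w ^ 2) + 2 * l * w) /
      ((1 + v) * (1 + w) * (w * (v + w))) := by
  have e : γ + 1 = 2 * (v + w) / v := by rw [hγ]; field_simp; ring
  rw [Z₁, e, hR2, hR, hγ, hr]; field_simp; ring

end Param

section Tangent

variable {γ r v w g q : ℝ} (hv : 0 < v) (hw : 0 < w) (hγ : γ = 1 + 2 * w / v)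
  (hr : r = 1 + 2 * w / ((1 + v) * (1 + w)))
  (hg : g * (1 + v + 3 * w + v * w) = 3 + v + 3 * w + 3 * (v * w))

include hv hw hγ hr hg

/-- The quadratic equation for the slope parameter `q`, with `√disc` the root in `Θ`. -/
theorem Theta_eq (hq : 6 * w * g * q ^ 2 + (v * g - 3 * w * g + 3 * v + 3 * w) * q
      = (v + 3 * w) * g + v - 3 * w)
    (hq0 : 0 ≤ 12 * w * g * q + (v * g - 3 * w * g + 3 * v + 3 * w)) :
    Theta γ r = -(4 * w * (1 + v + 3 * w + v * w) / (v ^ 2 * ((1 + v) * (1 + w))) *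
        (12 * w * g * q + (v * g - 3 * w * g + 3 * v + 3 * w)))
      + √3 * (3 * γ ^ 2 * (r - 5) + 2 * γ * (r + 7) - (r + 3)) := by
  have e : 2 * (53 - 3 * γ * (45 * γ ^ 3 - 110 * γ + 88)) * r + (27 * γ ^ 2 - 30 * γ + 7) ^ 2
        + (3 * γ * (γ * (3 * γ * (γ + 20) - 94) + 28) + 25) * r ^ 2
      = (4 * w * (1 + v + 3 * w + v * w) / (v ^ 2 * ((1 + v) * (1 + w))) *
        (12 * w * g * q + (v * g - 3 * w * g + 3 * v + 3 * w))) ^ 2 := by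
    have e1 : (12 * w * g * q + (v * g - 3 * w * g + 3 * v + 3 * w)) ^ 2
        = (v * g - 3 * w * g + 3 * v + 3 * w) ^ 2
          + 24 * w * g * ((v + 3 * w) * g + v - 3 * w) := by
      linear_combination 24 * w * g * hq
    have hg' : g = (3 + v + 3 * w + 3 * (v * w)) / (1 + v + 3 * w + v * w) := by
      rw [← hg]; field_simp
    rw [mul_pow, e1, hγ, hr, hg']; field_simp; ring
  rw [Theta, e, Real.sqrt_sq (by positivity)]
  ring

/-- The direction `(X₁, Y₁)` is parallel to `(1 - √3 q, 1 + √3 q)`. -/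
theorem direction_eq (hq : 6 * w * g * q ^ 2 + (v * g - 3 * w * g + 3 * v + 3 * w) * q
      = (v + 3 * w) * g + v - 3 * w)
    (hq0 : 0 ≤ 12 * w * g * q + (v * g - 3 * w * g + 3 * v + 3 * w)) :
    X₁ γ r * (1 + √3 * q) = Y₁ γ r * (1 - √3 * q) := by
  rw [X₁, Y₁, Theta_eq hv hw hγ hr hg hq hq0]
  have h3 : √3 ^ 2 = 3 := Real.sq_sqrt (by norm_num)
  have hg' : g = (3 + v + 3 * w + 3 * (v * w)) / (1 + v + 3 * w + v * w) := by
    rw [← hg]; field_simp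
  set k := 4 * w * (1 + v + 3 * w + v * w) / (v ^ 2 * ((1 + v) * (1 + w))) with hk
  set B := k * (12 * w * g * q + (v * g - 3 * w * g + 3 * v + 3 * w)) with hB
  set Q := 3 * γ ^ 2 * (r ^ 2 - 3) - 6 * γ * (r - 2) * r + 6 * γ - r * (r + 4) - 1 with hQ
  set A := 3 * γ ^ 2 * (r - 5) + 2 * γ * (r + 7) - (r + 3) with hA
  set L := 3 * γ * r - (3 * γ - 1) - r with hL
  set N := -3 * γ * r + 3 * (3 * γ - 1) - 3 * r with hN
  -- separate the rational part from the multiple of `√3`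
  have E0 : -2 * Q * (3 * γ - 9 + 12 * q) - (3 * A * L - B * N) + 3 * q * (A * N - B * L) = 0 := by
    rw [hg'] at hq
    linear_combination (norm := skip) (-6 * k * L) * hq
    rw [hQ, hA, hL, hN, hB, hk, hγ, hr, hg']
    field_simp
    ring
  have E1 : -2 * Q * (4 + (3 * γ - 9) * q) - (A * N - B * L) + q * (3 * A * L - B * N) = 0 := by
    rw [hg'] at hq
    linear_combination (norm := skip) (-2 * k * N) * hq
    rw [hQ, hA, hL, hN, hB, hk, hγ, hr, hg']
    field_simp
    ring
  linear_combination E0 + √3 * E1 + (-8 * Q * q - A * L + q * (A * N - B * L) + √3 * q * A * L) * h3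

end Tangent

/-! ### The parameter region -/

/-- A quadratic with a sign change on `[31/50, 7/10]` has its larger root there. -/
theorem exists_root {a b c : ℝ} (ha : 0 < a) (h1 : a * (31 / 50) ^ 2 + b * (31 / 50) < c)
    (h2 : c < a * (7 / 10) ^ 2 + b * (7 / 10)) (h3 : 0 < 2 * a * (7 / 10) + b) :
    ∃ q : ℝ, (31 / 50 ≤ q ∧ q ≤ 7 / 10) ∧ a * q ^ 2 + b * q = c ∧ 0 ≤ 2 * a * q + b := by
  have hlow : (b + 2 * a * (31 / 50)) ^ 2 ≤ b ^ 2 + 4 * a * c := by nlinarith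
  have hΔ : 0 ≤ b ^ 2 + 4 * a * c := (sq_nonneg _).trans hlow
  have hup : b ^ 2 + 4 * a * c ≤ (2 * a * (7 / 10) + b) ^ 2 := by nlinarith
  have e1 : b + 2 * a * (31 / 50) ≤ √(b ^ 2 + 4 * a * c) := Real.le_sqrt_of_sq_le hlow
  have e2 : √(b ^ 2 + 4 * a * c) ≤ 2 * a * (7 / 10) + b := by
    rw [Real.sqrt_le_left h3.le]; exact hup
  have e3 := Real.sq_sqrt hΔ
  set D := √(b ^ 2 + 4 * a * c)
  have e4 : 2 * a * ((-b + D) / (2 * a)) = -b + D := by field_simp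
  refine ⟨(-b + D) / (2 * a), ⟨?_, ?_⟩, ?_, ?_⟩
  · rw [le_div_iff₀ (by positivity)]; linarith
  · rw [div_le_iff₀ (by positivity)]; linarith
  · field_simp; linear_combination e3
  · rw [e4]; linarith [Real.sqrt_nonneg (b ^ 2 + 4 * a * c)]

/-- The configuration determined by the parameters `v`, `w`, `ℓ`, `q`. -/
def mkConf (v w l q : ℝ) : Conf where
  w := w
  l := l
  q := q
  v := v
  h := 1 / (1 + v)
  sg := 2 / ((1 + v) * (1 + w))
  vm := (v + w + v * (w - w * w)) / (1 + w - l)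
  g := (3 + v + 3 * w + 3 * (v * w)) / (1 + v + 3 * w + v * w)
  X1 := (1 / (1 + v) * (1 + (v + w + v * (w - w * w)) / (1 + w - l))
      - w * (√3 - √3 * q) * ((1 + w * (2 / ((1 + v) * (1 + w)))) / (v + 3 * w))) /
    ((v + w + v * (w - w * w)) / (1 + w - l) + w * (√3 * q))
  X2 := (1 + w * (2 / ((1 + v) * (1 + w)))) / (v + 3 * w)

/-- The constraints on `v`, `w`, `ℓ` coming from `3 < k < 4`. -/
structure Region (v w l : ℝ) : Prop where
  v_pos : 0 < v
  w_pos : 0 < w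
  quad : l ^ 2 - (2 + v + w + 2 * v * w) * l + (1 - 3 * w ^ 2) * (1 - v * w) = 0
  lt_T : 4 * l < 2 + v + w + 2 * v * w
  T_lt : 2 + v + w + 2 * v * w < 5 * l
  vw_le : v * w ≤ 1

namespace Region

variable {v w l : ℝ} (H : Region v w l)

include H

theorem l_gt : 2 / 5 < l := by
  nlinarith [H.T_lt, H.v_pos, H.w_pos, mul_pos H.v_pos H.w_pos]

theorem K_gt : 3 * l ^ 2 < (1 - 3 * w ^ 2) * (1 - v * w) := by
  nlinarith [H.quad, H.lt_T, H.l_gt]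

theorem K_lt : (1 - 3 * w ^ 2) * (1 - v * w) < 4 * l ^ 2 := by
  nlinarith [H.quad, H.T_lt, H.l_gt]

theorem w_sq : 0 < 1 - 3 * w ^ 2 :=
  pos_of_mul_pos_left ((by positivity : 0 ≤ 3 * l ^ 2).trans_lt H.K_gt) (by linarith [H.vw_le])

theorem l_lt : l < 29 / 50 := by
  have h1 := H.w_sq
  have h2 : (1 - 3 * w ^ 2) * (1 - v * w) ≤ 1 := by
    have := mul_pos H.v_pos H.w_pos
    nlinarith [mul_pos h1 this]
  nlinarith [H.K_gt, H.l_gt]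

theorem w_lt : w < 51 / 200 := by
  have hv := H.v_pos
  have hw := H.w_pos
  have hvw := mul_pos hv hw
  have hl := H.l_gt
  have h1 := H.w_sq
  have h2 : (1 - 3 * w ^ 2) * (1 - v * w) ≤ 1 - 3 * w ^ 2 := by nlinarith [mul_pos h1 hvw]
  have h3 := H.quad
  have h4 := H.lt_T
  have h5 := H.T_lt
  set T := 2 + v + w + 2 * v * w
  have hT : 2 + w < T := by simp only [T]; linarith
  -- `K = ℓ (T - ℓ) ≥ 4 T² / 25` since `T / 5 < ℓ < T / 4`
  have h6 : 4 / 25 * T ^ 2 ≤ (1 - 3 * w ^ 2) * (1 - v * w) := by nlinarith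
  have h7 : (2 + w) ^ 2 ≤ T ^ 2 := by gcongr
  nlinarith

theorem valid {q : ℝ} (hq : 0 < q) : (mkConf v w l q).Valid := by
  have hv := H.v_pos
  have hw := H.w_pos
  have hl := H.l_gt
  have hl' := H.l_lt
  have h1 : 0 < 1 + w - l := by linarith
  have hww : w * w < w := by nlinarith [H.w_lt]
  have h2 : 0 < v + w + v * (w - w * w) := by
    have := mul_pos hv (sub_pos.2 hww)
    positivity
  have h3 : 0 < (v + w + v * (w - w * w)) / (1 + w - l) + w * (√3 * q) := by positivity
  constructor
  · exact hw
  · exact hv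
  · simp only [mkConf]; linarith
  · simp only [mkConf]; linarith [H.w_sq]
  · simp only [mkConf]; linarith [H.K_gt]
  · simp only [mkConf]; linarith [H.K_lt]
  · simp only [mkConf]; linear_combination -H.quad
  · simp only [mkConf]; field_simp
  · simp only [mkConf]; field_simp
  · simp only [mkConf]; field_simp
  · simp only [mkConf]; field_simp
  · simp only [mkConf, Conf.s]; field_simp
  · simp only [mkConf, Conf.wsq, Conf.sq]; rw [div_mul_cancel₀ _ h3.ne']

theorem g_gt (q : ℝ) : 9 / 5 < (mkConf v w l q).g := by
  have hv := H.v_pos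
  have hw := H.w_pos
  simp only [mkConf]
  rw [lt_div_iff₀ (by positivity)]
  nlinarith [mul_pos hv hw, H.T_lt, H.l_lt, H.w_lt]

/-- The slope parameter `q` at `P_⦿` exists and lies in `[31/50, 7/10]`. -/
theorem exists_q : ∃ q : ℝ, (31 / 50 ≤ q ∧ q ≤ 7 / 10) ∧
    6 * (mkConf v w l q).wg * q ^ 2 + (mkConf v w l q).qb * q = (mkConf v w l q).qc ∧
    0 ≤ 12 * (mkConf v w l q).wg * q + (mkConf v w l q).qb := by
  have hgood := (H.valid (q := 66 / 100) (by norm_num)).good H.w_lt ⟨H.l_gt, H.l_lt⟩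
    ⟨by norm_num [mkConf], by norm_num [mkConf]⟩
  obtain ⟨hlo, hhi, -⟩ := hgood
  have hg := H.g_gt (66 / 100)
  have hv := H.v_pos
  have hw := H.w_pos
  set C := mkConf v w l (66 / 100) with hC
  have hwg : 0 < C.wg := mul_pos hw (by linarith)
  simp only [Conf.qlo, Conf.qhi] at hlo hhi
  have hb : 0 < 2 * (6 * C.wg) * (7 / 10) + C.qb := by
    have e : 2 * (6 * C.wg) * (7 / 10) + C.qb = v * C.g + 27 / 5 * (w * C.g) + 3 * (v + w) := by
      simp only [Conf.qb, Conf.wg, hC, mkConf]; ring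
    have hg0 : 0 < C.g := by linarith
    rw [e]; positivity
  obtain ⟨q, h1, h2, h3⟩ := exists_root (a := 6 * C.wg) (b := C.qb) (c := C.qc) (by positivity)
    (by linarith) (by linarith) hb
  refine ⟨q, h1, h2, ?_⟩
  change 0 ≤ 12 * C.wg * q + C.qb
  linarith

end Region

/-! ### The barrier as a Bézier curve -/

/-- `X₁` is a multiple of `3 - g²`, and `g > 9/5 > √3`. -/
theorem X₁_ne {γ r v w g : ℝ} (hv : 0 < v) (hw : 0 < w) (hγ : γ = 1 + 2 * w / v)
    (hr : r = 1 + 2 * w / ((1 + v) * (1 + w)))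
    (hg : g * (1 + v + 3 * w + v * w) = 3 + v + 3 * w + 3 * (v * w)) (hg1 : 9 / 5 < g) :
    X₁ γ r ≠ 0 := by
  have hγ1 : 1 < γ := by
    rw [hγ]; have : 0 < 2 * w / v := by positivity
    linarith
  have hQ : 3 * γ ^ 2 * (r ^ 2 - 3) - 6 * γ * (r - 2) * r + 6 * γ - r * (r + 4) - 1
      = (2 * r * w / v) ^ 2 * (3 - g ^ 2) := by
    have hg' : g = (3 + v + 3 * w + 3 * (v * w)) / (1 + v + 3 * w + v * w) := by
      rw [← hg]; field_simp
    rw [hγ, hr, hg']; field_simp; ring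
  have hr0 : 0 < r := by rw [hr]; positivity
  have hm0 : 17 / 10 < √3 := Real.lt_sqrt_of_sq_lt (by norm_num)
  have hg2 : 3 < g ^ 2 := by nlinarith
  rw [X₁, hQ]
  refine mul_ne_zero (mul_ne_zero (by norm_num) (by linarith)) (mul_ne_zero (by positivity) ?_)
  exact (by linarith : 3 - g ^ 2 < 0).ne

/-- The control points of the barrier in the coordinates `(ξ, η)`. The middle one,
`(W₀ + B₁ W₁ / 2, Z₀ + B₁ Z₁ / 2)`, is the intersection of the tangent lines at the two ends. -/
theorem bfl_coords {γ r v w l q : ℝ} (H : Region v w l) (hγ : γ = 1 + 2 * w / v)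
    (hr : r = 1 + 2 * w / ((1 + v) * (1 + w)))
    (hR : R1 γ r = 4 * w * (1 - v * w) / (v * ((1 + v) * (1 + w))))
    (hR2 : R2 γ r = 2 * (2 + v + w + 2 * v * w - 2 * l) / ((1 + v) * (1 + w)))
    (C : Conf) (hCdef : C = mkConf v w l q) (hC : C.Valid)
    (hq : 31 / 50 ≤ q) (hquad : 6 * C.wg * q ^ 2 + C.qb * q = C.qc)
    (hq0 : 0 ≤ 12 * C.wg * q + C.qb) :
    W₀ γ r = -(v * C.h) + v / w * C.h ∧ Z₀ γ r = -(v * C.h) - v / w * C.h ∧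
    X₀ γ r = -(v * C.X2) + v / w * C.y2 ∧ Y₀ γ r = -(v * C.X2) - v / w * C.y2 ∧
    W₀ γ r + B1 γ r * W₁ γ r / 2 = -(v * C.X1) + v / w * C.y1 ∧
    Z₀ γ r + B1 γ r * Z₁ γ r / 2 = -(v * C.X1) - v / w * C.y1 := by
  have hv := H.v_pos
  have hw := H.w_pos
  have hκ := H.w_sq
  have hCw : C.w = w := by rw [hCdef]; rfl
  have hCv : C.v = v := by rw [hCdef]; rfl
  have hCl : C.l = l := by rw [hCdef]; rfl
  have hCq : C.q = q := by rw [hCdef]; rfl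
  have hCh : C.h = 1 / (1 + v) := by rw [hCdef]; rfl
  have hX2 : C.X2 = r / (v + 3 * w) := by
    rw [hCdef, hr]; simp only [mkConf]; field_simp
  have hg1 : 9 / 5 < C.g := by rw [hCdef]; exact H.g_gt q
  have hgeq := hC.g_eq
  have hvm1 := hC.vm_eq
  have hvm2 := hC.vm_eq'
  have hX1eq := hC.X1_eq
  have hvm0 : 0 < C.vm := by
    rw [hCdef]; simp only [mkConf]
    have h1 : 0 < 1 + w - l := by linarith [H.l_lt]
    have h2 : 0 < w - w * w := by nlinarith [H.w_lt]
    positivity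
  have hW0 : W₀ γ r = -(v * C.h) + v / w * C.h := by
    rw [W₀_eq hv hw hγ hr hR, hCh]; field_simp; ring
  have hZ0 : Z₀ γ r = -(v * C.h) - v / w * C.h := by
    rw [Z₀_eq hv hw hγ hr hR, hCh]; field_simp; ring
  have h3γ : 3 * γ - 1 = 2 * (v + 3 * w) / v := by rw [hγ]; field_simp; ring
  have hX0 : X₀ γ r = -(v * C.X2) + v / w * C.y2 := by
    rw [X₀, h3γ, Conf.y2, Conf.z2, hX2, hCw]; field_simp; ring
  have hY0 : Y₀ γ r = -(v * C.X2) - v / w * C.y2 := by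
    rw [Y₀, h3γ, Conf.y2, Conf.z2, hX2, hCw]; field_simp; ring
  have hW1 := W₁_eq hv hw hγ hr hR
  have hZ1 := Z₁_eq hv hw hγ hr hR hR2
  rw [hCw, hCv] at hgeq
  rw [hCw, hCv, hCl] at hvm1 hvm2
  -- the direction `(W₁, Z₁)`
  obtain ⟨c, hc0, hcW, hcZ⟩ : ∃ c : ℝ, c ≠ 0 ∧ W₁ γ r = c * (w + C.vm) ∧
      Z₁ γ r = c * (w - C.vm) := by
    refine ⟨-(v * (1 - 3 * w ^ 2)) / (w * ((1 + v) * (1 + w)) * (w + C.vm)), ?_, ?_, ?_⟩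
    · apply div_ne_zero
      · exact neg_ne_zero.2 (by positivity)
      · positivity
    · rw [hW1]; field_simp
    · rw [hZ1]; field_simp
      linear_combination (-2 * w) * hvm1 + 2 * w ^ 2 * hvm2
  -- the direction `(X₁, Y₁)`
  have hm0 : 17 / 10 < √3 := Real.lt_sqrt_of_sq_lt (by norm_num)
  have hmq : 1 - √3 * q ≠ 0 := by
    have : 1 < √3 * q := by nlinarith
    exact (by linarith : 1 - √3 * q < 0).ne
  have hdir := direction_eq (g := C.g) (q := q) hv hw hγ hr hgeq
    (by simp only [Conf.wg, Conf.qb, Conf.qc, hCw, hCv] at hquad; linear_combination hquad)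
    (by simp only [Conf.wg, Conf.qb, hCw, hCv] at hq0; linarith)
  have hX1 : X₁ γ r ≠ 0 := X₁_ne hv hw hγ hr hgeq hg1
  obtain ⟨τ, hτ0, hτX, hτY⟩ : ∃ τ : ℝ, τ ≠ 0 ∧ X₁ γ r = τ * (1 - √3 * q) ∧
      Y₁ γ r = τ * (1 + √3 * q) := by
    refine ⟨X₁ γ r / (1 - √3 * q), div_ne_zero hX1 hmq, by field_simp, ?_⟩
    rw [div_mul_eq_mul_div, hdir]; field_simp
  have hq' : 0 < q := by linarith
  have hy1 := hC.y1_eq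
  have hvw : v / w * w = v := by field_simp
  have hB1 : B1 γ r * c = -(2 * (v / w) * C.d0) := by
    have hden : X₁ γ r * Z₁ γ r - W₁ γ r * Y₁ γ r = -2 * τ * c * (C.vm + w * (√3 * q)) := by
      rw [hcW, hcZ, hτX, hτY]; ring
    have hpos : C.vm + w * (√3 * q) ≠ 0 := by positivity
    have hden0 : -2 * τ * c * (C.vm + w * (√3 * q)) ≠ 0 :=
      mul_ne_zero (mul_ne_zero (mul_ne_zero (by norm_num) hτ0) hc0) hpos
    rw [B1, hden, div_mul_eq_mul_div, div_eq_iff hden0, hτX, hτY, hW0, hZ0, hX0, hY0]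
    simp only [Conf.d0, Conf.y2, Conf.z2, Conf.wsq, Conf.sq, hCw, hCq] at hX1eq ⊢
    linear_combination (-4 * τ * c * (v / w)) * hX1eq
      + 4 * √3 * τ * q * c * (C.h - C.X2) * hvw
  have hX1h : C.X1 = C.h + C.d0 := by rw [Conf.d0]; ring
  refine ⟨hW0, hZ0, hX0, hY0, ?_, ?_⟩
  · rw [hW0, hcW, hy1, hX1h]
    linear_combination (w + C.vm) / 2 * hB1 - C.d0 * hvw
  · rw [hZ0, hcZ, hy1, hX1h]
    linear_combination (w - C.vm) / 2 * hB1 - C.d0 * hvw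

theorem hasDerivAt_quad (a b c t : ℝ) :
    HasDerivAt (fun t => a + b * t + 1 / 2 * c * t ^ 2) (b + c * t) t := by
  have h := (((hasDerivAt_id t).const_mul b).const_add a).add
    (((hasDerivAt_id t).pow 2).const_mul (1 / 2 * c))
  refine (h.congr_deriv ?_).congr_of_eventuallyEq (Eventually.of_forall fun x => ?_)
  · simp; ring
  · simp

/-- Everything reduces to the positivity facts about the configuration. -/
theorem barrier {γ r v w l q : ℝ} (H : Region v w l) (hγ : γ = 1 + 2 * w / v)
    (hr : r = 1 + 2 * w / ((1 + v) * (1 + w)))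
    (hR : R1 γ r = 4 * w * (1 - v * w) / (v * ((1 + v) * (1 + w))))
    (hR2 : R2 γ r = 2 * (2 + v + w + 2 * v * w - 2 * l) / ((1 + v) * (1 + w)))
    (hq : 31 / 50 ≤ q ∧ q ≤ 7 / 10)
    (hquad : 6 * (mkConf v w l q).wg * q ^ 2 + (mkConf v w l q).qb * q = (mkConf v w l q).qc)
    (hq0 : 0 ≤ 12 * (mkConf v w l q).wg * q + (mkConf v w l q).qb) :
    (∀ t ∈ Set.Ioo (0 : ℝ) 1, 0 < Pfl γ r t) ∧
    (∀ t ∈ Set.Ioc (0 : ℝ) 1,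
      0 < DW γ (bflW γ r t) (bflZ γ r t) ∧ 0 < DZ γ (bflW γ r t) (bflZ γ r t)) := by
  have hv := H.v_pos
  have hw := H.w_pos
  have hqp : 0 < q := by linarith [hq.1]
  have hC := H.valid hqp
  have hg : 9 / 5 < (mkConf v w l q).g := H.g_gt q
  obtain ⟨-, -, hd0, hd1, he1, hc1, hc2, hc3, hc4⟩ := hC.good H.w_lt ⟨H.l_gt, H.l_lt⟩ hq
  obtain ⟨hW0, hZ0, hX0, hY0, hW1, hZ1⟩ :=
    bfl_coords H hγ hr hR hR2 (mkConf v w l q) rfl hC hq.1 hquad hq0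
  have hCw : (mkConf v w l q).w = w := rfl
  have hCv : (mkConf v w l q).v = v := rfl
  have hCq : (mkConf v w l q).q = q := rfl
  have hCs : (mkConf v w l q).s = 2 * w / ((1 + v) * (1 + w)) := by
    simp only [Conf.s, mkConf]; ring
  have hCh : 0 < (mkConf v w l q).h := by simp only [mkConf]; positivity
  have hX2 : 0 < (mkConf v w l q).X2 := by simp only [mkConf]; positivity
  generalize mkConf v w l q = C at *
  have hsg : C.s / w = C.sg := by rw [Conf.s, hCw]; field_simp
  have hh := hC.h_eq
  have hx2 := hC.x2_eq
  have hX1 : C.X1 = C.h + C.d0 := by rw [Conf.d0]; ring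
  have hX1' : C.X1 = C.X2 - C.d1 := by rw [Conf.d1]; ring
  have hy1 := hC.y1_eq
  have hy1' : C.y1 = C.y2 - C.wsq * C.d1 := Conf.Valid.y1_eq'
  have hm3 : 0 < √3 := by positivity
  have hm3' : √3 < 9 / 5 := by rw [Real.sqrt_lt' (by norm_num)]; norm_num
  have hy2pos : 0 < C.y2 := by
    rw [Conf.y2, Conf.z2, hCw]; positivity
  have hy1pos : 0 < C.y1 := by
    have e : C.y1 = w * (√3 * ((1 - q) * C.X2 + q * (C.h + C.d0))) := by
      rw [Conf.y1, Conf.z1, Conf.z2, Conf.sq, Conf.d1, hX1, hCw, hCq]; ring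
    have : 0 < 1 - q := by linarith [hq.2]
    rw [e]; positivity
  have hxy2 : 0 < C.x2 - C.y2 := by
    have e : C.x2 - C.y2 = w * C.X2 * (C.g - √3) := by
      rw [Conf.x2, Conf.y2, Conf.z2, Conf.wg, hCw]; ring
    have : 0 < C.g - √3 := by linarith
    rw [e]; positivity
  rw [hCv] at hh hx2
  -- the barrier as a Bézier curve in the coordinates `(ξ, η)`
  have key : ∀ t : ℝ, ∃ ξ η : ℝ,
      ξ = (1 - t) ^ 2 * C.h + 2 * (1 - t) * t * C.X1 + t ^ 2 * C.X2 ∧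
      η = (1 - t) ^ 2 * C.h + 2 * (1 - t) * t * C.y1 + t ^ 2 * C.y2 ∧
      1 - v * ξ = (1 - t) ^ 2 * C.h + 2 * (1 - t) * t * C.x1 + t ^ 2 * C.x2 ∧
      bflW γ r t = -(v * ξ) + v / w * η ∧ bflZ γ r t = -(v * ξ) - v / w * η := by
    intro t
    refine ⟨_, _, rfl, rfl, ?_, ?_, ?_⟩
    · rw [Conf.x1, hCv]
      linear_combination -(1 - t) ^ 2 * hh + t ^ 2 * hx2
    · rw [bflW, B2]
      linear_combination (1 - t) ^ 2 * hW0 + 2 * (1 - t) * t * hW1 + t ^ 2 * hX0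
    · rw [bflZ, B3]
      linear_combination (1 - t) ^ 2 * hZ0 + 2 * (1 - t) * t * hZ1 + t ^ 2 * hY0
  have hα : alphaF γ = w / v := by rw [alphaF, hγ]; ring
  constructor
  · rintro t ⟨ht0, ht1⟩
    obtain ⟨ξ, η, hξ, hη, hx, hW, hZ⟩ := key t
    have dW : deriv (bflW γ r) t = -(v * (2 * ((1 - t) * C.d0 + t * C.d1)))
        + v / w * (2 * (t * C.wsq * C.d1 - (1 - t) * C.vm * C.d0)) := by
      have h : HasDerivAt (bflW γ r) (B1 γ r * W₁ γ r + B2 γ r * t) t := hasDerivAt_quad _ _ _ t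
      rw [h.deriv, B2]
      rw [Conf.d0, Conf.d1] at *
      linear_combination -(2 * (1 - t)) * hW0 + 2 * (1 - 2 * t) * hW1 + 2 * t * hX0
        + 2 * (1 - t) * (v / w) * hy1 - 2 * t * (v / w) * hy1'
    have dZ : deriv (bflZ γ r) t = -(v * (2 * ((1 - t) * C.d0 + t * C.d1)))
        - v / w * (2 * (t * C.wsq * C.d1 - (1 - t) * C.vm * C.d0)) := by
      have h : HasDerivAt (bflZ γ r) (B1 γ r * Z₁ γ r + B3 γ r * t) t := hasDerivAt_quad _ _ _ t
      rw [h.deriv, B3]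
      rw [Conf.d0, Conf.d1] at *
      linear_combination -(2 * (1 - t)) * hZ0 + 2 * (1 - 2 * t) * hZ1 + 2 * t * hY0
        - 2 * (1 - t) * (v / w) * hy1 + 2 * t * (v / w) * hy1'
    have hb := hC.bernstein (by rw [hCq]; exact hquad) (1 - t) t ξ (1 - v * ξ) η (by ring) hξ hx hη
    have hf := field_eq hv.ne' hw.ne' hγ (show r = 1 + C.s by rw [hCs]; exact hr) hW hZ
      (2 * ((1 - t) * C.d0 + t * C.d1)) (2 * (t * C.wsq * C.d1 - (1 - t) * C.vm * C.d0))
    rw [hsg] at hf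
    rw [hCw] at hb
    rw [Pfl, dW, dZ, hf, hb]
    have hu : 0 < 1 - t := by linarith
    positivity
  · rintro t ⟨ht0, ht1⟩
    obtain ⟨ξ, η, hξ, hη, hx, hW, hZ⟩ := key t
    have hu : 0 ≤ 1 - t := by linarith
    have hηp : 0 < η := by rw [hη]; positivity
    have hxη : 0 < 1 - v * ξ - η := by
      have e : 1 - v * ξ - η = 2 * (1 - t) * t * C.e1 + t ^ 2 * (C.x2 - C.y2) := by
        rw [hx, hη, Conf.e1]; ring
      rw [e]; positivity
    have e1 : DW γ (bflW γ r t) (bflZ γ r t) = 1 - v * ξ + η := by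
      rw [DW, hW, hZ, hα]; field_simp; ring
    have e2 : DZ γ (bflW γ r t) (bflZ γ r t) = 1 - v * ξ - η := by
      rw [DZ, hW, hZ, hα]; field_simp; ring
    rw [e1, e2]
    exact ⟨by linarith, hxη⟩

/-- Proposition 3.2: for `γ > 1` and `3 < k(r) < 4`, the far-left barrier
satisfies `P^fl(t) > 0` on `(0,1)` and `D_W(b^fl(t)) > 0`, `D_Z(b^fl(t)) > 0` on `(0,1]`. -/
theorem statement10 (γ r : ℝ) (hγ : 1 < γ) (hr1 : 1 < r) (hr2 : r < rStar γ)
    (hk1 : 3 < kFun γ r) (hk2 : kFun γ r < 4) :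
    (∀ t ∈ Set.Ioo (0 : ℝ) 1, 0 < Pfl γ r t) ∧
    (∀ t ∈ Set.Ioc (0 : ℝ) 1,
      0 < DW γ (bflW γ r t) (bflZ γ r t) ∧ 0 < DZ γ (bflW γ r t) (bflZ γ r t)) := by
  obtain ⟨v, w, hv, hw, hvw, hγ', hr', hR⟩ := exists_vw hγ hr1 hr2
  obtain ⟨l, hR2, hquad, h4, h5⟩ := exists_l hv hw hγ' hr' hR hk1 hk2
  have H : Region v w l := ⟨hv, hw, hquad, h4, h5, hvw⟩
  obtain ⟨q, hq, hq1, hq2⟩ := H.exists_q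
  exact barrier H hγ' hr' hR hR2 hq hq1 hq2

end SelfSimilarImplosion
end
end

section
/- Let γ > 1 and 1 < r < r*(γ). Then D_W(W₀, Z₀) > 0, i.e. the value of D_W at the sonic point P_s is strictly positive. -/
/-!
Linear algebra collapses the value of `D_W` at the sonic point to
`(ℛ₁ + (γ - 3) r + γ + 1) / (2 (γ - 1))` (`DW_sonic`). Since `ℛ₁ ≥ 0`, positivity follows from
`(3 - γ) r < γ + 1`. This is clear for `γ ≥ 3`; for `γ < 3` it says `r < (γ + 1) / (3 - γ)`,
and `r*(γ)` does not exceed this bound (`three_sub_mul_rStar_le`). When `γ < 5/3`, put `s = √(2 / (γ - 1)) > 1`: the bound is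
`1 + 2 / (s² - 1)` while `r* = 1 + 2 / (s + 1)²`. When `γ ≥ 5/3`, it reduces to
`-(3γ - 5)(γ - 1) ≤ √3 (γ² - 1)`.
-/

noncomputable section

open Real Filter Set Topology

namespace SelfSimilarImplosion

lemma DW_sonic (γ r : ℝ) (hγ : 1 < γ) :
    DW γ (W₀ γ r) (Z₀ γ r) = (R1 γ r + (γ - 3) * r + γ + 1) / (2 * (γ - 1)) := by
  have h : γ - 1 ≠ 0 := by linarith
  unfold DW W₀ Z₀ alphaF
  field_simp
  ring

lemma three_sub_mul_rStar_le (γ : ℝ) (hγ : 1 < γ) :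
    (3 - γ) * rStar γ ≤ γ + 1 := by
  have hg : 0 < γ - 1 := by linarith
  unfold rStar
  split_ifs with h
  · have hs2 : √(2 / (γ - 1)) ^ 2 = 2 / (γ - 1) := Real.sq_sqrt (by positivity)
    have hs0 : 0 ≤ √(2 / (γ - 1)) := Real.sqrt_nonneg _
    set s := √(2 / (γ - 1))
    have hsg : s ^ 2 * (γ - 1) = 2 := by rw [hs2]; field_simp
    have hpos : 0 < (s + 1) ^ 2 := by positivity
    -- After clearing the denominator and using `(γ - 1) s² = 2`, the claim is `0 ≤ 4 (γ - 1) (s + 1)`.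
    have key : (3 - γ) * 2 ≤ 2 * (γ - 1) * (s + 1) ^ 2 := by
      nlinarith [mul_pos hg (by linarith : 0 < s + 1)]
    have hle : (3 - γ) * (2 / (s + 1) ^ 2) ≤ 2 * (γ - 1) := by
      rw [← mul_div_assoc, div_le_iff₀ hpos]
      exact key
    linarith
  · push Not at h
    have h3 : 0 ≤ √3 := Real.sqrt_nonneg 3
    have hpos : 0 < 2 + √3 * (γ - 1) := by positivity
    rw [← mul_div_assoc, div_le_iff₀ hpos]
    have hrhs : 0 ≤ √3 * ((γ - 1) * (γ + 1)) := by positivity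
    nlinarith [mul_nonneg (by linarith : 0 ≤ 3 * γ - 5) hg.le]


/-- Lemma on `D_{W,0}`: for `γ > 1` and `1 < r < r*(γ)`,
the value of `D_W` at the sonic point `P_s = (W₀, Z₀)` is strictly positive. -/
theorem statement12 (γ r : ℝ) (hγ : 1 < γ) (hr1 : 1 < r) (hr2 : r < rStar γ) :
    0 < DW γ (W₀ γ r) (Z₀ γ r) := by
  have hA : (3 - γ) * r < γ + 1 := by
    rcases lt_or_ge γ 3 with h | h
    · exact (mul_lt_mul_of_pos_left hr2 (by linarith)).trans_le
        (three_sub_mul_rStar_le γ hγ)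
    · nlinarith
  have hR : 0 ≤ R1 γ r := Real.sqrt_nonneg _
  rw [DW_sonic γ r hγ]
  apply div_pos <;> linarith

end SelfSimilarImplosion
end
end

section
/- Let γ > 1 and 1 ≤ r < r*(γ). Then D_{Z,1} > 0, where D_{Z,1} = ((1−α)/2)·W₁ + ((1+α)/2)·Z₁ is the directional derivative of D_Z at the sonic point P_s along (W₁, Z₁). -/
/-!
Write `h = γ - 1`, `u = r - 1` and `M = 2 h - (h + 2) u`. In these variables the sonic-point
quantities simplify:

* `ℛ₁² = M² - 8 h u²`;
* the `ℛ₁`-terms cancel in `D_{Z,1}`, so `4 h D_{Z,1} = L - h ℛ₂` with `L = 4 h - (h + 2) u`;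
* if `X` is the radicand in `ℛ₂` (so `h ℛ₂ = √X`), then
  `L² - X = ℛ₁ ((3 h + 2) ℛ₁ - (3 h - 2) M)`.

So it suffices that `M > 0`, `ℛ₁ > 0` and `(3 h + 2) ℛ₁ > (3 h - 2) M`. For `h < 2/3`, the condition
`r < r*` says that `u` lies below the smaller root of `M² - 8 h u²`, and the last inequality is clear
because `3 h - 2 < 0`. For `h ≥ 2/3`, squaring turns the last inequality into
`3 M² > (3 h + 2)² u²`, and `r < r*` is precisely `√3 M > (3 h + 2) u`.
-/

noncomputable section

open Real Filter Set Topology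

namespace SelfSimilarImplosion

/-- `D_{Z,1}`, the directional derivative of `D_Z` at `P_s` along `(W₁, Z₁)`. -/
def DZ1 (γ r : ℝ) : ℝ := ((1 - alphaF γ) / 2) * W₁ γ r + ((1 + alphaF γ) / 2) * Z₁ γ r

/-- For `r < r*(γ)` one has `M = 2h - (h+2)u > 0`, and the radicand `M² - 8hu²` of `ℛ₁` is
positive; in the range `γ ≥ 5/3` the sharper bound `3 M² > (3h+2)² u²` holds. -/
theorem bounds_of_lt_rStar {h u : ℝ} (hh : 0 < h) (hu : 0 ≤ u) (hr : 1 + u < rStar (1 + h)) :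
    0 < 2 * h - (h + 2) * u ∧ 0 < (2 * h - (h + 2) * u) ^ 2 - 8 * h * u ^ 2 ∧
      (2 / 3 ≤ h → (3 * h + 2) ^ 2 * u ^ 2 < 3 * (2 * h - (h + 2) * u) ^ 2) := by
  unfold rStar at hr
  split_ifs at hr with hc
  · rw [show 1 + h - 1 = h by ring] at hr
    set t := √(2 / h) with ht
    have ht0 : 0 ≤ t := Real.sqrt_nonneg _
    have hht : h * t ^ 2 = 2 := by
      rw [ht, Real.sq_sqrt (by positivity)]; field_simp
    have hu1 : u * (t + 1) ^ 2 < 2 := by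
      have : u < 2 / (t + 1) ^ 2 := by linarith
      rwa [lt_div_iff₀ (by positivity)] at this
    have hM : 2 * h * t * u < 2 * h - (h + 2) * u := by
      have := mul_lt_mul_of_pos_left hu1 hh
      linear_combination this - u * hht
    have h0 : 0 ≤ 2 * h * t * u := by positivity
    refine ⟨h0.trans_lt hM, ?_, fun h1 => by linarith⟩
    have := pow_lt_pow_left₀ hM h0 two_ne_zero
    linear_combination this - 4 * h * u ^ 2 * hht
  · have hh1 : 2 / 3 ≤ h := by linarith
    set q := √(3 : ℝ) with hq
    have hq2 : q ^ 2 = 3 := Real.sq_sqrt (by norm_num)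
    have hq0 : 0 < q := Real.sqrt_pos.mpr (by norm_num)
    rw [show 1 + h - 1 = h by ring, lt_div_iff₀ (by positivity)] at hr
    have hM : (3 * h + 2) * u < q * (2 * h - (h + 2) * u) := by
      -- `(1 + √3) (2 + √3 h) = (3h+2) + √3 (h+2)`, the coefficient of `u` in the claim.
      have := mul_lt_mul_of_pos_right hr (by linarith : 0 < q + 1)
      nlinarith [this, hq2]
    have h0 : 0 ≤ (3 * h + 2) * u := by positivity
    have hM0 : 0 < 2 * h - (h + 2) * u :=
      (mul_pos_iff_of_pos_left hq0).mp (h0.trans_lt hM)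
    have h3 : (3 * h + 2) ^ 2 * u ^ 2 < 3 * (2 * h - (h + 2) * u) ^ 2 := by
      have := pow_lt_pow_left₀ hM h0 two_ne_zero
      rwa [mul_pow, mul_pow, hq2] at this
    refine ⟨hM0, ?_, fun _ => h3⟩
    nlinarith [mul_nonneg (sq_nonneg (3 * h - 2)) (sq_nonneg u)]

/-- Lemma on `D_{Z,1}`: for `γ > 1` and `1 ≤ r < r*(γ)` one has
`D_{Z,1} > 0`. -/
theorem statement13 (γ r : ℝ) (hγ : 1 < γ) (hr1 : 1 ≤ r) (hr2 : r < rStar γ) :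
    0 < DZ1 γ r := by
  obtain ⟨h, rfl⟩ : ∃ h, γ = 1 + h := ⟨γ - 1, by ring⟩
  obtain ⟨u, rfl⟩ : ∃ u, r = 1 + u := ⟨r - 1, by ring⟩
  have hh : 0 < h := by linarith
  have hu : 0 ≤ u := by linarith
  obtain ⟨hM, hP, h3⟩ := bounds_of_lt_rStar hh hu hr2
  have hs : R1 (1 + h) (1 + u) = √((2 * h - (h + 2) * u) ^ 2 - 8 * h * u ^ 2) := by
    unfold R1; congr 1; ring
  have hs0 : 0 < R1 (1 + h) (1 + u) := by rw [hs]; exact Real.sqrt_pos.mpr hP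
  have hs2 : R1 (1 + h) (1 + u) ^ 2 = (2 * h - (h + 2) * u) ^ 2 - 8 * h * u ^ 2 := by
    rw [hs, Real.sq_sqrt hP.le]
  have hD : DZ1 (1 + h) (1 + u)
      = (4 * h - (h + 2) * u - h * R2 (1 + h) (1 + u)) / (4 * h) := by
    have h2 : 1 + h + 1 ≠ 0 := by positivity
    unfold DZ1 W₁ Z₁ alphaF
    rw [show 1 + h - 1 = h by ring]
    field_simp
    ring
  have key : (3 * h - 2) * (2 * h - (h + 2) * u) < (3 * h + 2) * R1 (1 + h) (1 + u) := by
    rcases lt_or_ge h (2 / 3) with hc | hc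
    · have h1 : 0 < (2 - 3 * h) * (2 * h - (h + 2) * u) := mul_pos (by linarith) hM
      have h2 : 0 < (3 * h + 2) * R1 (1 + h) (1 + u) := by positivity
      linarith
    · refine lt_of_pow_lt_pow_left₀ 2 (by positivity) ?_
      rw [mul_pow, mul_pow, hs2]
      have := mul_lt_mul_of_pos_left (h3 hc) hh
      linear_combination 8 * this
  rw [hD]
  refine div_pos (sub_pos.mpr ?_) (by positivity)
  unfold R2
  rw [show 1 + h - 1 = h by ring, ← mul_assoc, mul_one_div_cancel hh.ne', one_mul,
    Real.sqrt_lt' (by linarith)]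
  generalize R1 (1 + h) (1 + u) = s at hs0 hs2 key ⊢
  have := mul_lt_mul_of_pos_left key hs0
  linear_combination this + (3 * h + 2) * hs2

end SelfSimilarImplosion
end
end

section
/- Let γ > 1. Then at r = r*(γ) one has D_{Z,1} = 0, where D_{Z,1} = ((1−α)/2)·W₁ + ((1+α)/2)·Z₁ is the directional derivative of D_Z at the sonic point P_s along (W₁, Z₁), evaluated at the parameter value r = r*(γ). -/
/-!
In `D_{Z,1}` the terms containing `ℛ₁` cancel, and what is left is
`D_{Z,1} = (5γ - 3 - (γ + 1) r - (γ - 1) ℛ₂) / (4 (γ - 1))`.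
So `D_{Z,1} = 0` amounts to `ℛ₂ = (5γ - 3 - (γ + 1) r) / (γ - 1)`, i.e. to the radicand of `ℛ₂` being
the square of the nonnegative number `5γ - 3 - (γ + 1) r`.

At `r = r*(γ)` the inner root `ℛ₁` is explicit:
* for `γ < 5/3`, write `γ = 1 + 2 / s²` and `r* = 1 + 2 / (s + 1)²`; then `ℛ₁ = 0`;
* for `γ ≥ 5/3`, `ℛ₁ = (√3 - 1)(γ - 1)(3γ - 5) / (2 + √3 (γ - 1))`.

Substituting these values, the condition on `ℛ₂` becomes a polynomial identity (modulo `(√3)² = 3` in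
the second case).
-/

noncomputable section

open Real Filter Set Topology

namespace SelfSimilarImplosion

/-- Criterion for `D_{Z,1} = 0`: once the value `ρ` of `ℛ₁` is known, the radicand of `ℛ₂` only has
to be the square of the nonnegative number `5γ - 3 - (γ + 1) r`. -/
theorem DZ1_eq_zero_of_R1 {γ r ρ : ℝ} (hγ : 1 < γ) (hρ : 0 ≤ ρ)
    (h1 : γ ^ 2 * (r - 3) ^ 2 - 2 * γ * (3 * r ^ 2 - 6 * r + 7) + 9 * r ^ 2 - 14 * r + 9 = ρ ^ 2)
    (h2 : γ * ((76 - 27 * γ) * γ - 71) - (3 * γ - 5) * ((γ - 5) * γ + 2) * r ^ 2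
      + (γ * (γ * (18 * γ - 52) + 50) - 8) * r
      + ρ * (9 * (γ - 2) * γ + ((2 - 3 * γ) * γ + 5) * r + 5) + 18
      = (5 * γ - 3 - (γ + 1) * r) ^ 2)
    (h3 : 0 ≤ 5 * γ - 3 - (γ + 1) * r) : DZ1 γ r = 0 := by
  have hR1 : R1 γ r = ρ := by rw [R1, h1, Real.sqrt_sq hρ]
  have hR2 : R2 γ r = (1 / (γ - 1)) * (5 * γ - 3 - (γ + 1) * r) := by
    rw [R2, hR1, h2, Real.sqrt_sq h3]
  have hγ1 : γ - 1 ≠ 0 := by linarith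
  have hγ2 : γ + 1 ≠ 0 := by linarith
  rw [DZ1, W₁, Z₁, hR1, hR2, alphaF]
  field_simp
  ring

/-- The case `γ < 5/3`, with `s = √(2 / (γ - 1))` as parameter. Here `ℛ₁` vanishes, and the identity
holds for every `s > 0`. -/
theorem DZ1_eq_zero_of_param {s : ℝ} (hs : 0 < s) :
    DZ1 (1 + 2 / s ^ 2) (1 + 2 / (s + 1) ^ 2) = 0 := by
  refine DZ1_eq_zero_of_R1 (ρ := 0) (lt_add_of_pos_right 1 (by positivity)) le_rfl ?_ ?_ ?_
  · field_simp
    ring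
  · field_simp
    ring
  · have h : 5 * (1 + 2 / s ^ 2) - 3 - (1 + 2 / s ^ 2 + 1) * (1 + 2 / (s + 1) ^ 2)
        = 4 * (s ^ 2 + 4 * s + 1) / (s ^ 2 * (s + 1) ^ 2) := by
      field_simp
      ring
    rw [h]
    positivity

/-- The case `γ ≥ 5/3`. The threshold `5/3` is where the closed form
`(√3 - 1)(γ - 1)(3γ - 5) / (2 + √3 (γ - 1))` becomes nonnegative, hence equal to the root `ℛ₁`. -/
theorem DZ1_eq_zero_of_five_thirds_le {γ : ℝ} (hγ : 5 / 3 ≤ γ) :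
    DZ1 γ ((3 * γ - 1) / (2 + √3 * (γ - 1))) = 0 := by
  have ht2 : √3 ^ 2 = 3 := Real.sq_sqrt (by norm_num)
  have ht1 : 1 ≤ √3 := Real.one_le_sqrt.mpr (by norm_num)
  generalize √3 = t at ht2 ht1
  have hD : 0 < 2 + t * (γ - 1) := by nlinarith
  refine DZ1_eq_zero_of_R1 (ρ := (t - 1) * (γ - 1) * (3 * γ - 5) / (2 + t * (γ - 1)))
    (by linarith) ?_ ?_ ?_ ?_
  · exact div_nonneg (mul_nonneg (mul_nonneg (by linarith) (by linarith)) (by linarith)) hD.le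
  · field_simp
    grind
  · field_simp
    grind
  · have h : 5 * γ - 3 - (γ + 1) * ((3 * γ - 1) / (2 + t * (γ - 1)))
        = (γ - 1) * ((5 * t - 3) * (γ - 1) + 2 * (t + 1)) / (2 + t * (γ - 1)) := by
      field_simp
      ring
    rw [h]
    have hu : 0 ≤ γ - 1 := by linarith
    have hc : 0 ≤ 5 * t - 3 := by linarith
    positivity

/-- Lemma on vanishing of `D_{Z,1}`: for every `γ > 1`, the quantity
`D_{Z,1}` vanishes at the parameter value `r = r*(γ)`. -/
theorem statement14 (γ : ℝ) (hγ : 1 < γ) : DZ1 γ (rStar γ) = 0 := by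
  rw [rStar]
  split_ifs with h
  · have hpos : 0 < 2 / (γ - 1) := div_pos two_pos (by linarith)
    have hγ1 : γ - 1 ≠ 0 := by linarith
    have hs : 1 + 2 / √(2 / (γ - 1)) ^ 2 = γ := by
      rw [Real.sq_sqrt hpos.le]
      field_simp
      ring
    have key := DZ1_eq_zero_of_param (Real.sqrt_pos.mpr hpos)
    rwa [hs] at key
  · exact DZ1_eq_zero_of_five_thirds_le (not_lt.mp h)

end SelfSimilarImplosion
end
end

section
/- Let γ > 1 and 1 < r < r*(γ). (i) The set { (W,Z) ∈ ℝ² : W ≥ Z, N_W(W,Z) = 0 and N_Z(W,Z) = 0 } equals { (0,0), (−r,−r), P_⦿ }. (ii) If in addition 3 < k(r) < 4, then none of these three points lies in the region Ω = { (W,Z) : W ≥ Z, D_W(W,Z) > 0, D_Z(W,Z) < 0 }, and P_⦿ is a saddle point of the planar polynomial vector field (W,Z) ↦ (N_W·D_Z, N_Z·D_W): the Jacobian matrix of this field at P_⦿ has two real eigenvalues of opposite signs (equivalently, negative determinant). (iii) If γ = 7/5 and r < r*(7/5) is sufficiently close to r*(7/5), then among the three points only P_⦿ lies in Ω, and its second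 coordinate satisfies Y₀ > Z₀. -/
/-!
In the variables `S = W + Z`, `D = W - Z` the equations `N_W = N_Z = 0` become
`D (r + (3γ-1)/4 · S) = 0` and `r S + (S² + α D²)/2 = 0`. Either `D = 0`, which yields `(0,0)` and
`(-r,-r)`, or `S = -4r/(3γ-1)`, which yields `D = ± 4√3 r/(3γ-1)`; the condition `W ≥ Z` selects
`P_⦿` (`equilibria`).

At an equilibrium the Jacobian determinant of `(N_W D_Z, N_Z D_W)` is `D_W D_Z` times that of
`(N_W, N_Z)`, and the latter equals `-6(γ-1)r²/(3γ-1) < 0` at `P_⦿`. Moreover `D_W ≥ D_Z` there, so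
`P_⦿ ∉ Ω` and the saddle property both follow from `D_Z(P_⦿) > 0`, that is, from
`r (2 + √3(γ-1)) < 3γ - 1`.

For `γ ≥ 5/3` this is `r < r*(γ)`. For `γ < 5/3`, suppose it fails and write `γ = 1 + d`,
`r = 1 + d p`. Then `p ≥ 2/5` and, as `r < r*`, `s := 2 - (2 + d) p ≥ 0`. The radicand of `ℛ₁` is
`d² (s² - 8 d p²)`, so `ℛ₁ ≤ d s`; the radicand of `ℛ₂` is decreasing in `ℛ₁`, so
`ℛ₂² ≥ p (8(2+d) - (2-3d)(6+7d) p)`. A concavity argument in `p` on `[2/5, 1]` turns this into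
`ℛ₂ ≥ (3/5)(4 - (2+d) p)` (`R2_ge`). As `k = (A - ℛ₂)/(A + ℛ₂)` with `A = (2+d) p - 4 < 0`, that
forces `k ≤ 0` or `k ≥ 4`, so `k ∈ (3,4)` is impossible (`DZ_P_pos`).

For `γ = 7/5` one has `r* = (7 - √5)/4 ≈ 1.191`, while `D_Z(P_⦿) < 0` already for `r > 1.189`.
-/

noncomputable section

open Real Filter Set Topology

namespace SelfSimilarImplosion

/-- The region `Ω = {(W,Z) : W ≥ Z, D_W > 0, D_Z < 0}`. -/
def OmegaSet (γ : ℝ) : Set (ℝ × ℝ) :=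
  {p : ℝ × ℝ | p.2 ≤ p.1 ∧ 0 < DW γ p.1 p.2 ∧ DZ γ p.1 p.2 < 0}

/-- The planar polynomial vector field `(W,Z) ↦ (N_W·D_Z, N_Z·D_W)`. -/
def Ffield (γ r : ℝ) (p : ℝ × ℝ) : ℝ × ℝ :=
  (NW γ r p.1 p.2 * DZ γ p.1 p.2, NZ γ r p.1 p.2 * DW γ p.1 p.2)

/-! ### Classification of the equilibria -/

/-- In the variables `D = W - Z`, `S = W + Z`, the difference `N_W - N_Z` is divisible by `D`. -/
lemma NW_sub_NZ (γ r W Z : ℝ) :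
    NW γ r W Z - NZ γ r W Z = -(W - Z) * (r + (3 * γ - 1) / 4 * (W + Z)) := by
  unfold NW NZ alphaF; ring

lemma NW_add_NZ (γ r W Z : ℝ) :
    NW γ r W Z + NZ γ r W Z
      = -r * (W + Z) - 1 / 2 * ((W + Z) ^ 2 + (γ - 1) / 2 * (W - Z) ^ 2) := by
  unfold NW NZ alphaF; ring

/-- The coordinates of `P_⦿` in the normalization `q = 2r/(3γ-1)`, which makes everything
polynomial in `q` and `√3`. -/
lemma exists_scale {γ r : ℝ} (hγ : 1 < γ) :
    ∃ q : ℝ, r = (3 * γ - 1) * q / 2 ∧ X₀ γ r = (√3 - 1) * q ∧ Y₀ γ r = -(1 + √3) * q := by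
  have h : (3 * γ - 1) ≠ 0 := by linarith
  refine ⟨2 * r / (3 * γ - 1), by field_simp, ?_, ?_⟩
  · unfold X₀; ring
  · unfold Y₀; ring

lemma sqrt_three_sq : √3 ^ 2 = (3 : ℝ) := Real.sq_sqrt (by norm_num)

lemma NW_P {γ r : ℝ} (hγ : 1 < γ) : NW γ r (X₀ γ r) (Y₀ γ r) = 0 := by
  obtain ⟨q, hr, hX, hY⟩ := exists_scale (r := r) hγ
  rw [hX, hY, NW, alphaF, hr]
  linear_combination (-(γ - 1) / 2 * q ^ 2) * sqrt_three_sq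

lemma NZ_P {γ r : ℝ} (hγ : 1 < γ) : NZ γ r (X₀ γ r) (Y₀ γ r) = 0 := by
  obtain ⟨q, hr, hX, hY⟩ := exists_scale (r := r) hγ
  rw [hX, hY, NZ, alphaF, hr]
  linear_combination (-(γ - 1) / 2 * q ^ 2) * sqrt_three_sq

lemma equilibria {γ r : ℝ} (hγ : 1 < γ) (hr : 0 < r) :
    {p : ℝ × ℝ | p.2 ≤ p.1 ∧ NW γ r p.1 p.2 = 0 ∧ NZ γ r p.1 p.2 = 0} =
      {((0 : ℝ), (0 : ℝ)), (-r, -r), (X₀ γ r, Y₀ γ r)} := by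
  ext ⟨W, Z⟩
  simp only [mem_ofPred_eq, mem_insert_iff, mem_singleton_iff, Prod.mk.injEq]
  constructor
  · rintro ⟨hle, h1, h2⟩
    have hd := NW_sub_NZ γ r W Z
    have hs := NW_add_NZ γ r W Z
    rw [h1, h2] at hd hs
    rcases hle.eq_or_lt with heq | hlt
    · subst heq
      have : Z * (r + Z) = 0 := by linear_combination (1 / 2) * hs
      rcases mul_eq_zero.1 this with h | h
      · exact Or.inl ⟨h, h⟩
      · exact Or.inr (Or.inl ⟨by linarith, by linarith⟩)
    · right; right
      obtain ⟨q, hq, hX, hY⟩ := exists_scale (r := r) hγ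
      have hm : 0 < 3 * γ - 1 := by linarith
      have hqpos : 0 < q := by
        by_contra hcon
        nlinarith
      have hS : W + Z = -2 * q := by
        have h0 : (W - Z) * ((3 * γ - 1) / 4 * (2 * q + (W + Z))) = 0 := by
          rw [hq] at hd; linear_combination hd
        have h3 := (mul_eq_zero.1 h0).resolve_left (by linarith)
        have h4 := (mul_eq_zero.1 h3).resolve_left (by positivity)
        linarith
      -- `D² = 12 q²` and `D > 0` determine `D`.
      have hD : W - Z = 2 * √3 * q := by
        have h5 : (γ - 1) * ((W - Z) ^ 2 - (2 * √3 * q) ^ 2) = 0 := by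
          rw [hS, hq] at hs
          linear_combination 4 * hs - 4 * (γ - 1) * q ^ 2 * sqrt_three_sq
        have h6 := (mul_eq_zero.1 h5).resolve_left (by linarith)
        exact (pow_left_inj₀ (by linarith) (by positivity) two_ne_zero).1 (sub_eq_zero.1 h6)
      rw [hX, hY]
      constructor <;> linarith
  · rintro (⟨rfl, rfl⟩ | ⟨rfl, rfl⟩ | ⟨rfl, rfl⟩)
    · simp [NW, NZ]
    · refine ⟨le_rfl, ?_, ?_⟩
      · unfold NW; ring
      · unfold NZ; ring
    · refine ⟨?_, NW_P hγ, NZ_P hγ⟩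
      have : 0 < 3 * γ - 1 := by linarith
      have h : X₀ γ r - Y₀ γ r = 4 * √3 * r / (3 * γ - 1) := by unfold X₀ Y₀; ring
      have : 0 < 4 * √3 * r / (3 * γ - 1) := by positivity
      linarith

/-! ### The Jacobian at an equilibrium -/

open ContinuousLinearMap in
/-- At a common zero of `N_W` and `N_Z`, the Jacobian determinant of `(N_W D_Z, N_Z D_W)` is
`D_W D_Z` times the Jacobian determinant of `(N_W, N_Z)`. -/
lemma jacobian_det {γ r W Z : ℝ} (hW : NW γ r W Z = 0) (hZ : NZ γ r W Z = 0) :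
    (fderiv ℝ (Ffield γ r) (W, Z) ((1 : ℝ), (0 : ℝ))).1
        * (fderiv ℝ (Ffield γ r) (W, Z) ((0 : ℝ), (1 : ℝ))).2
      - (fderiv ℝ (Ffield γ r) (W, Z) ((0 : ℝ), (1 : ℝ))).1
        * (fderiv ℝ (Ffield γ r) (W, Z) ((1 : ℝ), (0 : ℝ))).2
      = DW γ W Z * DZ γ W Z *
        ((-r - γ * W - (3 - γ) / 4 * Z) * (-r - (3 - γ) / 4 * W - γ * Z)
          - (-(3 - γ) / 4 * W + (γ - 1) / 2 * Z) * (-(3 - γ) / 4 * Z + (γ - 1) / 2 * W)) := by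
  have h1 : HasFDerivAt (fun p : ℝ × ℝ => p.1) (fst ℝ ℝ ℝ) (W, Z) := hasFDerivAt_fst
  have h2 : HasFDerivAt (fun p : ℝ × ℝ => p.2) (snd ℝ ℝ ℝ) (W, Z) := hasFDerivAt_snd
  have hDW : DifferentiableAt ℝ (fun p : ℝ × ℝ => DW γ p.1 p.2) (W, Z) := by
    unfold DW; fun_prop
  have hDZ : DifferentiableAt ℝ (fun p : ℝ × ℝ => DZ γ p.1 p.2) (W, Z) := by
    unfold DZ; fun_prop
  have hNW : HasFDerivAt (fun p : ℝ × ℝ => NW γ r p.1 p.2)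
      ((-r - γ * W - (3 - γ) / 4 * Z) • fst ℝ ℝ ℝ
        + (-(3 - γ) / 4 * W + (γ - 1) / 2 * Z) • snd ℝ ℝ ℝ) (W, Z) := by
    unfold NW
    refine HasFDerivAt.congr_fderiv ((((((h1.const_mul (1 + 2 * alphaF γ)).add (h2.const_mul (1 - alphaF γ))).const_mul
      (1 / 2)).const_add r).neg.mul h1).add ((h2.pow 2).const_mul (alphaF γ / 2))) ?_
    ext <;> simp [alphaF] <;> ring
  have hNZ : HasFDerivAt (fun p : ℝ × ℝ => NZ γ r p.1 p.2)
      ((-(3 - γ) / 4 * Z + (γ - 1) / 2 * W) • fst ℝ ℝ ℝ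
        + (-r - (3 - γ) / 4 * W - γ * Z) • snd ℝ ℝ ℝ) (W, Z) := by
    unfold NZ
    refine HasFDerivAt.congr_fderiv ((((((h1.const_mul (1 - alphaF γ)).add (h2.const_mul (1 + 2 * alphaF γ))).const_mul
      (1 / 2)).const_add r).neg.mul h2).add ((h1.pow 2).const_mul (alphaF γ / 2))) ?_
    ext <;> simp [alphaF] <;> ring
  have hF := (hNW.mul hDZ.hasFDerivAt).prodMk (hNZ.mul hDW.hasFDerivAt)
  have hF' : fderiv ℝ (Ffield γ r) (W, Z) = _ := HasFDerivAt.fderiv hF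
  rw [hF']
  simp [hW, hZ]
  ring

lemma jacobian_P_neg {γ r : ℝ} (hγ : 1 < γ) (hr : 0 < r)
    (hDW : 0 < DW γ (X₀ γ r) (Y₀ γ r)) (hDZ : 0 < DZ γ (X₀ γ r) (Y₀ γ r)) :
    (fderiv ℝ (Ffield γ r) (X₀ γ r, Y₀ γ r) ((1 : ℝ), (0 : ℝ))).1
        * (fderiv ℝ (Ffield γ r) (X₀ γ r, Y₀ γ r) ((0 : ℝ), (1 : ℝ))).2
      - (fderiv ℝ (Ffield γ r) (X₀ γ r, Y₀ γ r) ((0 : ℝ), (1 : ℝ))).1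
        * (fderiv ℝ (Ffield γ r) (X₀ γ r, Y₀ γ r) ((1 : ℝ), (0 : ℝ))).2 < 0 := by
  rw [jacobian_det (NW_P hγ) (NZ_P hγ)]
  refine mul_neg_of_pos_of_neg (mul_pos hDW hDZ) ?_
  obtain ⟨q, hq, hX, hY⟩ := exists_scale (r := r) hγ
  rw [hX, hY]
  have hq0 : q ≠ 0 := by rintro rfl; simp at hq; linarith
  have h1 : 0 < γ - 1 := by linarith
  have h2 : 0 < 3 * γ - 1 := by linarith
  have hpos : 0 < (γ - 1) / 2 * (3 * γ - 1) * 3 * q ^ 2 := by positivity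
  refine lt_of_eq_of_lt ?_ (neg_neg_of_pos hpos)
  rw [hq]
  linear_combination (-(γ - 1) / 2 * (3 * γ - 1) * q ^ 2) * sqrt_three_sq

/-! ### Position of the equilibria relative to `Ω` -/

lemma DW_P {γ r : ℝ} (hγ : 1 < γ) :
    DW γ (X₀ γ r) (Y₀ γ r) = 1 - r * (2 - √3 * (γ - 1)) / (3 * γ - 1) := by
  have : 3 * γ - 1 ≠ 0 := by linarith
  unfold DW X₀ Y₀ alphaF
  field_simp
  ring

lemma DZ_P {γ r : ℝ} (hγ : 1 < γ) :
    DZ γ (X₀ γ r) (Y₀ γ r) = 1 - r * (2 + √3 * (γ - 1)) / (3 * γ - 1) := by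
  have : 3 * γ - 1 ≠ 0 := by linarith
  unfold DZ X₀ Y₀ alphaF
  field_simp
  ring

lemma zero_notMem (γ : ℝ) : ((0 : ℝ), (0 : ℝ)) ∉ OmegaSet γ := by
  rintro ⟨-, -, h⟩
  norm_num [DZ] at h

lemma neg_notMem (γ : ℝ) {r : ℝ} (hr : 1 < r) : ((-r, -r) : ℝ × ℝ) ∉ OmegaSet γ := by
  rintro ⟨-, h, -⟩
  simp only [DW] at h
  linarith

/-! ### The eigenvalue ratio -/

/-- With `γ = 1 + d`, `r = 1 + d p` and `s = 2 - (2 + d) p ≥ 0`, the radicand of `ℛ₁` is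
`d² (s² - 8 d p²)`, whence `ℛ₁ ≤ d s`. -/
lemma R1_le {d p : ℝ} (hd : 0 < d) (hs : (2 + d) * p ≤ 2) :
    R1 (1 + d) (1 + d * p) ≤ d * (2 - (2 + d) * p) := by
  unfold R1
  apply Real.sqrt_le_iff.2
  refine ⟨mul_nonneg hd.le (by linarith), ?_⟩
  have : 0 ≤ 8 * d ^ 3 * p ^ 2 := by positivity
  linarith

/-- The quadratic inequality left after replacing `ℛ₁` by its upper bound: it is concave in `p`
and holds at both ends of `[2/5, 1]`. -/
lemma key_quadratic {d p : ℝ} (hd : 0 < d) (hd' : d < 2 / 3) (hp : 2 / 5 ≤ p) (hp' : p ≤ 1) :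
    9 * (4 - (2 + d) * p) ^ 2
      ≤ 25 * (p * (8 * (2 + d) - (2 - 3 * d) * (6 + 7 * d) * p)) := by
  have hc : 0 ≤ 25 * ((2 - 3 * d) * (6 + 7 * d)) + 9 * (2 + d) ^ 2 := by
    have : 0 ≤ (2 - 3 * d) * (6 + 7 * d) := mul_nonneg (by linarith) (by linarith)
    positivity
  have h1 := mul_nonneg hc (mul_nonneg (sub_nonneg.2 hp) (sub_nonneg.2 hp'))
  have hA : 0 ≤ 25 * (4 + 12 * d + 21 * d ^ 2) - 9 * (2 - d) ^ 2 := by nlinarith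
  have hB : 0 ≤ 10 * (56 / 5 + 48 / 5 * d + 42 / 5 * d ^ 2) - 9 * (16 / 5 - 2 / 5 * d) ^ 2 := by
    nlinarith
  have h2 := mul_nonneg hA (sub_nonneg.2 hp)
  have h3 := mul_nonneg hB (sub_nonneg.2 hp')
  nlinarith

lemma R2_ge {d p : ℝ} (hd : 0 < d) (hd' : d < 2 / 3) (hp : 2 / 5 ≤ p) (hs : (2 + d) * p ≤ 2) :
    3 / 5 * (4 - (2 + d) * p) ≤ R2 (1 + d) (1 + d * p) := by
  have hp' : p ≤ 1 := by nlinarith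
  have hR := R1_le hd hs
  have hk := key_quadratic hd hd' hp hp'
  unfold R2
  rw [show 1 + d - 1 = d by ring, one_div, inv_mul_eq_div, le_div_iff₀ hd]
  apply Real.le_sqrt_of_sq_le
  set R := R1 (1 + d) (1 + d * p)
  -- The coefficient of `ℛ₁` in the radicand of `ℛ₂` is `-d (2 - 3 d) s ≤ 0`.
  have h1 : 0 ≤ d * (2 - 3 * d) * (2 - (2 + d) * p) * (d * (2 - (2 + d) * p) - R) :=
    mul_nonneg (mul_nonneg (mul_nonneg hd.le (by linarith)) (by linarith)) (by linarith)
  have h2 := mul_le_mul_of_nonneg_left hk (sq_nonneg d)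
  linarith

/-- For `γ < 5/3`, the condition `r < r*(γ)` gives `(2 + d) p ≤ 2` in the variables
`d = γ - 1`, `p = (r - 1)/d`. -/
lemma mul_le_of_lt_rStar {γ r : ℝ} (hγ : 1 < γ) (hγ' : γ < 5 / 3) (hr : r < rStar γ) :
    (γ + 1) * (r - 1) ≤ 2 * (γ - 1) := by
  rw [rStar, if_pos hγ'] at hr
  have hd : 0 < γ - 1 := by linarith
  set y := √(2 / (γ - 1)) with hy
  have hy0 : 0 ≤ y := Real.sqrt_nonneg _
  have hy2 : y ^ 2 * (γ - 1) = 2 := by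
    rw [hy, Real.sq_sqrt (by positivity)]; field_simp
  have h1 : r - 1 ≤ 2 / (y + 1) ^ 2 := by linarith
  have h2 : (γ + 1) * (2 / (y + 1) ^ 2) ≤ 2 * (γ - 1) := by
    rw [mul_div_assoc', div_le_iff₀ (by positivity)]
    nlinarith [mul_nonneg hd.le hy0]
  exact (mul_le_mul_of_nonneg_left h1 (by linarith)).trans h2

/-- If `D_Z ≤ 0` at `P_⦿`, then `r` is so large that `k(r)` cannot lie in `(3, 4)`. -/
lemma DZ_P_pos {γ r : ℝ} (hγ : 1 < γ) (hr : r < rStar γ)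
    (hk3 : 3 < kFun γ r) (hk4 : kFun γ r < 4) : 0 < DZ γ (X₀ γ r) (Y₀ γ r) := by
  have h3 := sqrt_three_sq
  have hs0 : 0 ≤ √3 := Real.sqrt_nonneg 3
  have hm : 0 < 3 * γ - 1 := by linarith
  rw [DZ_P hγ, sub_pos, div_lt_one hm]
  have hden : 0 < 2 + √3 * (γ - 1) := by
    have := mul_nonneg hs0 (sub_nonneg.2 hγ.le)
    linarith
  rcases lt_or_ge γ (5 / 3) with hγ' | hγ'
  · by_contra! hcon
    have hsle := mul_le_of_lt_rStar hγ hγ' hr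
    obtain ⟨d, rfl⟩ : ∃ d, γ = 1 + d := ⟨γ - 1, by ring⟩
    have hd : 0 < d := by linarith
    have hd' : d < 2 / 3 := by linarith
    obtain ⟨p, rfl⟩ : ∃ p, r = 1 + d * p := ⟨(r - 1) / d, by field_simp; ring⟩
    have hp : 2 / 5 ≤ p := by
      have h4 : 3 - √3 ≤ p * (2 + √3 * d) := by
        by_contra! h5
        nlinarith [mul_lt_mul_of_pos_left h5 hd]
      have hsu : √3 ≤ 33 / 19 := by
        rw [Real.sqrt_le_iff]; norm_num
      have h6 : √3 * d ≤ √3 * (2 / 3) := mul_le_mul_of_nonneg_left hd'.le hs0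
      have h7 : 0 < 2 + √3 * d := by positivity
      by_contra! h8
      nlinarith [mul_lt_mul_of_pos_right h8 h7]
    have hs : (2 + d) * p ≤ 2 := by
      by_contra! h5
      nlinarith [mul_lt_mul_of_pos_left h5 hd]
    have hR := R2_ge hd hd' hp hs
    have hA : -4 + (1 + (1 + d)) * (1 + d * p - 1) / (1 + d - 1) = -4 + (2 + d) * p := by
      rw [show 1 + d - 1 = d by ring]; field_simp; ring
    rw [kFun, hA] at hk3 hk4
    set R := R2 (1 + d) (1 + d * p)
    rcases lt_or_ge (-4 + (2 + d) * p + R) 0 with hneg | hnn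
    · rw [div_lt_iff_of_neg hneg] at hk4
      linarith
    · have := div_nonpos_of_nonpos_of_nonneg (a := -4 + (2 + d) * p - R) (by linarith) hnn
      linarith
  · rw [rStar, if_neg (by linarith)] at hr
    exact (lt_div_iff₀ hden).1 hr

lemma DW_P_pos_of_DZ_P_pos {γ r : ℝ} (hγ : 1 < γ) (hr : 0 < r)
    (h : 0 < DZ γ (X₀ γ r) (Y₀ γ r)) : 0 < DW γ (X₀ γ r) (Y₀ γ r) := by
  have hm : 0 < 3 * γ - 1 := by linarith
  rw [DZ_P hγ, sub_pos, div_lt_one hm] at h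
  rw [DW_P hγ, sub_pos, div_lt_one hm]
  have : 0 ≤ r * (√3 * (γ - 1)) :=
    mul_nonneg hr.le (mul_nonneg (Real.sqrt_nonneg 3) (by linarith))
  linarith

/-! ### The case `γ = 7/5` -/

lemma rStar_seven_fifths : rStar (7 / 5) = (7 - √5) / 4 := by
  have h5 : √5 ^ 2 = (5 : ℝ) := Real.sq_sqrt (by norm_num)
  have h0 : 0 ≤ √5 := Real.sqrt_nonneg 5
  rw [rStar, if_pos (by norm_num), show (2 : ℝ) / (7 / 5 - 1) = 5 by norm_num]
  have : (√5 + 1) ^ 2 ≠ 0 := by positivity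
  field_simp
  nlinarith

lemma P_mem_seven_fifths {r : ℝ} (h1 : 1189 / 1000 < r) (h2 : r < 12 / 10) :
    (X₀ (7 / 5) r, Y₀ (7 / 5) r) ∈ OmegaSet (7 / 5) ∧ Z₀ (7 / 5) r < Y₀ (7 / 5) r := by
  have hs1 : 1732 / 1000 ≤ √3 := Real.le_sqrt_of_sq_le (by norm_num)
  have hs2 : √3 ≤ 1733 / 1000 := by rw [Real.sqrt_le_iff]; norm_num
  have hlo : 1732 / 1000 * r ≤ √3 * r := mul_le_mul_of_nonneg_right hs1 (by linarith)
  have hup : √3 * r ≤ 1733 / 1000 * r := mul_le_mul_of_nonneg_right hs2 (by linarith)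
  have hden : (3 * (7 / 5) - 1 : ℝ) = 16 / 5 := by norm_num
  refine ⟨⟨?_, ?_, ?_⟩, ?_⟩
  · simp only [X₀, Y₀, hden]
    linarith
  · simp only [DW_P (show (1 : ℝ) < 7 / 5 by norm_num), hden]
    linarith
  · simp only [DZ_P (show (1 : ℝ) < 7 / 5 by norm_num), hden]
    linarith
  · -- Since `γ < 3`, dropping the `ℛ₁` term gives `Z₀ ≤ 4 r - 7`.
    have hR : 0 ≤ R1 (7 / 5) r := Real.sqrt_nonneg _
    have hZ : Z₀ (7 / 5) r ≤ 4 * r - 7 := by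
      unfold Z₀
      rw [div_le_iff₀ (by norm_num)]
      linarith
    have hY : Y₀ (7 / 5) r = -(5 / 8) * (1 + √3) * r := by unfold Y₀; ring
    rw [hY]
    linarith

/-- Lemma A.9: classification of the equilibrium points of the field
`(N_W·D_Z, N_Z·D_W)` in the half-plane `W ≥ Z`, their position relative to `Ω`, and the saddle
structure at `P_⦿` (negative Jacobian determinant). -/
theorem statement15 :
    (∀ γ r : ℝ, 1 < γ → 1 < r → r < rStar γ →
      ({p : ℝ × ℝ | p.2 ≤ p.1 ∧ NW γ r p.1 p.2 = 0 ∧ NZ γ r p.1 p.2 = 0} =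
          {((0 : ℝ), (0 : ℝ)), (-r, -r), (X₀ γ r, Y₀ γ r)}) ∧
      (3 < kFun γ r → kFun γ r < 4 →
        ((0 : ℝ), (0 : ℝ)) ∉ OmegaSet γ ∧ ((-r, -r) : ℝ × ℝ) ∉ OmegaSet γ ∧
        (X₀ γ r, Y₀ γ r) ∉ OmegaSet γ ∧
        (fderiv ℝ (Ffield γ r) (X₀ γ r, Y₀ γ r) ((1 : ℝ), (0 : ℝ))).1
              * (fderiv ℝ (Ffield γ r) (X₀ γ r, Y₀ γ r) ((0 : ℝ), (1 : ℝ))).2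
            - (fderiv ℝ (Ffield γ r) (X₀ γ r, Y₀ γ r) ((0 : ℝ), (1 : ℝ))).1
              * (fderiv ℝ (Ffield γ r) (X₀ γ r, Y₀ γ r) ((1 : ℝ), (0 : ℝ))).2 < 0)) ∧
    (∃ ε : ℝ, 0 < ε ∧ ∀ r : ℝ, rStar (7 / 5) - ε < r → r < rStar (7 / 5) →
      ((0 : ℝ), (0 : ℝ)) ∉ OmegaSet (7 / 5) ∧ ((-r, -r) : ℝ × ℝ) ∉ OmegaSet (7 / 5) ∧
      (X₀ (7 / 5) r, Y₀ (7 / 5) r) ∈ OmegaSet (7 / 5) ∧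
      Z₀ (7 / 5) r < Y₀ (7 / 5) r) := by
  refine ⟨fun γ r hγ hr hrs => ⟨equilibria hγ (by linarith), fun hk3 hk4 => ?_⟩, ?_⟩
  · have hDZ := DZ_P_pos hγ hrs hk3 hk4
    exact ⟨zero_notMem γ, neg_notMem γ hr, fun h => (lt_asymm hDZ h.2.2),
      jacobian_P_neg hγ (by linarith) (DW_P_pos_of_DZ_P_pos hγ (by linarith) hDZ) hDZ⟩
  · refine ⟨1 / 1000, by norm_num, fun r h1 h2 => ?_⟩
    rw [rStar_seven_fifths] at h1 h2
    have h5 : √5 ≤ 2237 / 1000 := by rw [Real.sqrt_le_iff]; norm_num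
    have h5' : 22 / 10 ≤ √5 := Real.le_sqrt_of_sq_le (by norm_num)
    have hr : 1189 / 1000 < r := by linarith
    exact ⟨zero_notMem _, neg_notMem _ (by linarith), P_mem_seven_fifths hr (by linarith)⟩

end SelfSimilarImplosion
end
end

section
/- Let γ > 1 and 1 < r < r*(γ). Then for every t > 0, N_W(W₀+t, Z₀−t)·D_Z(W₀+t, Z₀−t) + N_Z(W₀+t, Z₀−t)·D_W(W₀+t, Z₀−t) < 0; that is, along the diagonal half-line { (W₀+t, Z₀−t) : t > 0 } emanating from the sonic point P_s with slope −1, the vector field (N_W·D_Z, N_Z·D_W) has strictly positive inner product with the direction (−1, −1). -/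
/-!
Write `α = (γ − 1)/2`, `u = (W + Z)/2` and `s = (W − Z)/2`. Then
`N_W D_Z + N_Z D_W = −2(1 + u)u(r + u) + 2α s² (r − 1 + 3αu)`, see `pairing_eq`. Along the
half-line `u` stays equal to its value at `P_s`, while `s = s₀ + t`. The expression vanishes at
`P_s`, because `D_Z = N_Z = 0` there, so it equals `2α((s₀ + t)² − s₀²)(r − 1 + 3αu)`. It remains to
see that `s₀ > 0` and `r − 1 + 3αu < 0`.

At `P_s`, `αs₀ = 1 + u`, and `u` is the larger root of
`2αu² + ((1 − α)(r − 1) + 2α)u + (r − 1)`, whose discriminant `ℛ₁²/4` is the product of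
`2α − (r − 1)(1 ± √α)²`. The hypothesis `r < r*(γ)` enters only through
`(r − 1)(1 + √α)² < 2α` (`sub_one_mul_lt_of_lt_rStar`), which makes the root real and places it
strictly between `−1` and `−(r − 1)/(3α)`.
-/

noncomputable section

open Real Filter Set Topology

namespace SelfSimilarImplosion

/-- Both branches of `r*` imply `(1 + √α)² (r − 1) < 2α`. For `γ < 5/3` this is the definition of
`r*`; for `γ ≥ 5/3` the second formula is at most the first, because the gap between them
is a positive multiple of the square `(√3 √α − 1)²`. -/
lemma sub_one_mul_lt_of_lt_rStar {γ r a : ℝ} (ha : 0 < a) (hγ : γ = 1 + 2 * a ^ 2)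
    (hr : r < rStar γ) : (r - 1) * (1 + a) ^ 2 < 2 * a ^ 2 := by
  unfold rStar at hr
  split_ifs at hr with h
  · have hs : √(2 / (γ - 1)) = 1 / a := by
      rw [show 2 / (γ - 1) = (1 / a) ^ 2 by rw [hγ]; field_simp; ring]
      exact Real.sqrt_sq (by positivity)
    rw [hs, show 1 + 2 / (1 / a + 1) ^ 2 = 1 + 2 * a ^ 2 / (1 + a) ^ 2 by field_simp] at hr
    exact (lt_div_iff₀ (by positivity)).1 (by linarith)
  · set q := √3 with hq
    have hq2 : q ^ 2 = 3 := Real.sq_sqrt (by norm_num)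
    have hq1 : 1 < q := Real.lt_sqrt_of_sq_lt (by norm_num)
    have hr' : (r - 1) * (1 + q * a ^ 2) < (3 - q) * a ^ 2 := by
      rw [hγ, lt_div_iff₀ (by ring_nf; positivity)] at hr
      linarith
    have key : (3 - q) * (1 + a) ^ 2 ≤ 2 * (1 + q * a ^ 2) := by
      have h0 : 0 ≤ (q - 1) * (q * a - 1) ^ 2 :=
        mul_nonneg (by linarith) (sq_nonneg _)
      have h1 : (q - 1) * (q * a - 1) ^ 2
          = 2 * (1 + q * a ^ 2) - (3 - q) * (1 + a) ^ 2 := by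
        linear_combination (q * a ^ 2 - a ^ 2 - 2 * a) * hq2
      linarith
    have hp : 0 < 1 + q * a ^ 2 := by positivity
    refine lt_of_mul_lt_mul_right ?_ hp.le
    calc (r - 1) * (1 + a) ^ 2 * (1 + q * a ^ 2)
        = (r - 1) * (1 + q * a ^ 2) * (1 + a) ^ 2 := by ring
      _ < (3 - q) * a ^ 2 * (1 + a) ^ 2 := by gcongr
      _ = a ^ 2 * ((3 - q) * (1 + a) ^ 2) := by ring
      _ ≤ a ^ 2 * (2 * (1 + q * a ^ 2)) := by gcongr
      _ = 2 * a ^ 2 * (1 + q * a ^ 2) := by ring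

/-- The field paired with `(1, 1)`, in the coordinates `u = (W + Z)/2`, `s = (W − Z)/2`. On a line
of slope `−1` the value of `u` is constant, so this is affine in `s²`. -/
lemma pairing_eq (γ r u s : ℝ) :
    NW γ r (u + s) (u - s) * DZ γ (u + s) (u - s) + NZ γ r (u + s) (u - s) * DW γ (u + s) (u - s)
      = -2 * (1 + u) * u * (r + u)
        + 2 * alphaF γ * s ^ 2 * (r - 1 + 3 * alphaF γ * u) := by
  unfold NW NZ DW DZ
  ring

/-- Lemma on the diagonal half-line from `P_s`: for `γ > 1` and
`1 < r < r*(γ)`, along the half-line `{(W₀+t, Z₀−t) : t > 0}` of slope `−1` emanating from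
the sonic point, the field `(N_W·D_Z, N_Z·D_W)` has positive inner product with `(−1,−1)`. -/
theorem statement16 (γ r : ℝ) (hγ : 1 < γ) (hr1 : 1 < r) (hr2 : r < rStar γ) :
    ∀ t : ℝ, 0 < t →
      NW γ r (W₀ γ r + t) (Z₀ γ r - t) * DZ γ (W₀ γ r + t) (Z₀ γ r - t)
          + NZ γ r (W₀ γ r + t) (Z₀ γ r - t) * DW γ (W₀ γ r + t) (Z₀ γ r - t) < 0 := by
  intro t ht
  obtain ⟨a, ha, hγa⟩ : ∃ a : ℝ, 0 < a ∧ γ = 1 + 2 * a ^ 2 :=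
    ⟨√((γ - 1) / 2), Real.sqrt_pos.2 (by linarith), by
      rw [Real.sq_sqrt (by linarith)]; ring⟩
  have hx := sub_one_mul_lt_of_lt_rStar ha hγa hr2
  have hα : alphaF γ = a ^ 2 := by rw [hγa]; unfold alphaF; ring
  obtain ⟨x, rfl⟩ : ∃ x, r = 1 + x := ⟨r - 1, by ring⟩
  have hx0 : 0 < x := by linarith
  have hxa : x * (1 + a) ^ 2 < 2 * a ^ 2 := by linarith
  have hx2 : x < 2 * a ^ 2 := by nlinarith [mul_pos hx0 ha, mul_pos hx0 (pow_pos ha 2)]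
  -- The radicand factors, and both factors are nonnegative, so `ℛ₁` is a genuine square root.
  have hR : ∃ R, R1 γ (1 + x) = 2 * R ∧ 0 ≤ R ∧
      R ^ 2 = (2 * a ^ 2 - x * (1 + a) ^ 2) * (2 * a ^ 2 - x * (1 - a) ^ 2) := by
    have h2 : 0 ≤ 2 * a ^ 2 - x * (1 - a) ^ 2 := by nlinarith [mul_pos hx0 ha]
    refine ⟨R1 γ (1 + x) / 2, by ring, by unfold R1; positivity, ?_⟩
    have h1 : γ ^ 2 * (1 + x - 3) ^ 2 - 2 * γ * (3 * (1 + x) ^ 2 - 6 * (1 + x) + 7)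
        + 9 * (1 + x) ^ 2 - 14 * (1 + x) + 9
        = 4 * ((2 * a ^ 2 - x * (1 + a) ^ 2) * (2 * a ^ 2 - x * (1 - a) ^ 2)) := by
      rw [hγa]; ring
    rw [div_pow, R1, h1, Real.sq_sqrt (by
      have := mul_nonneg (sub_nonneg.2 hxa.le) h2; linarith)]
    ring
  obtain ⟨R, hR1, hR0, hR2⟩ := hR
  obtain ⟨u, hu⟩ : ∃ u, 4 * a ^ 2 * u = R - (1 - a ^ 2) * x - 2 * a ^ 2 :=
    ⟨(R - (1 - a ^ 2) * x - 2 * a ^ 2) / (4 * a ^ 2), by field_simp⟩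
  obtain ⟨s, hs⟩ : ∃ s, a ^ 2 * s = 1 + u := ⟨(1 + u) / a ^ 2, by field_simp⟩
  have hu' : u = (R - (1 - a ^ 2) * x - 2 * a ^ 2) / (4 * a ^ 2) := by
    field_simp; linarith
  have hs' : s = (1 + u) / a ^ 2 := by field_simp; linarith
  have hW : W₀ γ (1 + x) = u + s := by
    rw [W₀, hR1, hs', hu', hγa]; field_simp; ring
  have hZ : Z₀ γ (1 + x) = u - s := by
    rw [Z₀, hR1, hs', hu', hγa]; field_simp; ring
  have ha2 : 0 < a ^ 2 := by positivity
  have hs0 : 0 < s := by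
    have : 0 < 4 * a ^ 2 * (a ^ 2 * s) := by
      rw [hs]; nlinarith [mul_pos hx0 ha2]
    exact pos_of_mul_pos_right (by linarith : 0 < (4 * a ^ 2 * a ^ 2) * s) (by positivity)
  -- The slope in `s²` is negative: after isolating `R`, compare squares.
  have hneg : x + 3 * a ^ 2 * u < 0 := by
    have hpos : 0 < 6 * a ^ 2 - x - 3 * a ^ 2 * x := by
      nlinarith [mul_pos hx0 ha]
    have hlt : 3 * R < 6 * a ^ 2 - x - 3 * a ^ 2 * x := by
      refine lt_of_pow_lt_pow_left₀ 2 hpos.le ?_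
      have hpos' : 0 < 3 * a ^ 2 * (1 + x) - x := by
        nlinarith [mul_pos hx0 ha2]
      have := mul_pos hx0 hpos'
      nlinarith
    linarith
  -- `P_s` lies on `D_Z = N_Z = 0`, so the pairing vanishes at `t = 0`.
  have hzero : -2 * (1 + u) * u * (1 + x + u) + 2 * a ^ 2 * s ^ 2 * (x + 3 * a ^ 2 * u) = 0 := by
    have hq : 2 * a ^ 2 * u ^ 2 + ((1 - a ^ 2) * x + 2 * a ^ 2) * u + x = 0 := by
      have : 8 * a ^ 2 * (2 * a ^ 2 * u ^ 2 + ((1 - a ^ 2) * x + 2 * a ^ 2) * u + x) = 0 := by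
        linear_combination (4 * a ^ 2 * u + (1 - a ^ 2) * x + 2 * a ^ 2 + R) * hu + hR2
      exact (mul_eq_zero.1 this).resolve_left (by positivity)
    have hq' : a ^ 2 * u * (1 + x + u) = (1 + u) * (x + 3 * a ^ 2 * u) := by
      linear_combination -hq
    have : a ^ 2 * (-2 * (1 + u) * u * (1 + x + u)
        + 2 * a ^ 2 * s ^ 2 * (x + 3 * a ^ 2 * u)) = 0 := by
      linear_combination -2 * (1 + u) * hq'
        + 2 * (x + 3 * a ^ 2 * u) * (a ^ 2 * s + 1 + u) * hs
    exact (mul_eq_zero.1 this).resolve_left (by positivity)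
  rw [hW, hZ, show u + s + t = u + (s + t) by ring, show u - s - t = u - (s + t) by ring,
    pairing_eq, hα]
  have hfin : 0 < 2 * a ^ 2 * (t * (2 * s + t)) * (-(x + 3 * a ^ 2 * u)) :=
    mul_pos (by positivity) (by linarith)
  linarith

end SelfSimilarImplosion
end
end

section
/- Let γ > 1 and 1 ≤ r ≤ r*(γ), and assume N_W(W₀, Z₀) < 0. For M > 0 let 𝒯^(M) = { (W₀ + t, Z₀ + t·s) : 0 ≤ t ≤ M, −1 ≤ s ≤ −(1−α)/(1+α) } (the closed triangle with vertices P_s, P_s + (M, −M), and the point with first coordinate W₀ + M lying on the line D_Z = 0 through P_s). Then N_W(W, Z) < 0 for every (W, Z) ∈ 𝒯^(M) ∖ {P_s} and every M > 0. -/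
/-!
Restricted to a ray from `P_s` in direction `(1, s)`, `N_W` is the quadratic
`N_W(P_s) + t L(s) + t² Q(s)` in `t`. The constant term is negative by hypothesis, so it suffices
that `L(s) ≤ 0` and `Q(s) ≤ 0` for all admissible slopes.

* `Q(s) ≤ 0` holds for every `|s| ≤ 1` by convexity of `Q`, as it is negative at `s = ±1`.
* `L` is affine in `s`, so only the two extreme slopes matter. Eliminating `Z₀` through
  `D_Z(P_s) = 0` gives `L(-1) = 1 - r - 3αW₀`, and at the slope of the line `D_Z = 0`,
  `(1+α)² L = -(r-1)(1+α)² - 4α² - 4α(1+2α)W₀`.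

Both are nonpositive as soon as `W₀ ≥ 0` (`W₀_nonneg`). The numerator of `W₀` is
`(γ+1)ℛ₁ - (γ-3)(3γ-1-r(γ+1))`. For `γ ≤ 3` the subtracted term is nonpositive since
`r*(γ) ≤ (3γ-1)/(γ+1)`; for `γ > 3` one squares, and the difference of the squares is
`32(γ-1)²(2γ - (γ+1)r)`, which is nonnegative since `r*(γ) ≤ 2γ/(γ+1)`.
-/

noncomputable section

open Real Filter Set Topology

namespace SelfSimilarImplosion

/-- The sonic point lies on the line `D_Z = 0`. -/
lemma DZ_sonic {γ r : ℝ} (hγ : 1 < γ) : DZ γ (W₀ γ r) (Z₀ γ r) = 0 := by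
  have h : γ - 1 ≠ 0 := by linarith
  unfold DZ W₀ Z₀ alphaF
  field_simp
  ring

lemma mul_le_of_le_rStar {γ r : ℝ} (hγ : 1 < γ) (hr2 : r ≤ rStar γ) :
    r * (γ + 1) ≤ 3 * γ - 1 := by
  have hg : 0 < γ - 1 := by linarith
  unfold rStar at hr2
  split_ifs at hr2 with h
  · have h0 := Real.sqrt_nonneg (2 / (γ - 1))
    have h1 : Real.sqrt (2 / (γ - 1)) ^ 2 = 2 / (γ - 1) := Real.sq_sqrt (by positivity)
    -- dropping the cross term in the square only increases the bound on `r`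
    have h2 : 2 / (Real.sqrt (2 / (γ - 1)) + 1) ^ 2 ≤ 2 / (2 / (γ - 1) + 1) := by
      apply div_le_div_of_nonneg_left (by norm_num) (by positivity)
      nlinarith
    have h3 : 2 / (2 / (γ - 1) + 1) = 2 * (γ - 1) / (γ + 1) := by
      have : γ + 1 ≠ 0 := by linarith
      have h5 : 2 + (γ - 1) ≠ 0 := by linarith
      have h6 : 2 / (γ - 1) + 1 = (γ + 1) / (γ - 1) := by
        field_simp
        ring
      rw [h6]
      field_simp
    have h4 : r - 1 ≤ 2 * (γ - 1) / (γ + 1) := by linarith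
    rw [le_div_iff₀ (by linarith)] at h4
    linarith
  · have h1 : 1 ≤ Real.sqrt 3 := Real.one_le_sqrt.mpr (by norm_num)
    rw [le_div_iff₀ (by positivity)] at hr2
    by_cases hr : 0 ≤ r
    · nlinarith [mul_nonneg hr (mul_nonneg (sub_nonneg.mpr h1) hg.le)]
    · nlinarith

lemma mul_le_two_mul_of_le_rStar {γ r : ℝ} (hγ : 3 < γ) (hr1 : 1 ≤ r) (hr2 : r ≤ rStar γ) :
    r * (γ + 1) ≤ 2 * γ := by
  unfold rStar at hr2
  rw [if_neg (by linarith)] at hr2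
  -- `√3 ≥ 1.7` suffices: `2γ(2 + 1.7(γ-1)) - (3γ-1)(γ+1) = (γ-1)(0.4γ-1)`
  have h1 : 17 / 10 ≤ Real.sqrt 3 := Real.le_sqrt_of_sq_le (by norm_num)
  have hp : 0 < 2 + Real.sqrt 3 * (γ - 1) := by nlinarith
  have hp' : 0 < 2 + 17 / 10 * (γ - 1) := by linarith
  rw [le_div_iff₀ hp] at hr2
  have h2 : r * (2 + 17 / 10 * (γ - 1)) ≤ 3 * γ - 1 := by
    nlinarith [mul_nonneg (mul_nonneg (by linarith : (0 : ℝ) ≤ r) (sub_nonneg.mpr h1))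
      (by linarith : 0 ≤ γ - 1)]
  have h3 : (3 * γ - 1) * (γ + 1) ≤ 2 * γ * (2 + 17 / 10 * (γ - 1)) := by nlinarith
  have h4 := mul_le_mul_of_nonneg_right h2 (by linarith : 0 ≤ γ + 1)
  refine le_of_mul_le_mul_right ?_ hp'
  linarith

lemma W₀_nonneg {γ r : ℝ} (hγ : 1 < γ) (hr1 : 1 ≤ r) (hr2 : r ≤ rStar γ) : 0 ≤ W₀ γ r := by
  have hR : 0 ≤ R1 γ r := Real.sqrt_nonneg _
  have hb := mul_le_of_le_rStar hγ hr2
  have key : (γ - 3) * (3 * γ - 1 - r * (γ + 1)) ≤ (γ + 1) * R1 γ r := by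
    rcases le_or_gt γ 3 with h | h
    · have h1 : (γ - 3) * (3 * γ - 1 - r * (γ + 1)) ≤ 0 :=
        mul_nonpos_of_nonpos_of_nonneg (by linarith) (by linarith)
      have h2 : 0 ≤ (γ + 1) * R1 γ r := mul_nonneg (by linarith) hR
      linarith
    · have hc := mul_le_two_mul_of_le_rStar h hr1 hr2
      have hg : 0 < γ + 1 := by linarith
      rw [← div_le_iff₀' hg]
      apply Real.le_sqrt_of_sq_le
      rw [div_pow, div_le_iff₀ (by positivity)]
      have := mul_nonneg (sq_nonneg (γ - 1)) (sub_nonneg.mpr hc)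
      linear_combination 32 * this
  unfold W₀
  apply div_nonneg _ (by positivity)
  linarith

/-- Lemma on the triangle `𝒯^(M)`: if `γ > 1`, `1 ≤ r ≤ r*(γ)` and
`N_W(P_s) < 0`, then `N_W < 0` on `𝒯^(M) ∖ {P_s}` for every `M > 0`, where `𝒯^(M)` is the
triangle `{(W₀ + t, Z₀ + t·s) : 0 ≤ t ≤ M, −1 ≤ s ≤ −(1−α)/(1+α)}`. -/
theorem statement17 (γ r : ℝ) (hγ : 1 < γ) (hr1 : 1 ≤ r) (hr2 : r ≤ rStar γ)
    (hNW : NW γ r (W₀ γ r) (Z₀ γ r) < 0) :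
    ∀ M : ℝ, 0 < M → ∀ t s : ℝ, 0 ≤ t → t ≤ M →
      -1 ≤ s → s ≤ -((1 - alphaF γ) / (1 + alphaF γ)) →
      (W₀ γ r + t, Z₀ γ r + t * s) ≠ (W₀ γ r, Z₀ γ r) →
      NW γ r (W₀ γ r + t) (Z₀ γ r + t * s) < 0 := by
  intro M _ t s ht _ hs1 hs2 _
  have hW := W₀_nonneg hγ hr1 hr2
  have hD := DZ_sonic (r := r) hγ
  have ha : 0 < alphaF γ := by unfold alphaF; linarith
  unfold NW at hNW ⊢
  unfold DZ at hD
  generalize alphaF γ = a at *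
  generalize W₀ γ r = W at *
  generalize Z₀ γ r = Z at *
  have hp : 0 < 1 + a := by linarith
  have haW : 0 ≤ a * W := mul_nonneg ha.le hW
  obtain ⟨σ, hσ⟩ : ∃ σ, σ = -((1 - a) / (1 + a)) := ⟨_, rfl⟩
  rw [← hσ] at hs2
  have hσ' : (1 + a) * σ = -(1 - a) := by
    rw [hσ]
    field_simp
  have hs3 : s ≤ 1 := by nlinarith
  -- the gradient of `N_W` at `P_s`
  obtain ⟨p, hp_def⟩ : ∃ p, p = -r - (1 + 2 * a) * W - 1 / 2 * (1 - a) * Z := ⟨_, rfl⟩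
  obtain ⟨q, hq_def⟩ : ∃ q, q = -(1 / 2) * (1 - a) * W + a * Z := ⟨_, rfl⟩
  have hL1 : p - q ≤ 0 := by
    have : p - q = 1 - r - 3 * (a * W) := by
      rw [hp_def, hq_def]
      linear_combination (-1 : ℝ) * hD
    linarith
  have hL2 : p + σ * q ≤ 0 := by
    have h : (1 + a) ^ 2 * (p + σ * q)
        = -(r - 1) * (1 + a) ^ 2 - 4 * a ^ 2 - 4 * (1 + 2 * a) * (a * W) := by
      rw [hp_def, hq_def]
      linear_combination (1 + a) * (-(1 / 2) * (1 - a) * W + a * Z) * hσ'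
        - (1 - a) * (1 + 3 * a) * hD
    have h2 : (1 + a) ^ 2 * (p + σ * q) ≤ 0 := by
      rw [h]
      nlinarith [mul_nonneg (sub_nonneg.mpr hr1) (sq_nonneg (1 + a)), mul_nonneg ha.le haW,
        sq_nonneg a]
    by_contra! h3
    have := mul_pos (pow_pos hp 2) h3
    linarith
  have hL : p + s * q ≤ 0 := by
    rcases le_total 0 q with h | h
    · nlinarith
    · nlinarith
  have hQ : -(1 / 2) * (1 + 2 * a) - 1 / 2 * (1 - a) * s + a / 2 * s ^ 2 ≤ 0 := by
    -- `s² ≤ 1` leaves an affine function of `s`, negative at `s = ±1`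
    have h1 : 0 ≤ (1 + s) * (1 - s) := mul_nonneg (by linarith) (by linarith)
    nlinarith [mul_nonneg ha.le h1, mul_nonneg ha.le (by linarith : 0 ≤ 1 - s)]
  have e1 := mul_nonpos_of_nonneg_of_nonpos ht hL
  have e2 := mul_nonpos_of_nonneg_of_nonpos (sq_nonneg t) hQ
  rw [hp_def, hq_def] at e1
  linarith

end SelfSimilarImplosion
end
end
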